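/- Suppose Λ is a finite simple graph whose complement Λᶜ is a linear forest, and Γ is any finite simple graph. If there is an injective group homomorphism from A(Λ) into A(Γ), then Λ embeds into Γ as a full (induced) subgraph. -/

import Mathlib

open SimpleGraph

/-- The set of commutator relations of a graph: one commutator for each edge. -/
def raagRels {V : Type} (G : SimpleGraph V) : Set (FreeGroup V) :=
  {r | ∃ u v : V, G.Adj u v ∧
    r = FreeGroup.of u * FreeGroup.of v * (FreeGroup.of u)⁻¹ * (FreeGroup.of v)⁻¹}

/-- The right-angled Artin group `A(G)` of a graph `G`. -/
abbrev RAAG {V : Type} (G : SimpleGraph V) : Type := PresentedGroup (raagRels G)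

/-- `G(Γ) = A(Γᶜ)`, the RAAG on the complement graph. -/
abbrev GG {V : Type} (G : SimpleGraph V) : Type := RAAG Gᶜ

/-- A linear forest: an acyclic graph all of whose vertices have degree at most 2. -/
def IsLinearForest {V : Type} (G : SimpleGraph V) : Prop :=
  G.IsAcyclic ∧ ∀ v : V, (G.neighborSet v).ncard ≤ 2

/-- The star of a vertex: the vertex together with its neighbours. -/
def starSet {V : Type} (G : SimpleGraph V) (v : V) : Set V :=
  insert v (G.neighborSet v)

/-- The double `D_v(G)` of `G` along the star of `v`: original vertices together with
copies of the vertices outside the star. -/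
def GraphDouble {V : Type} (G : SimpleGraph V) (v : V) :
    SimpleGraph (V ⊕ {w : V // w ∉ starSet G v}) :=
  SimpleGraph.fromRel (fun x y =>
    match x, y with
    | Sum.inl a, Sum.inl b => G.Adj a b
    | Sum.inr a, Sum.inr b => G.Adj a.1 b.1
    | Sum.inl a, Sum.inr b => a ∈ starSet G v ∧ G.Adj a b.1
    | Sum.inr _, Sum.inl _ => False)

/-- Subdivision of the edge `[v,w]` of `Λ`, with `none` as the new vertex. -/
def SubdivEdge {V : Type} (Λ : SimpleGraph V) (v w : V) : SimpleGraph (Option V) :=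
  SimpleGraph.fromRel (fun x y =>
    match x, y with
    | some a, some b => Λ.Adj a b ∧ ¬((a = v ∧ b = w) ∨ (a = w ∧ b = v))
    | some a, none => a = v ∨ a = w
    | none, some _ => False
    | none, none => False)

/-- The graph `Λ_u⁻(w₁,w₂)`, with `none` as the new vertex `v`. -/
def MinusGraph {V : Type} (Λ : SimpleGraph V) (u w₁ w₂ : V) : SimpleGraph (Option V) :=
  SimpleGraph.fromRel (fun x y =>
    match x, y with
    | some a, some b => Λ.Adj a b ∧
        ¬((a = u ∧ b = w₁) ∨ (a = w₁ ∧ b = u) ∨ (a = u ∧ b = w₂) ∨ (a = w₂ ∧ b = u))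
    | some a, none => a = w₁ ∨ a = u ∨ a = w₂
    | none, some _ => False
    | none, none => False)

/-- The graph `Λ_u⁺(w₁,w₂)`: `Λ_u⁻(w₁,w₂)` with the edge `[u,w₂]` added back. -/
def PlusGraph {V : Type} (Λ : SimpleGraph V) (u w₁ w₂ : V) : SimpleGraph (Option V) :=
  SimpleGraph.fromRel (fun x y =>
    (MinusGraph Λ u w₁ w₂).Adj x y ∨ (x = some u ∧ y = some w₂))

namespace RA
open Classical
set_option linter.unusedSectionVars false
set_option linter.unusedVariables false

section basics
variable {W : Type} {Γ : SimpleGraph W}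

/-- The generator attached to a vertex. -/
noncomputable def gen (Γ : SimpleGraph W) (v : W) : RAAG Γ := PresentedGroup.of v

lemma gen_comm {u v : W} (h : Γ.Adj u v) : Commute (gen Γ u) (gen Γ v) := by
  have h1 : PresentedGroup.mk (raagRels Γ) (FreeGroup.of u * FreeGroup.of v * (FreeGroup.of u)⁻¹ *
    (FreeGroup.of v)⁻¹) = 1 := PresentedGroup.one_of_mem ⟨u, v, h, rfl⟩
  simp only [map_mul, map_inv] at h1
  have h2 : gen Γ u * gen Γ v * (gen Γ u)⁻¹ * (gen Γ v)⁻¹ = 1 := h1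
  show gen Γ u * gen Γ v = gen Γ v * gen Γ u
  rw [mul_inv_eq_one, mul_inv_eq_iff_eq_mul] at h2
  exact h2

/-- Universal property. -/
noncomputable def lft {G : Type*} [Group G] (f : W → G)
    (hf : ∀ u v, Γ.Adj u v → Commute (f u) (f v)) : RAAG Γ →* G :=
  PresentedGroup.toGroup (rels := raagRels Γ) (f := f) (by
    rintro r ⟨u, v, h, rfl⟩
    have := hf u v h
    simp only [map_mul, map_inv, FreeGroup.lift_apply_of]
    rw [this.eq]; group)

@[simp] lemma lft_gen {G : Type*} [Group G] (f : W → G)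
    (hf : ∀ u v, Γ.Adj u v → Commute (f u) (f v)) (v : W) : lft f hf (gen Γ v) = f v :=
  PresentedGroup.toGroup.of _

lemma closure_gen : Subgroup.closure (Set.range (gen Γ)) = ⊤ :=
  PresentedGroup.closure_range_of _

lemma hom_ext' {G : Type*} [Monoid G] {f g : RAAG Γ →* G} (h : ∀ v, f (gen Γ v) = g (gen Γ v)) :
    f = g := by
  apply MonoidHom.eq_of_eqOn_dense closure_gen
  rintro _ ⟨v, rfl⟩; exact h v

/-- Standard parabolic subgroups. -/
noncomputable def Sub (Γ : SimpleGraph W) (S : Set W) : Subgroup (RAAG Γ) :=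
  Subgroup.closure (gen Γ '' S)

lemma gen_mem {S : Set W} {v : W} (h : v ∈ S) : gen Γ v ∈ Sub Γ S :=
  Subgroup.subset_closure ⟨v, h, rfl⟩

lemma Sub_le {S : Set W} {H : Subgroup (RAAG Γ)} : Sub Γ S ≤ H ↔ ∀ v ∈ S, gen Γ v ∈ H := by
  unfold Sub
  rw [Subgroup.closure_le]
  constructor
  · intro h v hv; exact h ⟨v, hv, rfl⟩
  · rintro h _ ⟨v, hv, rfl⟩; exact h v hv

lemma Sub_mono {S T : Set W} (h : S ⊆ T) : Sub Γ S ≤ Sub Γ T :=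
  Sub_le.2 fun v hv => gen_mem (h hv)

lemma Sub_univ : Sub Γ Set.univ = ⊤ := by
  unfold Sub; rw [Set.image_univ]; exact closure_gen

lemma Sub_empty : Sub Γ ∅ = ⊥ := by
  unfold Sub; simp

/-- Retractions onto standard parabolics. -/
noncomputable def ret (Γ : SimpleGraph W) (S : Set W) : RAAG Γ →* RAAG Γ :=
  lft (fun v => if v ∈ S then gen Γ v else 1) (by
    intro u v h
    by_cases hu : u ∈ S <;> by_cases hv : v ∈ S <;> simp [hu, hv, gen_comm h])

lemma ret_gen_mem {S : Set W} {v : W} (h : v ∈ S) : ret Γ S (gen Γ v) = gen Γ v := by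
  simp [ret, h]

lemma ret_gen_not {S : Set W} {v : W} (h : v ∉ S) : ret Γ S (gen Γ v) = 1 := by
  simp [ret, h]

lemma ret_ret (S T : Set W) (x : RAAG Γ) : ret Γ S (ret Γ T x) = ret Γ (S ∩ T) x := by
  have : (ret Γ S).comp (ret Γ T) = ret Γ (S ∩ T) := by
    apply hom_ext'
    intro v
    by_cases hu : v ∈ S <;> by_cases hv : v ∈ T <;> simp [ret, hu, hv]
  exact DFunLike.congr_fun this x

lemma ret_mem (S : Set W) (x : RAAG Γ) : ret Γ S x ∈ Sub Γ S := by
  have : (⊤ : Subgroup (RAAG Γ)) ≤ (Sub Γ S).comap (ret Γ S) := by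
    rw [← Sub_univ, Sub_le]
    intro v _
    rw [Subgroup.mem_comap]
    by_cases hv : v ∈ S
    · rw [ret_gen_mem hv]; exact gen_mem hv
    · rw [ret_gen_not hv]; exact one_mem _
  exact this (Subgroup.mem_top x)

lemma ret_eq {S : Set W} {x : RAAG Γ} (h : x ∈ Sub Γ S) : ret Γ S x = x := by
  have : Sub Γ S ≤ (ret Γ S).eqLocus (MonoidHom.id _) := by
    rw [Sub_le]
    intro v hv
    exact ret_gen_mem hv
  exact this h

lemma mem_Sub_iff {S : Set W} {x : RAAG Γ} : x ∈ Sub Γ S ↔ ret Γ S x = x :=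
  ⟨ret_eq, fun h => h ▸ ret_mem S x⟩

lemma ret_mem_inter {S T : Set W} {x : RAAG Γ} (h : x ∈ Sub Γ T) : ret Γ S x ∈ Sub Γ (S ∩ T) := by
  rw [← ret_eq h, ret_ret]; exact ret_mem _ _

lemma mem_Sub_inter {S T : Set W} {x : RAAG Γ} (h : x ∈ Sub Γ S) (h' : x ∈ Sub Γ T) :
    x ∈ Sub Γ (S ∩ T) := by
  have := ret_mem_inter (S := S) h'
  rwa [ret_eq h] at this

lemma ret_mem_of_mem {S T : Set W} {x : RAAG Γ} (h : x ∈ Sub Γ T) : ret Γ S x ∈ Sub Γ T :=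
  Sub_mono Set.inter_subset_right (ret_mem_inter h)

lemma ret_eq_one {S T : Set W} {x : RAAG Γ} (h : x ∈ Sub Γ T) (hd : S ∩ T = ∅) :
    ret Γ S x = 1 := by
  have := ret_mem_inter (S := S) h
  rwa [hd, Sub_empty, Subgroup.mem_bot] at this

lemma mem_Sub_of_forall [Finite W] {T : Set W} {x : RAAG Γ}
    (h : ∀ w, w ∉ T → x ∈ Sub Γ {w}ᶜ) : x ∈ Sub Γ T := by
  have key : ∀ F : Set W, F.Finite → (∀ w ∈ F, w ∉ T) → x ∈ Sub Γ Fᶜ := by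
    intro F hF
    induction F, hF using Set.Finite.induction_on with
    | empty => intro _; simp [Sub_univ]
    | @insert a s ha hs ih =>
      intro h2
      have h3 := ih fun w hw => h2 w (Set.mem_insert_of_mem _ hw)
      have h4 := mem_Sub_inter h3 (h a (h2 a (Set.mem_insert _ _)))
      refine Sub_mono ?_ h4
      intro y hy
      simp at hy ⊢
      tauto
  have := key Tᶜ (Set.toFinite _) (fun w hw => hw)
  rwa [compl_compl] at this

/-- Exponent sum homomorphisms. -/
noncomputable def ex (Γ : SimpleGraph W) (w : W) : RAAG Γ →* Multiplicative ℤ :=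
  lft (fun v => if v = w then Multiplicative.ofAdd 1 else 1) (fun _ _ _ => Commute.all _ _)

lemma ex_self (w : W) : ex Γ w (gen Γ w) = Multiplicative.ofAdd 1 := by simp [ex]

lemma ex_ne {v w : W} (h : v ≠ w) : ex Γ w (gen Γ v) = 1 := by simp [ex, h]

lemma ex_Sub {S : Set W} {w : W} (h : w ∉ S) {x : RAAG Γ} (hx : x ∈ Sub Γ S) : ex Γ w x = 1 := by
  have : Sub Γ S ≤ (ex Γ w).ker := by
    rw [Sub_le]
    rintro v hv
    exact ex_ne (fun e => h (e ▸ hv))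
  exact this hx

lemma gen_inj {v w : W} (h : gen Γ v = gen Γ w) : v = w := by
  by_contra hne
  have := ex_self (Γ := Γ) w
  rw [← h, ex_ne hne] at this
  exact absurd this (by decide)

lemma gen_mem_iff {S : Set W} {v : W} : gen Γ v ∈ Sub Γ S ↔ v ∈ S := by
  refine ⟨fun h => ?_, gen_mem⟩
  by_contra hv
  have := ex_Sub hv h
  rw [ex_self] at this
  exact absurd this (by decide)

lemma pow_gen_ex (v : W) (n : ℤ) : ex Γ v (gen Γ v ^ n) = Multiplicative.ofAdd n := by
  rw [map_zpow, ex_self, ← ofAdd_zsmul]; simp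

end basics

section conj
variable {G : Type*} [Group G]

/-- Conjugate subgroup `h K h⁻¹`. -/
def cj (h : G) (K : Subgroup G) : Subgroup G := K.comap (MulAut.conj h⁻¹).toMonoidHom

lemma mem_cj {h : G} {K : Subgroup G} {y : G} : y ∈ cj h K ↔ h⁻¹ * y * h ∈ K := by
  simp [cj]

lemma cj_conj_mem {h : G} {K : Subgroup G} {y : G} : h * y * h⁻¹ ∈ cj h K ↔ y ∈ K := by
  rw [mem_cj]; simp [mul_assoc]

lemma cj_cj (g h : G) (K : Subgroup G) : cj g (cj h K) = cj (g * h) K := by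
  ext y; simp [mem_cj, mul_assoc]

lemma cj_one (K : Subgroup G) : cj 1 K = K := by ext y; simp [mem_cj]

lemma cj_mono {h : G} {K L : Subgroup G} (hKL : K ≤ L) : cj h K ≤ cj h L := fun y hy => by
  rw [mem_cj] at *; exact hKL hy

lemma cj_le_iff {h : G} {K L : Subgroup G} : cj h K ≤ L ↔ K ≤ cj h⁻¹ L := by
  constructor
  · intro H y hy
    rw [mem_cj]; simp only [inv_inv]
    exact H (cj_conj_mem.2 hy)
  · intro H y hy
    rw [mem_cj] at hy
    have := H hy
    rw [mem_cj] at this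
    simpa [mul_assoc] using this

lemma cj_of_mem {h : G} {K : Subgroup G} (hh : h ∈ K) : cj h K = K := by
  ext y; rw [mem_cj]
  rw [Subgroup.mul_mem_cancel_right _ hh, Subgroup.mul_mem_cancel_left _ (inv_mem hh)]

end conj
end RA

namespace RA
open Classical
set_option linter.unusedSectionVars false
set_option linter.unusedVariables false

section hnn
open HNNExtension HNNExtension.NormalWord
variable {G : Type*} [Group G] {B : Subgroup G}

lemma toSubgroup_same (u : ℤˣ) : toSubgroup B B u = B := by
  rcases Int.units_eq_one_or u with rfl | rfl <;> simp

lemma hnn_conj {h : HNNExtension G B B (MulEquiv.refl B)} {x y : G}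
    (hh : h ∉ (of : G →* HNNExtension G B B (MulEquiv.refl B)).range)
    (e : h * of x * h⁻¹ = of y) : ∃ k : G, k * x * k⁻¹ ∈ B := by
  obtain ⟨d⟩ := TransversalPair.nonempty G B B
  let φ : B ≃* B := MulEquiv.refl B
  obtain ⟨w, hw⟩ : ∃ w : ReducedWord G B B, w.prod φ = h⁻¹ := by
    refine ⟨(h⁻¹ • (empty : NormalWord d)).toReducedWord, ?_⟩
    have := prod_smul φ h⁻¹ (empty : NormalWord d)
    rw [this]; simp
  rcases List.eq_nil_or_concat w.toList with hl | ⟨l, a, hl⟩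
  · exfalso
    apply hh
    refine ⟨w.head⁻¹, ?_⟩
    have : w.prod φ = of w.head := by simp [ReducedWord.prod, hl]
    rw [map_inv, ← this, hw, inv_inv]
  · rw [List.concat_eq_append] at hl
    have hc := w.chain
    rw [hl] at hc
    let w1 : ReducedWord G B B := ⟨x * w.head, w.toList, w.chain⟩
    let w2 : ReducedWord G B B := ⟨w.head, l ++ [(a.1, a.2 * y)], by
      rw [List.isChain_append] at hc ⊢
      refine ⟨hc.1, List.isChain_singleton _, ?_⟩
      intro z hz z' hz'
      have := hc.2.2 z hz a (by simp)
      simp at hz'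
      subst hz'
      exact this⟩
    have e1 : w1.prod φ = of x * h⁻¹ := by
      rw [← hw]; simp [ReducedWord.prod, w1, mul_assoc]
    have e2 : w2.prod φ = h⁻¹ * of y := by
      rw [← hw]; simp [ReducedWord.prod, w2, mul_assoc, hl]
    have e3 : w1.prod φ = w2.prod φ := by
      rw [e1, e2, ← e]; group
    have := (ReducedWord.map_fst_eq_and_of_prod_eq φ e3).2
    obtain ⟨u, hu⟩ : ∃ u, u ∈ w1.toList.head?.map Prod.fst := by
      have : w1.toList ≠ [] := by simp [w1, hl]
      obtain ⟨b, l', hb⟩ := List.exists_cons_of_ne_nil this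
      exact ⟨b.1, by simp [hb]⟩
    have := this u hu
    rw [toSubgroup_same] at this
    refine ⟨w.head⁻¹, ?_⟩
    have h3 : w1.head⁻¹ * w2.head = (w.head⁻¹ * x * w.head⁻¹⁻¹)⁻¹ := by
      simp [w1, w2, mul_assoc]
    rw [h3, inv_mem_iff] at this
    exact this
end hnn

section setup
variable {W : Type} {Γ : SimpleGraph W}

/-- Base group of the HNN decomposition. -/
abbrev KK (Γ : SimpleGraph W) (w : W) : Type := ↥(Sub Γ {w}ᶜ)
/-- Edge group. -/
noncomputable abbrev BB (Γ : SimpleGraph W) (w : W) : Subgroup (KK Γ w) :=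
  (Sub Γ {v | Γ.Adj w v}).subgroupOf (Sub Γ {w}ᶜ)
/-- The HNN extension. -/
abbrev HH (Γ : SimpleGraph W) (w : W) : Type :=
  HNNExtension (KK Γ w) (BB Γ w) (BB Γ w) (MulEquiv.refl _)

lemma commute_of_gens {G : Type*} [Group G] {f : RAAG Γ →* G} {z : G} {S : Set W}
    (h : ∀ v ∈ S, Commute z (f (gen Γ v))) {x : RAAG Γ} (hx : x ∈ Sub Γ S) : Commute z (f x) := by
  have : Sub Γ S ≤ (Subgroup.centralizer {z}).comap f := by
    rw [Sub_le]; intro v hv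
    rw [Subgroup.mem_comap, Subgroup.mem_centralizer_singleton_iff]
    exact (h v hv).eq.symm
  have := this hx
  rw [Subgroup.mem_comap, Subgroup.mem_centralizer_singleton_iff] at this
  exact this.symm

lemma commute_Sub {z : RAAG Γ} {S : Set W}
    (h : ∀ v ∈ S, Commute z (gen Γ v)) {x : RAAG Γ} (hx : x ∈ Sub Γ S) : Commute z x :=
  commute_of_gens (f := MonoidHom.id _) h hx

lemma commute_Sub_Sub {S T : Set W}
    (h : ∀ v ∈ S, ∀ w ∈ T, Commute (gen Γ v) (gen Γ w)) {x y : RAAG Γ} (hx : x ∈ Sub Γ S)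
    (hy : y ∈ Sub Γ T) : Commute x y :=
  commute_Sub (fun w hw => (commute_Sub (fun v hv => (h v hv w hw).symm) hx).symm) hy

/-- The map to the HNN extension. -/
noncomputable def toH (Γ : SimpleGraph W) (w : W) : RAAG Γ →* HH Γ w :=
  lft (fun v => if h : v ∈ ({w}ᶜ : Set W) then HNNExtension.of ⟨gen Γ v, gen_mem h⟩ else HNNExtension.t) (by
    have key : ∀ v, ∀ h : v ∈ ({w}ᶜ : Set W), Γ.Adj w v →
      Commute (HNNExtension.t : HH Γ w) (HNNExtension.of ⟨gen Γ v, gen_mem h⟩) := by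
      intro v h ha
      have := HNNExtension.t_mul_of (φ := MulEquiv.refl (BB Γ w))
        ⟨⟨gen Γ v, gen_mem h⟩, by rw [Subgroup.mem_subgroupOf]; exact gen_mem ha⟩
      exact this
    intro u v h
    by_cases hu : u ∈ ({w}ᶜ : Set W) <;> by_cases hv : v ∈ ({w}ᶜ : Set W)
    · simp only [dif_pos hu, dif_pos hv]
      apply Commute.map
      exact Subtype.ext (gen_comm h)
    · simp only [dif_pos hu, dif_neg hv]
      have : v = w := by simpa using hv
      subst this
      exact (key u hu h.symm).symm
    · simp only [dif_neg hu, dif_pos hv]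
      have : u = w := by simpa using hu
      subst this
      exact key v hv h
    · simp [hu, hv])

lemma toH_gen_self (w : W) : toH Γ w (gen Γ w) = HNNExtension.t := by simp [toH]

lemma toH_base (w : W) (x : KK Γ w) : toH Γ w x = HNNExtension.of x := by
  have h0 : ∀ v, ∀ h : v ∈ ({w}ᶜ : Set W), toH Γ w (gen Γ v) = HNNExtension.of ⟨gen Γ v, gen_mem h⟩ := by
    intro v h
    simp only [toH, lft_gen, dif_pos h]
  have key : ∀ y, ∀ hy : y ∈ Sub Γ {w}ᶜ, toH Γ w y = HNNExtension.of ⟨y, hy⟩ := by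
    intro y hy
    unfold Sub at hy
    induction hy using Subgroup.closure_induction with
    | mem x hx => obtain ⟨v, hv, rfl⟩ := hx; exact h0 v hv
    | one => rw [map_one]; symm; exact map_one _
    | mul x y hx hy h1 h2 => rw [map_mul, h1, h2, ← map_mul]; rfl
    | inv x hx h => rw [map_inv, h, ← map_inv]; rfl
  exact key x.1 x.2

/-- The map back. -/
noncomputable def ofH (Γ : SimpleGraph W) (w : W) : HH Γ w →* RAAG Γ :=
  HNNExtension.lift (Sub Γ {w}ᶜ).subtype (gen Γ w) (by
    rintro ⟨a, ha⟩
    rw [Subgroup.mem_subgroupOf] at ha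
    exact (commute_Sub (fun v hv => gen_comm hv) ha).eq)

lemma ofH_toH (w : W) (x : RAAG Γ) : ofH Γ w (toH Γ w x) = x := by
  have : (ofH Γ w).comp (toH Γ w) = MonoidHom.id _ := by
    apply hom_ext'
    intro v
    by_cases h : v = w
    · subst h; simp [toH_gen_self, ofH]
    · have := toH_base w ⟨gen Γ v, gen_mem (show v ∈ ({w}ᶜ : Set W) from h)⟩
      simp only [MonoidHom.comp_apply]
      simp only at this
      rw [this]
      simp [ofH]
  exact DFunLike.congr_fun this x

lemma toH_inj (w : W) : Function.Injective (toH Γ w) :=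
  Function.LeftInverse.injective (ofH_toH w)

/-- Fact E. -/
lemma factE {w : W} {x h : RAAG Γ} (hx : x ∈ Sub Γ {w}ᶜ) (hh : h ∉ Sub Γ {w}ᶜ)
    (hc : h * x * h⁻¹ ∈ Sub Γ {w}ᶜ) : ∃ k ∈ Sub Γ {w}ᶜ, k * x * k⁻¹ ∈ Sub Γ {v | Γ.Adj w v} := by
  have := hnn_conj (h := toH Γ w h) (x := ⟨x, hx⟩) (y := ⟨_, hc⟩) ?_ ?_
  · obtain ⟨k, hk⟩ := this
    rw [Subgroup.mem_subgroupOf] at hk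
    exact ⟨k.1, k.2, hk⟩
  · rintro ⟨y, hy⟩
    apply hh
    rw [← toH_base] at hy
    rw [← toH_inj w hy]; exact y.2
  · rw [← toH_base, ← toH_base]; simp

end setup
end RA

namespace RA
open Classical
set_option linter.unusedSectionVars false
set_option linter.unusedVariables false

section tight
variable {W : Type} {Γ : SimpleGraph W}

/-- An element all of whose conjugates involve all letters of `S`. -/
def Tight (Γ : SimpleGraph W) (S : Set W) (c : RAAG Γ) : Prop :=
  c ∈ Sub Γ S ∧ ∀ w ∈ S, ∀ h : RAAG Γ, h * c * h⁻¹ ∉ Sub Γ {w}ᶜ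

/-- `S^⊥`. -/
def perp (Γ : SimpleGraph W) (S : Set W) : Set W := {w | ∀ s ∈ S, Γ.Adj w s}

/-- `P` is the parabolic closure of `x`. -/
def Full (P : Subgroup (RAAG Γ)) (x : RAAG Γ) : Prop :=
  x ∈ P ∧ ∀ (k : RAAG Γ) (T : Set W), x ∈ cj k (Sub Γ T) → P ≤ cj k (Sub Γ T)

/-- Elementwise commuting. -/
def CommS {G : Type*} [Group G] (P Q : Subgroup G) : Prop := ∀ p ∈ P, ∀ q ∈ Q, Commute p q

lemma CommS.symm {G : Type*} [Group G] {P Q : Subgroup G} (h : CommS P Q) : CommS Q P :=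
  fun p hp q hq => (h q hq p hp).symm

lemma exists_tight [Finite W] (x : RAAG Γ) : ∃ (h : RAAG Γ) (S : Set W), Tight Γ S (h⁻¹ * x * h) := by
  have hex : ∃ n : ℕ, ∃ (h : RAAG Γ) (S : Set W), S.ncard = n ∧ h⁻¹ * x * h ∈ Sub Γ S :=
    ⟨_, 1, Set.univ, rfl, by simp [Sub_univ]⟩
  obtain ⟨h, S, hn, hm⟩ := Nat.find_spec hex
  refine ⟨h, S, hm, ?_⟩
  intro w hw k hk
  have h1 : (S ∩ {w}ᶜ).ncard < Nat.find hex := by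
    rw [← hn]
    apply Set.ncard_lt_ncard _ (Set.toFinite _)
    refine ⟨Set.inter_subset_left, fun hh => ?_⟩
    have := hh hw
    simp at this
  apply Nat.find_min hex h1
  refine ⟨h * (ret Γ S k)⁻¹, S ∩ {w}ᶜ, rfl, ?_⟩
  have := ret_mem_inter (S := S) hk
  rw [map_mul, map_mul, map_inv, ret_eq hm] at this
  simpa [mul_assoc] using this

lemma tight_of_ex {S : Set W} {c : RAAG Γ} (hc : c ∈ Sub Γ S) (h : ∀ w ∈ S, ex Γ w c ≠ 1) :
    Tight Γ S c := by
  refine ⟨hc, fun w hw k hk => h w hw ?_⟩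
  have := ex_Sub (w := w) (by simp) hk
  simpa [mul_comm] using this

lemma tight_central [Finite W] {S : Set W} {c h : RAAG Γ} (hc : Tight Γ S c)
    (hh : h * c * h⁻¹ ∈ Sub Γ S) : h ∈ Sub Γ (S ∪ perp Γ S) := by
  apply mem_Sub_of_forall
  intro w hw
  by_contra hn
  have hwS : w ∉ S := fun h => hw (Or.inl h)
  have hsub : S ⊆ {w}ᶜ := fun s hs e => hwS (by rw [Set.mem_singleton_iff] at e; exact e ▸ hs)
  obtain ⟨k, -, hk⟩ := factE (Sub_mono hsub hc.1) hn (Sub_mono hsub hh)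
  have : w ∉ perp Γ S := fun h => hw (Or.inr h)
  simp only [perp, Set.mem_ofPred_eq, not_forall] at this
  obtain ⟨s, hs, hadj⟩ := this
  apply hc.2 s hs k
  refine Sub_mono ?_ hk
  intro v hv e
  rw [Set.mem_singleton_iff] at e
  exact hadj (e ▸ hv)

lemma tight_commute [Finite W] {S : Set W} {c h : RAAG Γ} (hc : Tight Γ S c)
    (hh : Commute h c) : h ∈ Sub Γ (S ∪ perp Γ S) := by
  apply tight_central hc
  rw [hh.eq]; simpa using hc.1

lemma Sub_conj {S U : Set W} (h : ∀ u ∈ U, u ∈ S ∨ ∀ s ∈ S, Commute (gen Γ u) (gen Γ s))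
    {m y : RAAG Γ} (hm : m ∈ Sub Γ U) (hy : y ∈ Sub Γ S) : m * y * m⁻¹ ∈ Sub Γ S := by
  have : Sub Γ U ≤ Subgroup.normalizer (Sub Γ S : Set (RAAG Γ)) := by
    rw [Sub_le]
    intro u hu
    rcases h u hu with h1 | h1
    · exact Subgroup.le_normalizer (gen_mem h1)
    · apply Subgroup.centralizer_le_normalizer
      rw [Subgroup.mem_centralizer_iff]
      intro z hz
      exact (commute_Sub h1 hz).eq.symm
  exact (Subgroup.mem_normalizer_iff.1 (this hm) y).1 hy

lemma perp_conj {S : Set W} {m y : RAAG Γ} (hm : m ∈ Sub Γ (S ∪ perp Γ S)) (hy : y ∈ Sub Γ S) :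
    m * y * m⁻¹ ∈ Sub Γ S := by
  refine Sub_conj ?_ hm hy
  rintro u (hu | hu)
  · exact Or.inl hu
  · exact Or.inr fun s hs => gen_comm (hu s hs)

lemma tight_pc [Finite W] {S T : Set W} {x k : RAAG Γ} (hx : Tight Γ S x)
    (hk : x ∈ cj k (Sub Γ T)) : Sub Γ S ≤ cj k (Sub Γ T) := by
  rw [mem_cj] at hk
  set j := ret Γ T k with hj
  have h1 : j⁻¹ * ret Γ T x * j = k⁻¹ * x * k := by
    have := ret_eq hk
    simpa using this
  set m := j * k⁻¹ with hm
  have h2 : m * x * m⁻¹ = ret Γ T x := by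
    have : ret Γ T x = j * (k⁻¹ * x * k) * j⁻¹ := by rw [← h1]; group
    rw [this, hm]; group
  have hST : S ⊆ T := by
    intro w hw
    by_contra hwT
    apply hx.2 w hw m
    rw [h2]
    refine Sub_mono ?_ (ret_mem T x)
    intro v hv e
    rw [Set.mem_singleton_iff] at e
    exact hwT (e ▸ hv)
  rw [ret_eq (Sub_mono hST hx.1)] at h2
  have hmm : m ∈ Sub Γ (S ∪ perp Γ S) := tight_central hx (by rw [h2]; exact hx.1)
  intro v hv
  rw [mem_cj]
  have h3 := Sub_mono hST (perp_conj hmm hv)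
  have hjT : j ∈ Sub Γ T := ret_mem T k
  have h4 := mul_mem (mul_mem (inv_mem hjT) h3) hjT
  have h5 : j⁻¹ * (m * v * m⁻¹) * j = k⁻¹ * v * k := by rw [hm]; group
  rwa [h5] at h4

lemma Tight.full [Finite W] {S : Set W} {c : RAAG Γ} (hc : Tight Γ S c) : Full (Sub Γ S) c :=
  ⟨hc.1, fun k T h => tight_pc hc h⟩

lemma Full.conj {P : Subgroup (RAAG Γ)} {x : RAAG Γ} (h : Full P x) (g : RAAG Γ) :
    Full (cj g P) (g * x * g⁻¹) := by
  refine ⟨cj_conj_mem.2 h.1, fun k T hk => ?_⟩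
  have h1 : x ∈ cj (g⁻¹ * k) (Sub Γ T) := by
    rw [mem_cj] at *; simpa [mul_assoc] using hk
  rw [cj_le_iff, cj_cj]
  exact h.2 _ _ h1

lemma Full.tight {C : Set W} {c : RAAG Γ} (h : Full (Sub Γ C) c) : Tight Γ C c := by
  refine ⟨h.1, fun w hw k hk => ?_⟩
  have h1 : c ∈ cj k⁻¹ (Sub Γ {w}ᶜ) := by rw [mem_cj]; simpa using hk
  have h2 := h.2 _ _ h1 (gen_mem hw)
  rw [mem_cj] at h2
  have := ex_Sub (w := w) (by simp) h2
  simp [ex_self, mul_comm] at this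

lemma tight_gen (v : W) : Tight Γ {v} (gen Γ v) := by
  apply tight_of_ex (gen_mem (Set.mem_singleton _))
  rintro w rfl
  rw [ex_self]; decide

lemma tight_gen_pow (v : W) {n : ℤ} (hn : n ≠ 0) : Tight Γ {v} (gen Γ v ^ n) := by
  apply tight_of_ex (zpow_mem (gen_mem (Set.mem_singleton _)) n)
  rintro w rfl
  rw [pow_gen_ex]; simpa using hn

/-- Star of a vertex. -/
def St (Γ : SimpleGraph W) (v : W) : Set W := {u | u = v ∨ Γ.Adj v u}

lemma mem_St {x : RAAG Γ} [Finite W] {v : W} (h : Commute x (gen Γ v)) : x ∈ Sub Γ (St Γ v) := by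
  refine Sub_mono ?_ (tight_commute (tight_gen v) h)
  rintro u (hu | hu)
  · exact Or.inl hu
  · exact Or.inr (hu v rfl).symm

lemma mem_St_pow {x : RAAG Γ} [Finite W] {v : W} {n : ℤ} (hn : n ≠ 0)
    (h : Commute x (gen Γ v ^ n)) : x ∈ Sub Γ (St Γ v) := by
  refine Sub_mono ?_ (tight_commute (tight_gen_pow v hn) h)
  rintro u (hu | hu)
  · exact Or.inl hu
  · exact Or.inr (hu v rfl).symm

lemma gen_commute_iff [Finite W] {u v : W} : Commute (gen Γ u) (gen Γ v) ↔ u = v ∨ Γ.Adj u v := by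
  constructor
  · intro h
    have := gen_mem_iff.1 (mem_St h)
    rcases this with h | h
    · exact Or.inl h
    · exact Or.inr h.symm
  · rintro (rfl | h)
    · exact Commute.refl _
    · exact gen_comm h

lemma gen_ne_one (v : W) : gen Γ v ≠ 1 := by
  intro h
  have := ex_self (Γ := Γ) v
  rw [h, map_one] at this
  exact absurd this (by decide)

/-- Splitting lemma. -/
lemma split_vertex {D D' : Set W} (hD : ∀ d ∈ D, ∀ d' ∈ D', Γ.Adj d d') {k : RAAG Γ} {u : W}
    (h : k * gen Γ u * k⁻¹ ∈ Sub Γ (D ∪ D')) :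
    k * gen Γ u * k⁻¹ ∈ Sub Γ D ∨ k * gen Γ u * k⁻¹ ∈ Sub Γ D' := by
  have h1 := ret_eq h
  rw [map_mul, map_mul, map_inv] at h1
  have hj := ret_mem (D ∪ D') k
  by_cases hu : u ∈ D ∪ D'
  · rw [ret_gen_mem hu] at h1
    rw [← h1]
    rcases hu with hu | hu
    · left
      refine Sub_conj ?_ hj (gen_mem hu)
      rintro u (hu | hu)
      · exact Or.inl hu
      · exact Or.inr fun s hs => (gen_comm (hD _ hs _ hu)).symm
    · right
      refine Sub_conj ?_ hj (gen_mem hu)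
      rintro u (hu | hu)
      · exact Or.inr fun s hs => (gen_comm (hD _ hu _ hs))
      · exact Or.inl hu
  · rw [ret_gen_not hu] at h1
    left; rw [← h1]; simp
end tight

section nodes
variable {W : Type} {Γ : SimpleGraph W}

/-- Non-adjacency within `S`. -/
def NR (Γ : SimpleGraph W) (S : Set W) (a b : W) : Prop := a ∈ S ∧ b ∈ S ∧ ¬ Γ.Adj a b

lemma NR.symm {S : Set W} {a b : W} (h : NR Γ S a b) : NR Γ S b a :=
  ⟨h.2.1, h.1, fun h' => h.2.2 h'.symm⟩

/-- Components of `S` for non-adjacency. -/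
def comp (Γ : SimpleGraph W) (S : Set W) (v : W) : Set W := {u | Relation.ReflTransGen (NR Γ S) v u}

lemma rtg_symm {S : Set W} {a b : W} (h : Relation.ReflTransGen (NR Γ S) a b) :
    Relation.ReflTransGen (NR Γ S) b a := by
  induction h with
  | refl => exact .refl
  | tail h1 h2 ih => exact Relation.ReflTransGen.head h2.symm ih

lemma comp_sub {S : Set W} {v : W} (hv : v ∈ S) : comp Γ S v ⊆ S := by
  intro u hu
  induction hu with
  | refl => exact hv
  | tail h1 h2 ih => exact h2.2.1

lemma mem_comp_self {S : Set W} {v : W} : v ∈ comp Γ S v := Relation.ReflTransGen.refl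

lemma comp_eq {S : Set W} {u v : W} (h : u ∈ comp Γ S v) : comp Γ S u = comp Γ S v := by
  ext z
  exact ⟨fun hz => Relation.ReflTransGen.trans h hz,
    fun hz => Relation.ReflTransGen.trans (rtg_symm h) hz⟩

lemma comp_adj {S : Set W} {v a b : W} (hv : v ∈ S) (ha : a ∈ comp Γ S v) (hb : b ∈ S)
    (hb' : b ∉ comp Γ S v) : Γ.Adj a b := by
  by_contra h
  exact hb' (Relation.ReflTransGen.tail ha ⟨comp_sub hv ha, hb, h⟩)

/-- Connected for non-adjacency. -/
def Conn (Γ : SimpleGraph W) (C : Set W) : Prop :=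
  C.Nonempty ∧ ∀ u ∈ C, ∀ v ∈ C, Relation.ReflTransGen (NR Γ C) u v

lemma comp_conn {S : Set W} {v : W} (hv : v ∈ S) : Conn Γ (comp Γ S v) := by
  have key : ∀ u, u ∈ comp Γ S v → Relation.ReflTransGen (NR Γ (comp Γ S v)) v u := by
    intro u hu
    induction hu with
    | refl => exact .refl
    | tail h1 h2 ih => exact ih.tail ⟨h1, Relation.ReflTransGen.tail h1 h2, h2.2.2⟩
  exact ⟨⟨v, mem_comp_self⟩, fun u hu w hw => (rtg_symm (key u hu)).trans (key w hw)⟩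

/-- Irreducible parabolic subgroups. -/
def Irr (P : Subgroup (RAAG Γ)) : Prop := ∃ (h : RAAG Γ) (C : Set W), Conn Γ C ∧ P = cj h (Sub Γ C)

lemma conn_nbr {C : Set W} (hC : Conn Γ C) (h2 : ∃ u ∈ C, ∃ v ∈ C, u ≠ v) {w : W} (hw : w ∈ C) :
    ∃ v ∈ C, v ≠ w ∧ ¬ Γ.Adj w v := by
  obtain ⟨z, hz, hzw⟩ : ∃ z ∈ C, z ≠ w := by
    obtain ⟨u, hu, v, hv, huv⟩ := h2
    by_cases h : u = w
    · exact ⟨v, hv, fun h' => huv (h.trans h'.symm)⟩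
    · exact ⟨u, hu, h⟩
  have := hC.2 w hw z hz
  induction this with
  | refl => exact absurd rfl hzw
  | @tail b c h1 h2 ih =>
    by_cases hb : b = w
    · subst hb; exact ⟨c, hz, hzw, h2.2.2⟩
    · exact ih h2.1 hb

lemma irr_center [Finite W] {P : Subgroup (RAAG Γ)} (hP : Irr P) :
    (∀ p ∈ P, ∀ q ∈ P, Commute p q) ∨ (∀ m ∈ P, (∀ p ∈ P, Commute m p) → m = 1) := by
  obtain ⟨h, C, hC, rfl⟩ := hP
  by_cases h2 : ∃ u ∈ C, ∃ v ∈ C, u ≠ v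
  · right
    intro m hm hcm
    rw [mem_cj] at hm
    have key : h⁻¹ * m * h ∈ Sub Γ ∅ := by
      apply mem_Sub_of_forall
      intro w _
      by_cases hw : w ∈ C
      · obtain ⟨v, hv, hvw, hadj⟩ := conn_nbr hC h2 hw
        have h3 : Commute (h⁻¹ * m * h) (gen Γ v) := by
          have := hcm (h * gen Γ v * h⁻¹) (cj_conj_mem.2 (gen_mem hv))
          have h4 := this.map (MulAut.conj h⁻¹).toMonoidHom
          simpa [mul_assoc] using h4
        refine Sub_mono ?_ (mem_St h3)
        rintro u (rfl | hu) e
        · exact hvw e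
        · rw [Set.mem_singleton_iff] at e; subst e; exact hadj hu.symm
      · refine Sub_mono ?_ hm
        intro u hu e
        rw [Set.mem_singleton_iff] at e
        exact hw (e ▸ hu)
    rw [Sub_empty, Subgroup.mem_bot] at key
    have : m = h * (h⁻¹ * m * h) * h⁻¹ := by group
    rw [this, key]; simp
  · left
    push Not at h2
    intro p hp q hq
    rw [mem_cj] at hp hq
    have h3 : Commute (h⁻¹ * p * h) (h⁻¹ * q * h) := by
      refine commute_Sub_Sub ?_ hp hq
      intro u hu v hv
      rw [h2 u hu v hv]
    have h4 := h3.map (MulAut.conj h).toMonoidHom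
    simpa [mul_assoc] using h4

/-- Dichotomy for an irreducible parabolic inside `Sub (S ∪ S^⊥)`. -/
lemma irr_join [Finite W] {S C : Set W} (hC : Conn Γ C) {k : RAAG Γ}
    (hk : cj k (Sub Γ C) ≤ Sub Γ (S ∪ perp Γ S)) {v : W} (hv : v ∈ S) :
    cj k (Sub Γ C) ≤ Sub Γ (comp Γ S v) ∨ CommS (cj k (Sub Γ C)) (Sub Γ (comp Γ S v)) := by
  set D := comp Γ S v with hDdef
  set D' := (S ∪ perp Γ S) \ D with hD'
  have hDS : D ⊆ S := comp_sub hv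
  have hj : ∀ d ∈ D, ∀ d' ∈ D', Γ.Adj d d' := by
    rintro d hd d' ⟨hd' | hd', hn⟩
    · exact comp_adj hv hd hd' hn
    · exact (hd' d (hDS hd)).symm
  have hU : S ∪ perp Γ S = D ∪ D' := by
    rw [hD', Set.union_sdiff_cancel]
    exact fun x hx => Or.inl (hDS hx)
  have hg : ∀ u ∈ C, k * gen Γ u * k⁻¹ ∈ Sub Γ D ∨ k * gen Γ u * k⁻¹ ∈ Sub Γ D' := by
    intro u hu
    apply split_vertex hj
    rw [← hU]
    exact hk (cj_conj_mem.2 (gen_mem hu))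
  have hexcl : ∀ u ∈ C, ∀ w ∈ C, ¬ Γ.Adj u w → k * gen Γ u * k⁻¹ ∈ Sub Γ D →
      k * gen Γ w * k⁻¹ ∈ Sub Γ D' → False := by
    intro u hu w hw hadj h1 h2
    have hc := commute_Sub_Sub (fun a ha b hb => gen_comm (hj a ha b hb)) h1 h2
    have h3 : Commute (gen Γ u) (gen Γ w) := by
      have h4 := hc.map (MulAut.conj k⁻¹).toMonoidHom
      simpa [mul_assoc] using h4
    rcases gen_commute_iff.1 h3 with h | h
    · subst h
      have h5 := mem_Sub_inter h1 h2
      have : D ∩ D' = ∅ := by rw [hD']; simp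
      rw [this, Sub_empty, Subgroup.mem_bot] at h5
      have : gen Γ u = 1 := by
        rw [mul_inv_eq_one] at h5
        exact mul_eq_left.1 h5
      exact gen_ne_one u this
    · exact hadj h
  obtain ⟨u0, hu0⟩ := hC.1
  rcases hg u0 hu0 with h0 | h0
  · left
    rw [cj_le_iff, Sub_le]
    intro w hw
    rw [mem_cj, inv_inv]
    have := hC.2 u0 hu0 w hw
    induction this with
    | refl => exact h0
    | @tail b c h1 h2 ih =>
      rcases hg c h2.2.1 with h | h
      · exact h
      · exact (hexcl b h2.1 c h2.2.1 h2.2.2 (ih h2.1) h).elim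
  · right
    have hle : cj k (Sub Γ C) ≤ Sub Γ D' := by
      rw [cj_le_iff, Sub_le]
      intro w hw
      rw [mem_cj, inv_inv]
      have := hC.2 u0 hu0 w hw
      induction this with
      | refl => exact h0
      | @tail b c h1 h2 ih =>
        rcases hg c h2.2.1 with h | h
        · exact (hexcl c h2.2.1 b h2.1 (fun h' => h2.2.2 h'.symm) h (ih h2.1)).elim
        · exact h
    intro p hp q hq
    exact (commute_Sub_Sub (fun a ha b hb => gen_comm (hj a ha b hb)) hq (hle hp)).symm

variable [Finite W]

/-- Chosen conjugator. -/
noncomputable def hh (x : RAAG Γ) : RAAG Γ := (exists_tight x).choose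
/-- Chosen support. -/
noncomputable def SS (x : RAAG Γ) : Set W := (exists_tight x).choose_spec.choose
/-- Cyclically reduced form. -/
noncomputable def cc (x : RAAG Γ) : RAAG Γ := (hh x)⁻¹ * x * hh x

lemma cc_tight (x : RAAG Γ) : Tight Γ (SS x) (cc x) := (exists_tight x).choose_spec.choose_spec

/-- A node. -/
noncomputable def node (x : RAAG Γ) (v : W) : Subgroup (RAAG Γ) := cj (hh x) (Sub Γ (comp Γ (SS x) v))
/-- The set of nodes. -/
def nodes (x : RAAG Γ) : Set (Subgroup (RAAG Γ)) := node x '' (SS x)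
/-- The vertices of nodes in `T`. -/
def US (x : RAAG Γ) (T : Set (Subgroup (RAAG Γ))) : Set W := {v | v ∈ SS x ∧ node x v ∈ T}
/-- The part of `x` in the nodes `T`. -/
noncomputable def part (x : RAAG Γ) (T : Set (Subgroup (RAAG Γ))) : RAAG Γ :=
  hh x * ret Γ (US x T) (cc x) * (hh x)⁻¹

lemma nodes_finite (x : RAAG Γ) : (nodes x).Finite := (Set.toFinite (SS x)).image _

lemma node_irr {x : RAAG Γ} {P : Subgroup (RAAG Γ)} (hP : P ∈ nodes x) : Irr P := by
  obtain ⟨v, hv, rfl⟩ := hP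
  exact ⟨hh x, _, comp_conn hv, rfl⟩

lemma node_commute {x y : RAAG Γ} (h : Commute x y) {P Q : Subgroup (RAAG Γ)} (hP : P ∈ nodes x)
    (hQ : Q ∈ nodes y) : P = Q ∨ CommS P Q := by
  have key : ∀ {x y : RAAG Γ} (h : Commute x y) {P Q : Subgroup (RAAG Γ)} (hP : P ∈ nodes x)
    (hQ : Q ∈ nodes y), Q ≤ P ∨ CommS Q P := by
    intro x y h P Q hP hQ
    obtain ⟨v, hv, rfl⟩ := hP
    obtain ⟨u, hu, rfl⟩ := hQ
    have h1 : Commute ((hh x)⁻¹ * y * hh x) (cc x) := by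
      have h4 := h.symm.map (MulAut.conj (hh x)⁻¹).toMonoidHom
      simpa [mul_assoc, cc] using h4
    have h2 := tight_commute (cc_tight x) h1
    have h3 : cc y ∈ cj ((hh y)⁻¹ * hh x) (Sub Γ (SS x ∪ perp Γ (SS x))) := by
      rw [mem_cj]; simpa [mul_assoc, cc] using h2
    have h4 := tight_pc (cc_tight y) h3
    have h5 : cj ((hh x)⁻¹ * hh y) (Sub Γ (comp Γ (SS y) u)) ≤ Sub Γ (SS x ∪ perp Γ (SS x)) := by
      rw [cj_le_iff]
      refine (Sub_mono (comp_sub hu)).trans ?_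
      simpa using h4
    rcases irr_join (comp_conn hu) h5 hv with h6 | h6
    · left
      unfold node
      rw [← cj_cj, cj_le_iff, inv_inv] at h6
      exact h6
    · right
      intro p hp q hq
      unfold node at hp hq
      rw [mem_cj] at hp hq
      have := h6 ((hh x)⁻¹ * p * hh x) (by rw [mem_cj]; simpa [mul_assoc] using hp) _ hq
      have h4 := this.map (MulAut.conj (hh x)).toMonoidHom
      simpa [mul_assoc] using h4
  rcases key h hP hQ with h1 | h1
  · rcases key h.symm hQ hP with h2 | h2
    · exact Or.inl (le_antisymm h2 h1)
    · exact Or.inr h2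
  · exact Or.inr h1.symm

lemma node_eq_iff {x : RAAG Γ} {u v : W} (hu : u ∈ SS x) (hv : v ∈ SS x) :
    node x u = node x v ↔ u ∈ comp Γ (SS x) v := by
  constructor
  · intro h
    have : hh x * gen Γ u * (hh x)⁻¹ ∈ node x v := by
      rw [← h]; exact cj_conj_mem.2 (gen_mem mem_comp_self)
    exact gen_mem_iff.1 (cj_conj_mem.1 this)
  · intro h
    unfold node; rw [comp_eq h]

lemma ret_union {U U' : Set W} (h : ∀ u ∈ U, ∀ u' ∈ U', Γ.Adj u u') (x : RAAG Γ) :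
    ret Γ (U ∪ U') x = ret Γ U x * ret Γ U' x := by
  have hc : ∀ x y, Commute (ret Γ U x) (ret Γ U' y) := fun x y =>
    commute_Sub_Sub (fun a ha b hb => gen_comm (h a ha b hb)) (ret_mem _ _) (ret_mem _ _)
  have hx : x ∈ Subgroup.closure (Set.range (gen Γ)) := by rw [closure_gen]; trivial
  induction hx using Subgroup.closure_induction with
  | mem x hx =>
    obtain ⟨v, rfl⟩ := hx
    by_cases h1 : v ∈ U <;> by_cases h2 : v ∈ U'
    · exact absurd (h v h1 v h2) (by simp)
    · rw [ret_gen_mem h1, ret_gen_not h2, ret_gen_mem (Set.mem_union_left _ h1), mul_one]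
    · rw [ret_gen_not h1, ret_gen_mem h2, ret_gen_mem (Set.mem_union_right _ h2), one_mul]
    · rw [ret_gen_not h1, ret_gen_not h2, ret_gen_not (by rintro (h | h) <;> contradiction), one_mul]
  | one => simp
  | mul x y hx hy h1 h2 =>
    rw [map_mul, map_mul, map_mul, h1, h2]
    rw [mul_assoc, mul_assoc, ← mul_assoc (ret Γ U' x), ← (hc y x).eq]
    simp only [mul_assoc]
  | inv x hx h =>
    rw [map_inv, map_inv, map_inv, h, mul_inv_rev, ((hc x x).inv_inv).eq]

lemma US_adj {x : RAAG Γ} {T T' : Set (Subgroup (RAAG Γ))} (h : Disjoint T T') :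
    ∀ u ∈ US x T, ∀ u' ∈ US x T', Γ.Adj u u' := by
  rintro u ⟨hu, hT⟩ u' ⟨hu', hT'⟩
  by_contra hadj
  have : node x u = node x u' := by
    rw [node_eq_iff hu hu']
    exact Relation.ReflTransGen.single ⟨hu', hu, fun h => hadj h.symm⟩
  exact Set.disjoint_left.1 h hT (this ▸ hT')

lemma part_union {x : RAAG Γ} {T T' : Set (Subgroup (RAAG Γ))} (h : Disjoint T T') :
    part x (T ∪ T') = part x T * part x T' := by
  have : US x (T ∪ T') = US x T ∪ US x T' := by
    ext v; simp only [US, Set.mem_ofPred_eq, Set.mem_union]; tauto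
  unfold part
  rw [this, ret_union (US_adj h)]
  group

lemma part_inter (x : RAAG Γ) (T : Set (Subgroup (RAAG Γ))) : part x (T ∩ nodes x) = part x T := by
  have : US x (T ∩ nodes x) = US x T := by
    ext v; simp only [US, Set.mem_ofPred_eq, Set.mem_inter_iff]
    exact ⟨fun h => ⟨h.1, h.2.1⟩, fun h => ⟨h.1, h.2, v, h.1, rfl⟩⟩
  unfold part; rw [this]

lemma part_empty (x : RAAG Γ) : part x ∅ = 1 := by
  have : US x ∅ = ∅ := by ext v; simp [US]
  unfold part
  rw [this]
  have := ret_mem ∅ (cc x)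
  rw [Sub_empty, Subgroup.mem_bot] at this
  simp [this]

lemma part_univ (x : RAAG Γ) : part x Set.univ = x := by
  have : US x Set.univ = SS x := by ext v; simp [US]
  unfold part
  rw [this, ret_eq (cc_tight x).1, cc]
  group

lemma part_eq_one {x : RAAG Γ} {T : Set (Subgroup (RAAG Γ))} (h : T ∩ nodes x = ∅) : part x T = 1 := by
  rw [← part_inter, h, part_empty]

lemma part_full {x : RAAG Γ} {P : Subgroup (RAAG Γ)} (hP : P ∈ nodes x) : Full P (part x {P}) := by
  obtain ⟨v, hv, rfl⟩ := hP
  have hU : US x {node x v} = comp Γ (SS x) v := by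
    ext u
    simp only [US, Set.mem_ofPred_eq, Set.mem_singleton_iff]
    constructor
    · rintro ⟨h1, h2⟩; exact (node_eq_iff h1 hv).1 h2
    · intro h; exact ⟨comp_sub hv h, (node_eq_iff (comp_sub hv h) hv).2 h⟩
  unfold part
  rw [hU]
  unfold node
  apply Full.conj
  apply Tight.full
  set D := comp Γ (SS x) v with hD
  have hDS : D ⊆ SS x := comp_sub hv
  refine ⟨ret_mem _ _, ?_⟩
  intro w hw g hg
  set g' := ret Γ D g with hg'
  have h1 : g' * ret Γ D (cc x) * g'⁻¹ ∈ Sub Γ {w}ᶜ := by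
    have := ret_mem_of_mem (S := D) hg
    rw [map_mul, map_mul, map_inv, ret_ret, Set.inter_self] at this
    exact this
  apply (cc_tight x).2 w (hDS hw) g'
  have hadj : ∀ d ∈ D, ∀ d' ∈ SS x \ D, Γ.Adj d d' := fun d hd d' hd' => comp_adj hv hd hd'.1 hd'.2
  have h2 : cc x = ret Γ D (cc x) * ret Γ (SS x \ D) (cc x) := by
    rw [← ret_union hadj, Set.union_sdiff_cancel hDS, ret_eq (cc_tight x).1]
  have h3 : Commute g'⁻¹ (ret Γ (SS x \ D) (cc x)) :=
    commute_Sub_Sub (fun a ha b hb => gen_comm (hadj a ha b hb)) (inv_mem (ret_mem _ _)) (ret_mem _ _)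
  have h4 : g' * cc x * g'⁻¹ = (g' * ret Γ D (cc x) * g'⁻¹) * ret Γ (SS x \ D) (cc x) := by
    rw [mul_assoc (g' * ret Γ D (cc x)), h3.eq]
    conv_lhs => rw [h2]
    group
  rw [h4]
  refine mul_mem h1 (Sub_mono ?_ (ret_mem _ _))
  intro u hu e
  rw [Set.mem_singleton_iff] at e
  exact hu.2 (e ▸ hw)

lemma part_mem_closure (x : RAAG Γ) (T : Set (Subgroup (RAAG Γ))) {H : Subgroup (RAAG Γ)}
    (hH : ∀ P ∈ T, P ∈ nodes x → part x {P} ∈ H) : part x T ∈ H := by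
  rw [← part_inter]
  have hf : (T ∩ nodes x).Finite := (nodes_finite x).subset Set.inter_subset_right
  have hsub : ∀ P ∈ T ∩ nodes x, part x {P} ∈ H := fun P hP => hH P hP.1 hP.2
  generalize T ∩ nodes x = F at hf hsub
  induction F, hf using Set.Finite.induction_on with
  | empty => rw [part_empty]; exact one_mem _
  | @insert a s ha hs ih =>
    rw [Set.insert_eq, part_union (Set.disjoint_singleton_left.2 ha)]
    exact mul_mem (hsub a (Set.mem_insert _ _)) (ih fun P hP => hsub P (Set.mem_insert_of_mem _ hP))

lemma part_commute {x y : RAAG Γ} (h : Commute x y) (T T' : Set (Subgroup (RAAG Γ))) :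
    Commute (part x T) (part y T') := by
  have hother : ∀ {x : RAAG Γ} {P : Subgroup (RAAG Γ)}, P ∈ nodes x → ∀ p ∈ P,
      Commute p (part x {P}ᶜ) := by
    intro x P hP p hp
    have := part_mem_closure x {P}ᶜ (H := Subgroup.centralizer {p}) ?_
    · rw [Subgroup.mem_centralizer_singleton_iff] at this; exact this.symm
    · intro Q hQ hQx
      rw [Subgroup.mem_centralizer_singleton_iff]
      rcases node_commute (Commute.refl x) hP hQx with h1 | h1
      · exact absurd h1.symm hQ
      · exact (h1 p hp _ (part_full hQx).1).symm
  have main : ∀ P ∈ nodes x, ∀ Q ∈ nodes y, Commute (part x {P}) (part y {Q}) := by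
    intro P hP Q hQ
    rcases node_commute h hP hQ with rfl | hc
    · rcases irr_center (node_irr hP) with hab | hcen
      · exact hab _ (part_full hP).1 _ (part_full hQ).1
      · have hα := (part_full hP).1
        have hβ := (part_full hQ).1
        set α := part x {P}
        set β := part y {P}
        have hx : x = α * part x {P}ᶜ := by
          rw [← part_union disjoint_compl_right, Set.union_compl_self, part_univ]
        have hy : y = β * part y {P}ᶜ := by
          rw [← part_union disjoint_compl_right, Set.union_compl_self, part_univ]
        have ha := hother hP
        have hb := hother hQ
        set a := part x {P}ᶜ
        set b := part y {P}ᶜ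
        have e : α * a * (β * b) = β * b * (α * a) := by rw [← hx, ← hy]; exact h.eq
        have e1 : (β * α)⁻¹ * (α * β) = b * a * (a * b)⁻¹ := by
          have e2 : α * β * (a * b) = β * α * (b * a) := by
            calc α * β * (a * b) = α * (β * a) * b := by group
              _ = α * a * (β * b) := by rw [(ha β hβ).eq]; group
              _ = β * b * (α * a) := e
              _ = β * (b * α) * a := by group
              _ = β * α * (b * a) := by rw [← (hb α hα).eq]; group
          rw [inv_mul_eq_iff_eq_mul, ← mul_assoc, eq_mul_inv_iff_mul_eq]
          exact e2
        have hm : (β * α)⁻¹ * (α * β) = 1 := by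
          apply hcen
          · exact mul_mem (inv_mem (mul_mem hβ hα)) (mul_mem hα hβ)
          · intro p hp
            rw [e1]
            have h1 := (ha p hp).symm
            have h2 := (hb p hp).symm
            exact (h2.mul_left h1).mul_left ((h1.mul_left h2).inv_left)
        rw [inv_mul_eq_one] at hm
        exact hm.symm
    · exact hc _ (part_full hP).1 _ (part_full hQ).1
  have := part_mem_closure x T (H := Subgroup.centralizer {part y T'}) ?_
  · rw [Subgroup.mem_centralizer_singleton_iff] at this; exact this
  · intro P _ hP
    rw [Subgroup.mem_centralizer_singleton_iff]
    have := part_mem_closure y T' (H := Subgroup.centralizer {part x {P}}) ?_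
    · rw [Subgroup.mem_centralizer_singleton_iff] at this; exact this.symm
    · intro Q _ hQ
      rw [Subgroup.mem_centralizer_singleton_iff]
      exact (main P hP Q hQ).symm
end nodes
end RA

namespace RA
open Classical
set_option linter.unusedSectionVars false
set_option linter.unusedVariables false

section tree
open HNNExtension HNNExtension.NormalWord
variable {G : Type*} [Group G] {A B : Subgroup G} {φ : A ≃* B} (d : TransversalPair G A B)

/-- The list of the normal form. -/
noncomputable def LL (x : HNNExtension G A B φ) : List (ℤˣ × G) :=
  (x • (empty : NormalWord d)).toList

/-- Product of letters. -/
def lp (l : List (ℤˣ × G)) : HNNExtension G A B φ :=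
  (l.map (fun x => (t : HNNExtension G A B φ) ^ (x.1 : ℤ) * of x.2)).prod

variable {d}

lemma LL_of (g : G) (x : HNNExtension G A B φ) : LL d (of g * x) = LL d x := by
  unfold LL; rw [mul_smul, of_smul_eq_smul, group_smul_toList]

lemma eq_lp (x : HNNExtension G A B φ) : ∃ g : G, x = of g * lp (LL d x) := by
  refine ⟨(x • (empty : NormalWord d)).head, ?_⟩
  have := prod_smul φ x (empty : NormalWord d)
  rw [prod_empty, mul_one] at this
  exact this.symm

lemma LL_eq {x y : HNNExtension G A B φ} (h : LL d x = LL d y) : ∃ g : G, x = of g * y := by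
  obtain ⟨g, hg⟩ := eq_lp (d := d) x
  obtain ⟨g', hg'⟩ := eq_lp (d := d) y
  refine ⟨g * g'⁻¹, ?_⟩
  rw [hg, h, map_mul, map_inv]
  conv_rhs => rw [hg']
  group

lemma LL_t (u : ℤˣ) (x : HNNExtension G A B φ) :
    (∃ e, LL d (t ^ (u : ℤ) * x) = e :: LL d x) ∨ (∃ e, LL d x = e :: LL d (t ^ (u : ℤ) * x)) := by
  unfold LL
  rw [mul_smul, t_pow_smul_eq_unitsSMul]
  generalize x • (empty : NormalWord d) = w
  by_cases h : Cancels u w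
  · right
    rw [unitsSMul, dif_pos h]
    induction w using consRecOn with
    | ofGroup g => simp [Cancels, ofGroup] at h
    | cons g u' w h1 h2 ih =>
      refine ⟨(u', w.head), ?_⟩
      simp [unitsSMulWithCancel]
  · left
    rw [unitsSMul, dif_neg h]
    exact ⟨_, by simp; rfl⟩

lemma LL_letter (e : ℤˣ × G) (x : HNNExtension G A B φ) :
    (∃ e', LL d (t ^ (e.1 : ℤ) * of e.2 * x) = e' :: LL d x) ∨
    (∃ e', LL d x = e' :: LL d (t ^ (e.1 : ℤ) * of e.2 * x)) := by
  have := LL_t (d := d) e.1 (of e.2 * x)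
  rw [LL_of, ← mul_assoc] at this
  exact this

lemma LL_one : LL d (1 : HNNExtension G A B φ) = [] := by
  unfold LL; rw [one_smul]; rfl

lemma LL_reduced (w : ReducedWord G A B) : (LL d (w.prod φ)).length = w.toList.length := by
  obtain ⟨w', h1, h2, h3⟩ := ReducedWord.exists_normalWord_prod_eq φ d w
  unfold LL
  rw [← h1, prod_smul_empty, ← List.length_map (f := Prod.fst), h2, List.length_map]

lemma LL_lp_le (l : List (ℤˣ × G)) (x : HNNExtension G A B φ) :
    (LL d (lp l * x)).length ≤ l.length + (LL d x).length := by
  induction l with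
  | nil => simp [lp]
  | cons e l ih =>
    have h : (lp (e :: l) : HNNExtension G A B φ) * x = t ^ (e.1 : ℤ) * of e.2 * (lp l * x) := by
      simp [lp, mul_assoc]
    rw [h]
    rcases LL_letter (d := d) e (lp l * x) with ⟨e', he⟩ | ⟨e', he⟩
    · rw [he]; simp; omega
    · have := congrArg List.length he
      simp at this ⊢; omega

lemma LL_common (z : HNNExtension G A B φ) : ∃ m : ℕ, ∀ x : HNNExtension G A B φ,
    ∃ S : List (ℤˣ × G), S <:+ LL d x ∧ S <:+ LL d (z * x) ∧ (LL d x).length ≤ S.length + m ∧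
      (LL d (z * x)).length ≤ S.length + m := by
  induction z using HNNExtension.induction_on with
  | of g =>
    refine ⟨0, fun x => ⟨LL d x, ?_⟩⟩
    rw [LL_of]; simp
  | t =>
    refine ⟨1, fun x => ?_⟩
    have := LL_t (d := d) 1 x
    simp only [Units.val_one, zpow_one] at this
    rcases this with ⟨e, he⟩ | ⟨e, he⟩
    · exact ⟨LL d x, List.suffix_rfl, by rw [he]; exact List.suffix_cons _ _, by simp, by simp [he]⟩
    · exact ⟨LL d (t * x), by rw [he]; exact List.suffix_cons _ _, List.suffix_rfl, by simp [he],
        by simp⟩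
  | mul z1 z2 h1 h2 =>
    obtain ⟨m1, h1⟩ := h1
    obtain ⟨m2, h2⟩ := h2
    refine ⟨m1 + m2, fun x => ?_⟩
    obtain ⟨S2, a2, b2, c2, d2⟩ := h2 x
    obtain ⟨S1, a1, b1, c1, d1⟩ := h1 (z2 * x)
    rw [← mul_assoc] at b1 d1
    have l1 := a1.length_le
    have l2 := b2.length_le
    rcases le_total S1.length S2.length with h | h
    · exact ⟨S1, (List.suffix_of_suffix_length_le a1 b2 h).trans a2, b1, by omega, by omega⟩
    · exact ⟨S2, a2, (List.suffix_of_suffix_length_le b2 a1 h).trans b1, by omega, by omega⟩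
  | inv z h =>
    obtain ⟨m, h⟩ := h
    refine ⟨m, fun x => ?_⟩
    obtain ⟨S, a, b, c, e⟩ := h (z⁻¹ * x)
    rw [mul_inv_cancel_left] at b e
    exact ⟨S, b, a, e, c⟩

lemma exists_cyclic (x : HNNExtension G A B φ) (hx : LL d x ≠ []) :
    ∃ (g : G) (l : List (ℤˣ × G)), l.length = (LL d x).length ∧ (of g)⁻¹ * x * of g = lp l := by
  obtain ⟨g, hg⟩ := eq_lp (d := d) x
  rcases List.eq_nil_or_concat (LL d x) with hl | ⟨l, a, hl⟩
  · exact absurd hl hx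
  · rw [List.concat_eq_append] at hl
    refine ⟨g, l ++ [(a.1, a.2 * g)], by simp [hl], ?_⟩
    conv_lhs => rw [hg]
    simp [lp, hl, mul_assoc]

/-- Ray of an infinite periodic word. -/
def RR (c : ℕ → ℤˣ × G) : ℕ → HNNExtension G A B φ
  | 0 => 1
  | (j + 1) => t ^ ((c j).1 : ℤ) * of (c j).2 * RR c j

/-- Its list of letters. -/
def RL (c : ℕ → ℤˣ × G) : ℕ → List (ℤˣ × G)
  | 0 => []
  | (j + 1) => c j :: RL c j

lemma RR_eq (c : ℕ → ℤˣ × G) (j : ℕ) : (RR c j : HNNExtension G A B φ) = lp (RL c j) := by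
  induction j with
  | zero => simp [RR, RL, lp]
  | succ j ih => simp [RR, RL, lp, ih]

lemma RL_length (c : ℕ → ℤˣ × G) (j : ℕ) : (RL c j).length = j := by
  induction j with
  | zero => simp [RL]
  | succ j ih => simp [RL, ih]

lemma RR_add (c : ℕ → ℤˣ × G) (i j : ℕ) :
    (RR c (i + j) : HNNExtension G A B φ) = RR (fun k => c (k + i)) j * RR c i := by
  induction j with
  | zero => simp [RR]
  | succ j ih => rw [← add_assoc, RR, RR, ih, mul_assoc, mul_assoc]; simp [add_comm, mul_assoc]

lemma len_RR (c : ℕ → ℤˣ × G)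
    (hc : ∀ j, (c (j + 1)).2 ∈ toSubgroup A B (c (j + 1)).1 → (c (j + 1)).1 = (c j).1) (j : ℕ) :
    (LL d (RR c j : HNNExtension G A B φ)).length = j := by
  have hch : ∀ j, (RL c j).IsChain (fun a b => a.2 ∈ toSubgroup A B a.1 → a.1 = b.1) := by
    intro j
    induction j with
    | zero => exact List.isChain_nil
    | succ j ih =>
      rw [RL, List.isChain_cons]
      refine ⟨?_, ih⟩
      intro y hy
      cases j with
      | zero => simp [RL] at hy
      | succ j =>
        simp [RL] at hy
        subst hy
        exact hc j
  have := LL_reduced (d := d) (φ := φ) ⟨1, RL c j, hch j⟩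
  simp only [ReducedWord.prod, map_one, one_mul] at this
  rw [RR_eq, lp, this, RL_length]

lemma exists_periodic (l : List (ℤˣ × G)) (hl : l ≠ []) : ∃ c : ℕ → ℤˣ × G,
    (∀ j, c (j + l.length) = c j) ∧ RL c l.length = l := by
  have hpos : 0 < l.reverse.length := by
    rw [List.length_reverse]; exact List.length_pos_iff.2 hl
  refine ⟨fun j => l.reverse[j % l.reverse.length]'(Nat.mod_lt _ hpos), ?_, ?_⟩
  · intro j
    simp
  · set c : ℕ → ℤˣ × G := fun j => l.reverse[j % l.reverse.length]'(Nat.mod_lt _ hpos) with hc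
    have : ∀ i, i ≤ l.reverse.length → RL c i = (l.reverse.take i).reverse := by
      intro i
      induction i with
      | zero => intro _; simp [RL]
      | succ i ih =>
        intro hi
        have h1 : i < l.reverse.length := hi
        rw [RL, ih h1.le, List.take_add_one, List.getElem?_eq_getElem h1]
        simp only [Option.toList_some, List.reverse_append, List.reverse_singleton,
          List.singleton_append, hc]
        congr 2
        exact Nat.mod_eq_of_lt h1
    have := this l.length (by simp)
    rw [this, List.take_of_length_le (by simp), List.reverse_reverse]

/-- The key commutation theorem for HNN extensions. -/
theorem hnn_commute {a b : HNNExtension G A B φ} (hab : Commute a b)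
    (ha : ∀ k, k * a * k⁻¹ ∉ (of : G →* HNNExtension G A B φ).range) :
    ∃ p : ℕ, 0 < p ∧ ∃ (q : ℤ) (k : HNNExtension G A B φ),
      k * (b ^ p * (a ^ q)⁻¹) * k⁻¹ ∈ (of : G →* HNNExtension G A B φ).range := by
  obtain ⟨d⟩ := TransversalPair.nonempty G A B
  -- minimal conjugate
  have hex : ∃ n : ℕ, ∃ k, (LL d (k * a * k⁻¹)).length = n := ⟨_, 1, rfl⟩
  obtain ⟨k0, hk0⟩ := Nat.find_spec hex
  have hmin : ∀ k, Nat.find hex ≤ (LL d (k * a * k⁻¹)).length := fun k => Nat.find_min' hex ⟨k, rfl⟩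
  set τ := Nat.find hex with hτ
  have hne : LL d (k0 * a * k0⁻¹) ≠ [] := by
    intro h
    apply ha k0
    obtain ⟨g, hg⟩ := eq_lp (d := d) (k0 * a * k0⁻¹)
    rw [h] at hg
    exact ⟨g, by rw [hg]; simp [lp]⟩
  obtain ⟨g, l, hl, hgl⟩ := exists_cyclic _ hne
  have hτpos : 0 < τ := by rw [← hk0]; exact List.length_pos_iff.2 hne
  rw [hk0] at hl
  have hlne : l ≠ [] := by intro h; rw [h] at hl; simp at hl; omega
  obtain ⟨c, hper, hRLc⟩ := exists_periodic l hlne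
  rw [hl] at hper hRLc
  -- replace a, b by conjugates
  set K : HNNExtension G A B φ := (of g)⁻¹ * k0 with hK
  set a' := K * a * K⁻¹ with ha'
  set b' := K * b * K⁻¹ with hb'
  have hab' : Commute a' b' := by
    exact (Commute.conj_iff K).2 hab
  have ha'R : a' = RR c τ := by
    rw [RR_eq, hRLc, ← hgl, ha', hK]; group
  have hmin' : ∀ k, τ ≤ (LL d (k * a' * k⁻¹)).length := by
    intro k
    have := hmin (k * K)
    rw [ha']
    simpa [mul_assoc] using this
  have hRadd : ∀ j, (RR c (j + τ) : HNNExtension G A B φ) = RR c j * a' := by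
    intro j
    rw [add_comm, RR_add, ← ha'R]
    simp only [hper]
  have hRn : ∀ n j, (RR c (j + n * τ) : HNNExtension G A B φ) = RR c j * a' ^ n := by
    intro n
    induction n with
    | zero => simp
    | succ n ih =>
      intro j
      rw [Nat.succ_mul, ← add_assoc, hRadd, ih, pow_succ, mul_assoc]
  -- reducedness
  have hred : ∀ j, (c (j + 1)).2 ∈ toSubgroup A B (c (j + 1)).1 → (c (j + 1)).1 = (c j).1 := by
    intro j hj
    by_contra hne
    have h2 : 2 ≤ τ := by
      by_contra hlt
      have : τ = 1 := by omega
      apply hne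
      rw [← hper j, this]
    have hu : (c (j + 1)).1 = -(c j).1 := Int.units_ne_iff_eq_neg.1 hne
    obtain ⟨g', hg'⟩ : ∃ g' : G, (t : HNNExtension G A B φ) ^ ((c (j+1)).1 : ℤ) * of (c (j+1)).2 *
        (t ^ ((c j).1 : ℤ) * of (c j).2) = of g' := by
      have hcj : (c j).1 = -(c (j+1)).1 := by rw [hu, neg_neg]
      rw [hcj]
      generalize c (j+1) = e at hj
      rcases Int.units_eq_one_or e.1 with h | h
      · rw [h] at hj ⊢
        have := t_mul_of (φ := φ) ⟨e.2, hj⟩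
        refine ⟨(φ ⟨e.2, hj⟩ : G) * (c j).2, ?_⟩
        simp only [Units.val_one, zpow_one, Units.val_neg, zpow_neg]
        rw [this, map_mul]; group
      · rw [h] at hj ⊢
        have := inv_t_mul_of (φ := φ) ⟨e.2, hj⟩
        refine ⟨(φ.symm ⟨e.2, hj⟩ : G) * (c j).2, ?_⟩
        simp only [Units.val_one, zpow_one, Units.val_neg, zpow_neg, neg_neg]
        rw [this, map_mul]; group
    have hstep : ∀ i, i = j ∨ i = j + τ →
        (RR c (i + 2) : HNNExtension G A B φ) = of g' * RR c i := by
      intro i hi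
      have e1 : c i = c j := by rcases hi with rfl | rfl; rfl; exact hper j
      have e2 : c (i + 1) = c (j + 1) := by
        rcases hi with rfl | rfl; rfl
        have : j + τ + 1 = (j + 1) + τ := by omega
        rw [this]; exact hper (j+1)
      rw [RR, RR, e1, e2, ← mul_assoc, hg']
    have h3 := hmin' (RR c (j + 2))
    rw [← hRadd] at h3
    have e3 : j + 2 + τ = (j + τ) + 2 := by omega
    rw [e3, hstep _ (Or.inr rfl)] at h3
    have e4 : j + τ = (j + 2) + (τ - 2) := by omega
    rw [e4, RR_add, ← mul_assoc, mul_inv_cancel_right, LL_of, RR_eq] at h3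
    have := LL_lp_le (d := d) (φ := φ) (RL (fun k => c (k + (j + 2))) (τ - 2)) 1
    rw [mul_one, LL_one, RL_length] at this
    simp at this
    omega
  have hlen := len_RR (d := d) (φ := φ) c hred
  have hpush : ∀ j, ∃ e, LL d (RR c (j + 1) : HNNExtension G A B φ) = e :: LL d (RR c j : HNNExtension G A B φ) := by
    intro j
    rcases LL_letter (d := d) (c j) (RR c j : HNNExtension G A B φ) with h | ⟨e, h⟩
    · exact h
    · exfalso
      have := congrArg List.length h
      rw [List.length_cons, hlen] at this
      have h5 := hlen (j + 1)
      rw [RR] at h5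
      omega
  have hsuf : ∀ (s : ℕ → HNNExtension G A B φ) (j1 : ℕ),
      (∀ j, j1 ≤ j → ∃ e, LL d (s (j + 1)) = e :: LL d (s j)) → ∀ n, 
      LL d (s j1) <:+ LL d (s (j1 + n)) ∧ (LL d (s (j1 + n))).length = (LL d (s j1)).length + n := by
    intro s j1 h n
    induction n with
    | zero => simp
    | succ n ih =>
      obtain ⟨e, he⟩ := h (j1 + n) (by omega)
      rw [← add_assoc, he]
      refine ⟨ih.1.trans (List.suffix_cons _ _), ?_⟩
      rw [List.length_cons, ih.2]; ring
  -- translated ray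
  have hsp : ∀ j, (∃ e, LL d (RR c (j + 1) * b') = e :: LL d (RR c j * b')) ∨
      (∃ e, LL d (RR c j * b') = e :: LL d (RR c (j + 1) * b')) := by
    intro j
    have := LL_letter (d := d) (c j) (RR c j * b')
    rwa [← mul_assoc] at this
  have hnb : ∀ j, (∃ e, LL d (RR c (j + 1) * b') = e :: LL d (RR c j * b')) →
      (∃ e, LL d (RR c (j + 1 + 1) * b') = e :: LL d (RR c (j + 1) * b')) := by
    rintro j ⟨e, he⟩
    rcases hsp (j + 1) with h | ⟨e', h⟩
    · exact h
    · exfalso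
      rw [he] at h
      have h6 := (List.cons.inj h).2
      obtain ⟨k, hk⟩ := LL_eq h6
      have h7 := mul_right_cancel (hk.trans (mul_assoc _ _ b').symm)
      have h8 := hlen j
      rw [h7, LL_of, hlen] at h8
      omega
  obtain ⟨j1, hj1⟩ : ∃ j1, ∃ e, LL d (RR c (j1 + 1) * b') = e :: LL d (RR c j1 * b') := by
    by_contra hcon
    push Not at hcon
    have : ∀ j, (LL d (RR c 0 * b')).length = j + (LL d (RR c j * b')).length := by
      intro j
      induction j with
      | zero => simp
      | succ j ih =>
        rcases hsp j with ⟨e, h⟩ | ⟨e, h⟩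
        · exact absurd h (hcon j e)
        · rw [ih, h, List.length_cons]; ring
    have := this ((LL d (RR c 0 * b')).length + 1)
    omega
  have hpush' : ∀ j, j1 ≤ j → ∃ e, LL d (RR c (j + 1) * b') = e :: LL d (RR c j * b') := by
    intro j hj
    induction j, hj using Nat.le_induction with
    | base => exact hj1
    | succ j hj ih => exact hnb j ih
  obtain ⟨m, hm⟩ := LL_common (d := d) b'
  set n1 := (LL d (RR c j1 * b')).length with hn1
  have hmain : ∀ n, ∃ k : G, RR c (j1 + n) * b' = of k * RR c (n1 + n) := by
    intro n
    apply LL_eq (d := d)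
    have hs1 := hsuf (fun j => RR c j * b') j1 hpush' n
    have hs2 := hsuf (fun j => RR c j * b') (j1 + n) (fun j hj => hpush' j (by omega))
    beta_reduce at hs1 hs2
    -- choose N large
    set N := j1 + n + n1 + m with hN
    have hNτ : N ≤ N * τ := Nat.le_mul_of_pos_right _ hτpos
    obtain ⟨S, hS1, hS2, hS3, hS4⟩ := hm (RR c (N * τ))
    have e1 : (RR c (N * τ) : HNNExtension G A B φ) = a' ^ N := by
      have := hRn N 0
      simpa [RR] using this
    have e2 : b' * RR c (N * τ) = RR c (N * τ) * b' := by
      rw [e1]; exact ((hab'.pow_left N).eq).symm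
    rw [e2] at hS2 hS4
    have h1 := (hs2 (N * τ - (j1 + n))).1
    have e3 : j1 + n + (N * τ - (j1 + n)) = N * τ := by omega
    rw [e3] at h1
    have h2 := (hsuf (fun j => RR c j) (n1 + n) (fun j _ => hpush j) (N * τ - (n1 + n))).1
    beta_reduce at h2
    have e4 : n1 + n + (N * τ - (n1 + n)) = N * τ := by omega
    rw [e4] at h2
    rw [hlen] at hS3
    have l1 : (LL d (RR c (j1 + n) * b')).length = n1 + n := hs1.2
    have l2 := hlen (n1 + n)
    have h3 := List.suffix_of_suffix_length_le h1 hS2 (by rw [l1]; omega)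
    have h4 := List.suffix_of_suffix_length_le h2 hS1 (by rw [l2]; omega)
    have h5 := List.suffix_of_suffix_length_le h3 h4 (by rw [l1, l2])
    exact h5.eq_of_length (by rw [l1, l2])
  -- iterate
  have hiter : ∀ p n, ∃ k : G, RR c (j1 + (p * j1 + n)) * b' ^ p = of k * RR c (j1 + (p * n1 + n)) := by
    intro p
    induction p with
    | zero => intro n; exact ⟨1, by simp⟩
    | succ p ih =>
      intro n
      obtain ⟨k, hk⟩ := ih (j1 + n)
      obtain ⟨k', hk'⟩ := hmain (p * n1 + (j1 + n) - j1 + 0)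
      have e1 : j1 + ((p + 1) * j1 + n) = j1 + (p * j1 + (j1 + n)) := by ring
      have e2 : j1 + (p * n1 + (j1 + n)) = j1 + (j1 + (p * n1 + n)) := by ring
      obtain ⟨k', hk'⟩ := hmain (j1 + (p * n1 + n))
      have e3 : n1 + (j1 + (p * n1 + n)) = j1 + ((p + 1) * n1 + n) := by ring
      refine ⟨k * k', ?_⟩
      rw [e1, pow_succ, ← mul_assoc, hk, mul_assoc, e2, hk', e3, map_mul, mul_assoc]
  obtain ⟨k, hk⟩ := hiter τ 0
  have e1 : j1 + (τ * j1 + 0) = j1 + j1 * τ := by ring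
  have e2 : j1 + (τ * n1 + 0) = j1 + n1 * τ := by ring
  rw [e1, e2, hRn, hRn] at hk
  refine ⟨τ, hτpos, (n1 : ℤ) - j1, RR c j1 * K, k, ?_⟩
  have hb'p : b' ^ τ = K * b ^ τ * K⁻¹ := by rw [hb', conj_pow]
  have ha'z : ∀ z : ℤ, a' ^ z = K * a ^ z * K⁻¹ := fun z => by rw [ha', conj_zpow]
  have h3 : RR c j1 * (b' ^ τ * (a' ^ ((n1 : ℤ) - j1))⁻¹) * (RR c j1)⁻¹ = of k := by
    have hc1 : Commute (a' ^ j1) (b' ^ τ) := (hab'.pow_left _).pow_right _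
    have h4 : RR c j1 * b' ^ τ * a' ^ j1 = of k * RR c j1 * a' ^ n1 := by
      rw [mul_assoc, ← hc1.eq, ← mul_assoc, hk, mul_assoc]
    have h5 : RR c j1 * b' ^ τ = of k * RR c j1 * a' ^ n1 * (a' ^ j1)⁻¹ := by
      rw [← h4]; group
    rw [← mul_assoc, h5, zpow_sub, zpow_natCast, zpow_natCast]
    group
  rw [hb'p, ha'z] at h3
  rw [← h3]
  group
end tree

section powers
variable {W : Type} {Γ : SimpleGraph W} [Finite W]

lemma mem_zpowers_of_single {v : W} {x : RAAG Γ} (hx : x ∈ Sub Γ {v}) : ∃ n : ℤ, x = gen Γ v ^ n := by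
  unfold Sub at hx
  rw [Set.image_singleton, Subgroup.mem_closure_singleton] at hx
  obtain ⟨n, hn⟩ := hx
  exact ⟨n, hn.symm⟩

lemma powers_aux {C : Set W} (hC : Conn Γ C) {a b : RAAG Γ} (ha : Tight Γ C a) (hb : b ∈ Sub Γ C)
    (hab : Commute a b) : ∃ p : ℕ, 0 < p ∧ ∃ q : ℤ, b ^ p = a ^ q := by
  by_cases h2 : ∃ u ∈ C, ∃ v ∈ C, u ≠ v
  · obtain ⟨w, hw⟩ := hC.1
    obtain ⟨p, hp, q, k, y, hy⟩ := hnn_commute (hab.map (toH Γ w)) (by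
      rintro k ⟨y, hy⟩
      apply ha.2 w hw (ofH Γ w k)
      have := congrArg (ofH Γ w) hy
      rw [map_mul, map_mul, ofH_toH, map_inv, ← toH_base, ofH_toH] at this
      rw [← this]; exact y.2)
    refine ⟨p, hp, q, ?_⟩
    have := congrArg (ofH Γ w) hy
    rw [← toH_base, ofH_toH, map_mul, map_mul, map_inv, map_mul, map_pow, map_inv, map_zpow,
      ofH_toH, ofH_toH] at this
    set k' := ofH Γ w k
    set e := b ^ p * (a ^ q)⁻¹ with he
    have hell : e ∈ cj k'⁻¹ (Sub Γ {w}ᶜ) := by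
      rw [mem_cj, inv_inv, ← this]; exact y.2
    have heC : e ∈ Sub Γ C := mul_mem (pow_mem hb _) (inv_mem (zpow_mem ha.1 _))
    have hae : Commute a e := (hab.pow_right p).mul_right ((Commute.refl a).zpow_right q).inv_right
    suffices e = 1 by rwa [he, mul_inv_eq_one] at this
    by_contra hne
    have hfull : Full (cj (hh e) (Sub Γ (SS e))) e := by
      have := (cc_tight e).full.conj (hh e)
      have h3 : hh e * cc e * (hh e)⁻¹ = e := by unfold cc; group
      rwa [h3] at this
    obtain ⟨v, hv⟩ : (SS e).Nonempty := by
      by_contra hem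
      rw [Set.not_nonempty_iff_eq_empty] at hem
      have h3 := hfull.1
      rw [hem, Sub_empty, mem_cj, Subgroup.mem_bot] at h3
      apply hne
      have : e = hh e * ((hh e)⁻¹ * e * hh e) * (hh e)⁻¹ := by group
      rw [this, h3]; simp
    have h1 : Commute ((hh e)⁻¹ * a * hh e) (cc e) := by
      have h4 := hae.map (MulAut.conj (hh e)⁻¹).toMonoidHom
      simpa [mul_assoc, cc] using h4
    have h3 := tight_commute (cc_tight e) h1
    have h4 : a ∈ cj (hh e) (Sub Γ (SS e ∪ perp Γ (SS e))) := by rw [mem_cj]; exact h3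
    have h5 := tight_pc ha h4
    have h6 : cj (hh e)⁻¹ (Sub Γ C) ≤ Sub Γ (SS e ∪ perp Γ (SS e)) := by
      rw [cj_le_iff, inv_inv]; exact h5
    rcases irr_join hC h6 hv with h7 | h7
    · rw [cj_le_iff, inv_inv] at h7
      have h8 := hfull.2 _ _ hell (cj_mono (Sub_mono (comp_sub hv)) (h7 (gen_mem hw)))
      rw [mem_cj] at h8
      have := ex_Sub (w := w) (by simp) h8
      simp [ex_self, mul_comm] at this
    · -- the generator of the node lies in the center
      have hq : hh e * gen Γ v * (hh e)⁻¹ ∈ Sub Γ C := by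
        have h8 := hfull.2 1 C (by rw [cj_one]; exact heC)
        rw [cj_one] at h8
        exact h8 (cj_conj_mem.2 (gen_mem hv))
      have hcen : ∀ p ∈ Sub Γ C, Commute (hh e * gen Γ v * (hh e)⁻¹) p := by
        intro p hp
        have h8 := h7 ((hh e)⁻¹ * p * (hh e)) (by rw [mem_cj]; simpa [mul_assoc] using hp)
          (gen Γ v) (gen_mem mem_comp_self)
        have h9 := h8.map (MulAut.conj (hh e)).toMonoidHom
        have h10 : Commute p (hh e * gen Γ v * (hh e)⁻¹) := by simpa [mul_assoc] using h9
        exact h10.symm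
      rcases irr_center (P := Sub Γ C) ⟨1, C, hC, (cj_one _).symm⟩ with h8 | h8
      · obtain ⟨v', hv', hne', hadj⟩ := conn_nbr hC h2 hw
        rcases gen_commute_iff.1 (h8 _ (gen_mem hw) _ (gen_mem hv')) with h | h
        · exact hne' h.symm
        · exact hadj h
      · have := h8 _ hq hcen
        rw [mul_inv_eq_one] at this
        exact gen_ne_one v (mul_eq_left.1 this)
  · push Not at h2
    obtain ⟨v, hv⟩ := hC.1
    have hCv : C = {v} := by
      ext u; exact ⟨fun hu => h2 u hu v hv, fun hu => by rw [Set.mem_singleton_iff] at hu; rwa [hu]⟩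
    rw [hCv] at ha hb
    obtain ⟨i, hi⟩ := mem_zpowers_of_single ha.1
    obtain ⟨j, hj⟩ := mem_zpowers_of_single hb
    have hi0 : i ≠ 0 := by
      rintro rfl
      apply ha.2 v rfl 1
      rw [hi]; simp
    refine ⟨i.natAbs, Int.natAbs_pos.2 hi0, j * i.sign, ?_⟩
    rw [hi, hj, ← zpow_natCast, ← zpow_mul, ← zpow_mul]
    congr 1
    rw [mul_left_comm, Int.mul_sign_self]

/-- Commuting elements of an irreducible parabolic, the first being full, are commensurable. -/
theorem powers {P : Subgroup (RAAG Γ)} (hP : Irr P) {a b : RAAG Γ} (ha : Full P a) (hb : b ∈ P)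
    (hab : Commute a b) : ∃ p : ℕ, 0 < p ∧ ∃ q : ℤ, b ^ p = a ^ q := by
  obtain ⟨h, C, hC, rfl⟩ := hP
  have h1 := ha.conj h⁻¹
  rw [cj_cj, inv_mul_cancel, cj_one, inv_inv] at h1
  rw [mem_cj] at hb
  have h2 : Commute (h⁻¹ * a * h) (h⁻¹ * b * h) := by
    have := hab.map (MulAut.conj h⁻¹).toMonoidHom
    simpa [mul_assoc] using this
  obtain ⟨p, hp, q, e⟩ := powers_aux hC h1.tight hb h2
  refine ⟨p, hp, q, ?_⟩
  have e1 : (h⁻¹ * b * h) ^ p = h⁻¹ * b ^ p * h := by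
    have := conj_pow (a := h⁻¹) (b := b) (i := p)
    simpa using this
  have e2 : (h⁻¹ * a * h) ^ q = h⁻¹ * a ^ q * h := by
    have := conj_zpow (a := h⁻¹) (b := a) (i := q)
    simpa using this
  rw [e1, e2] at e
  exact mul_left_cancel (mul_right_cancel e)
end powers
end RA

namespace RA
open Classical
set_option linter.unusedSectionVars false
set_option linter.unusedVariables false

/-- A family indexed by a disjoint union of paths; `nadj` holds for consecutive members and
`adj` for all the other pairs. -/
def Pat {ι X : Type} (n : ι → ℕ) (adj nadj : X → X → Prop) (f : ι → ℕ → X) : Prop :=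
  (∀ j k, k + 1 < n j → nadj (f j k) (f j (k + 1))) ∧
  (∀ j k k', k + 1 < k' → k' < n j → adj (f j k) (f j k')) ∧
  (∀ j j' k k', j ≠ j' → k < n j → k' < n j' → adj (f j k) (f j' k'))

lemma Pat.imp {ι X Y : Type} {n : ι → ℕ} {adj nadj : X → X → Prop} {adj' nadj' : Y → Y → Prop}
    {f : ι → ℕ → X} {f' : ι → ℕ → Y} (h : Pat n adj nadj f)
    (h1 : ∀ j k j' k', k < n j → k' < n j' → adj (f j k) (f j' k') → adj' (f' j k) (f' j' k'))
    (h2 : ∀ j k j' k', k < n j → k' < n j' → nadj (f j k) (f j' k') → nadj' (f' j k) (f' j' k')) :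
    Pat n adj' nadj' f' :=
  ⟨fun j k hk => h2 _ _ _ _ (by omega) hk (h.1 j k hk),
   fun j k k' hk hk' => h1 _ _ _ _ (by omega) hk' (h.2.1 j k k' hk hk'),
   fun j j' k k' hj hk hk' => h1 _ _ _ _ hk hk' (h.2.2 j j' k k' hj hk hk')⟩

/-- The induced pattern in a graph. -/
def GPat {ι W : Type} (n : ι → ℕ) (Γ : SimpleGraph W) (f : ι → ℕ → W) : Prop :=
  Pat n Γ.Adj (fun a b => a ≠ b ∧ ¬ Γ.Adj a b) f

section double
variable {W : Type} (Γ : SimpleGraph W) (v : W)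

/-- vertices of the double -/
abbrev DV : Type := {p : W × Bool // p.2 = true → p.1 ∉ St Γ v}

/-- the double along the star of `v` -/
def Dbl : SimpleGraph (DV Γ v) where
  Adj p q := Γ.Adj p.1.1 q.1.1 ∧ (p.1.2 = q.1.2 ∨ p.1.1 ∈ St Γ v ∨ q.1.1 ∈ St Γ v)
  symm := ⟨fun p q h => ⟨h.1.symm, by rcases h.2 with h | h | h <;> simp [h]⟩⟩
  loopless := ⟨fun p h => Γ.loopless.irrefl _ h.1⟩

variable {Γ v}

lemma dbl_comb {ι : Type} {n : ι → ℕ} {f : ι → ℕ → DV Γ v} (hf : GPat n (Dbl Γ v) f) :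
    ∃ f', GPat n Γ f' := by
  obtain ⟨h1, h2, h3⟩ := hf
  set p : ι → ℕ → W := fun j k => (f j k).1.1 with hp
  set b : ι → ℕ → Bool := fun j k => (f j k).1.2 with hb
  have bSt : ∀ j k, b j k = true → p j k ∉ St Γ v := fun j k => (f j k).2
  have h2' : ∀ j k k', k + 1 < k' → k' < n j → Γ.Adj (p j k) (p j k') ∧
    (b j k = b j k' ∨ p j k ∈ St Γ v ∨ p j k' ∈ St Γ v) := h2
  have h3' : ∀ j j' k k', j ≠ j' → k < n j → k' < n j' → Γ.Adj (p j k) (p j' k') ∧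
    (b j k = b j' k' ∨ p j k ∈ St Γ v ∨ p j' k' ∈ St Γ v) := h3
  have h1' : ∀ j k, k + 1 < n j → (p j k ≠ p j (k+1) ∧ ¬ Γ.Adj (p j k) (p j (k+1))) ∨
      (b j k ≠ b j (k+1) ∧ p j k ∉ St Γ v ∧ p j (k+1) ∉ St Γ v) := by
    intro j k hk
    obtain ⟨hne, hadj⟩ := h1 j k hk
    have hadj' : ¬ (Γ.Adj (p j k) (p j (k+1)) ∧
      (b j k = b j (k+1) ∨ p j k ∈ St Γ v ∨ p j (k+1) ∈ St Γ v)) := hadj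
    by_cases hpe : p j k = p j (k+1)
    · right
      have hbne : b j k ≠ b j (k+1) := by
        intro hbe
        exact hne (Subtype.ext (Prod.ext hpe hbe))
      refine ⟨hbne, ?_⟩
      by_cases hbt : b j k = true
      · have := bSt j k hbt
        exact ⟨this, hpe ▸ this⟩
      · have h4 : b j (k+1) = true := by
          cases h5 : b j (k+1) <;> cases h6 : b j k <;> simp_all
        have := bSt j (k+1) h4
        exact ⟨hpe ▸ this, this⟩
    · by_cases ha : Γ.Adj (p j k) (p j (k+1))
      · right
        push Not at hadj'
        exact hadj' ha
      · left; exact ⟨hpe, ha⟩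
  clear_value p b
  by_cases hbad : ∃ j k, k + 1 < n j ∧ ¬ (p j k ≠ p j (k+1) ∧ ¬ Γ.Adj (p j k) (p j (k+1)))
  swap
  · push Not at hbad
    refine ⟨p, fun j k hk => ?_, fun j k k' h h' => (h2' j k k' h h').1,
      fun j j' k k' h h' h'' => (h3' j j' k k' h h' h'').1⟩
    rcases h1' j k hk with h | h
    · exact h
    · exact ⟨fun h => (hbad j k hk |> fun g => by tauto), by have := hbad j k hk; tauto⟩
  obtain ⟨j, k, hk, hbad⟩ := hbad
  obtain ⟨hbk, hAk, hAk1⟩ := (h1' j k hk).resolve_left hbad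
  -- location of the members of A
  have hA3 : ∀ j' l, j' ≠ j → l < n j' → p j' l ∈ St Γ v := by
    intro j' l hj hl
    by_contra hA
    have e1 := (h3' j' j l k hj hl (by omega)).2
    have e2 := (h3' j' j l (k+1) hj hl hk).2
    apply hbk
    have e1 := e1.resolve_right (by tauto)
    have e2 := e2.resolve_right (by tauto)
    rw [← e1, ← e2]
  have hAlo : ∀ l, l + 1 < k → p j l ∈ St Γ v := by
    intro l hl
    by_contra hA
    have e1 := (h2' j l k hl (by omega)).2.resolve_right (by tauto)
    have e2 := (h2' j l (k+1) (by omega) hk).2.resolve_right (by tauto)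
    exact hbk (by rw [← e1, ← e2])
  have hAhi : ∀ l, k + 2 < l → l < n j → p j l ∈ St Γ v := by
    intro l hl hl'
    by_contra hA
    have e1 := (h2' j k l (by omega) hl').2.resolve_right (by tauto)
    have e2 := (h2' j (k+1) l (by omega) hl').2.resolve_right (by tauto)
    exact hbk (by rw [e1, e2])
  have nadj : ∀ w, w ∉ St Γ v → v ≠ w ∧ ¬ Γ.Adj v w := by
    intro w hw
    refine ⟨fun h => hw (Or.inl h.symm), fun h => hw (Or.inr h)⟩
  have hv3 : ∀ j' l, j' ≠ j → l < n j' → p j' l ≠ v := by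
    intro j' l hj hl h
    have := (h3' j' j l k hj hl (by omega)).1
    rw [h] at this
    exact (nadj _ hAk).2 this
  have hvlo : ∀ l, l + 1 < k → p j l ≠ v := by
    intro l hl h
    have := (h2' j l k hl (by omega)).1
    rw [h] at this
    exact (nadj _ hAk).2 this
  have hvhi : ∀ l, k + 2 < l → l < n j → p j l ≠ v := by
    intro l hl hl' h
    have := (h2' j k l (by omega) hl').1.symm
    rw [h] at this
    exact (nadj _ hAk).2 this
  have hvm1 : ∀ l, l + 1 = k → p j l ≠ v := by
    intro l hl h
    have := (h2' j l (k+1) (by omega) hk).1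
    rw [h] at this
    exact (nadj _ hAk1).2 this
  have hvm2 : ∀ l, l = k + 2 → l < n j → p j l ≠ v := by
    intro l hl hl' h
    have := (h2' j k l (by omega) hl').1.symm
    rw [h] at this
    exact (nadj _ hAk).2 this
  have stadj : ∀ w, w ∈ St Γ v → w ≠ v → Γ.Adj v w := by
    intro w hw hne
    exact hw.resolve_left hne
  by_cases hthree : ∃ m, m + 2 < n j ∧ (m = k ∨ m + 1 = k) ∧ p j m ∉ St Γ v ∧ p j (m+2) ∉ St Γ v
  · obtain ⟨m, hm, hmk, hm1, hm2⟩ := hthree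
    have hmid : p j (m+1) ∉ St Γ v := by rcases hmk with rfl | rfl <;> assumption
    have hbm : b j m = b j (m+2) := (h2' j m (m+2) (by omega) hm).2.resolve_right (by tauto)
    have hother : ∀ l, l < n j → l ≠ m → l ≠ m + 1 → l ≠ m + 2 → p j l ∈ St Γ v ∧ p j l ≠ v := by
      intro l hl a1 a2 a3
      have hbb : b j m ≠ b j (m+1) := by
        rcases hmk with rfl | rfl
        · exact hbk
        · rw [hbm]; exact fun h => hbk h.symm
      constructor
      · by_contra hA
        rcases lt_or_gt_of_ne a1 with h | h
        · have e2 := (h2' j l (m+1) (by omega) (by omega)).2.resolve_right (by tauto)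
          have e3 := (h2' j l (m+2) (by omega) (by omega)).2.resolve_right (by tauto)
          rw [← hbm] at e3
          exact hbb (by rw [← e2, ← e3])
        · have e2 := (h2' j (m+1) l (by omega) (by omega)).2.resolve_right (by tauto)
          have e3 := (h2' j m l (by omega) (by omega)).2.resolve_right (by tauto)
          exact hbb (by rw [e2, e3])
      · rcases lt_trichotomy (l+1) k with h | h | h
        · exact hvlo l h
        · exact hvm1 l h
        · rcases lt_trichotomy (k+2) l with h' | h' | h'
          · exact hvhi l h' hl
          · exact hvm2 l h'.symm hl
          · omega
    refine ⟨fun j' l => if j' = j ∧ l = m + 1 then v else p j' l, ?_, ?_, ?_⟩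
    · intro j' l hl
      dsimp only
      by_cases hj : j' = j
      · subst hj
        by_cases c1 : l = m + 1
        · subst c1
          rw [if_pos ⟨rfl, rfl⟩, if_neg (by omega)]
          exact nadj _ hm2
        · by_cases c2 : l = m
          · subst c2
            rw [if_neg (by omega), if_pos ⟨rfl, rfl⟩]
            have := nadj _ hm1
            exact ⟨this.1.symm, fun h => this.2 h.symm⟩
          · rw [if_neg (by tauto), if_neg (by omega)]
            rcases h1' j' l hl with h | ⟨_, h, h'⟩
            · exact h
            · exfalso
              by_cases c3 : l = m + 2
              · exact h' (hother (l+1) hl (by omega) (by omega) (by omega)).1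
              · exact h (hother l (by omega) c2 c1 c3).1
      · rw [if_neg (by tauto), if_neg (by tauto)]
        exact (h1' j' l hl).resolve_right (fun h => h.2.1 (hA3 _ _ hj (by omega)))
    · intro j' l l' hl hl'
      dsimp only
      by_cases hj : j' = j
      · subst hj
        by_cases c1 : l = m + 1
        · subst c1
          rw [if_pos ⟨rfl, rfl⟩, if_neg (by omega)]
          have := hother l' hl' (by omega) (by omega) (by omega)
          exact stadj _ this.1 this.2
        · by_cases c2 : l' = m + 1
          · subst c2
            rw [if_neg (by tauto), if_pos ⟨rfl, rfl⟩]
            have := hother l (by omega) (by omega) (by omega) (by omega)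
            exact (stadj _ this.1 this.2).symm
          · rw [if_neg (by tauto), if_neg (by tauto)]
            exact (h2' j' l l' hl hl').1
      · rw [if_neg (by tauto), if_neg (by tauto)]
        exact (h2' j' l l' hl hl').1
    · intro j1 j2 l l' hj hl hl'
      dsimp only
      split_ifs with c1 c2 c2
      · exact absurd (c1.1.trans c2.1.symm) hj
      · have : j2 ≠ j := fun h => hj (c1.1.trans h.symm)
        exact stadj _ (hA3 _ _ this hl') (hv3 _ _ this hl')
      · have : j1 ≠ j := fun h => hj (h.trans c2.1.symm)
        exact (stadj _ (hA3 _ _ this hl) (hv3 _ _ this hl)).symm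
      · exact (h3' _ _ _ _ hj hl hl').1
  · push Not at hthree
    have hother : ∀ l, l < n j → l ≠ k → l ≠ k + 1 → p j l ∈ St Γ v ∧ p j l ≠ v := by
      intro l hl a1 a2
      rcases lt_trichotomy (l+1) k with h | h | h
      · exact ⟨hAlo l h, hvlo l h⟩
      · refine ⟨?_, hvm1 l h⟩
        by_contra hA
        have := hthree l (by omega) (Or.inr h) hA
        have e : l + 2 = k + 1 := by omega
        rw [e] at this
        exact hAk1 this
      · rcases lt_trichotomy (k+2) l with h' | h' | h'
        · exact ⟨hAhi l h' hl, hvhi l h' hl⟩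
        · refine ⟨?_, hvm2 l h'.symm hl⟩
          have := hthree k (by omega) (Or.inl rfl) hAk
          rwa [h'] at this
        · omega
    have hlast : k + 2 < n j → Γ.Adj (p j k) (p j (k+1)) := by
      intro h
      by_contra hna
      have he : p j k = p j (k+1) := by by_contra hc; exact hbad ⟨hc, hna⟩
      have e1 := (h2' j k (k+2) (by omega) h).1
      have e2 := h1' j (k+1) h
      have e3 := (hother (k+2) h (by omega) (by omega)).1
      rcases e2 with e2 | e2
      · rw [he] at e1; exact e2.2 e1
      · exact e2.2.2 e3
    refine ⟨fun j' l => if j' = j then (if l ≤ k then p j l else if l = k + 1 then v else p j (l-1)) else p j' l,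
      ?_, ?_, ?_⟩
    · intro j' l hl
      dsimp only
      by_cases hj : j' = j
      · subst hj
        rw [if_pos rfl, if_pos rfl]
        rcases lt_trichotomy l k with c | c | c
        · rw [if_pos (by omega), if_pos (by omega)]
          exact (h1' j' l hl).resolve_right (fun h => h.2.1 (hother l (by omega) (by omega) (by omega)).1)
        · subst c
          rw [if_pos (by omega), if_neg (by omega), if_pos rfl]
          have := nadj _ hAk
          exact ⟨this.1.symm, fun h => this.2 h.symm⟩
        · by_cases c2 : l = k + 1
          · subst c2
            rw [if_neg (by omega), if_pos rfl, if_neg (by omega), if_neg (by omega)]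
            exact nadj _ hAk1
          · rw [if_neg (by omega), if_neg (by omega), if_neg (by omega), if_neg (by omega)]
            obtain ⟨l', rfl⟩ : ∃ l', l = l' + 1 := ⟨l - 1, by omega⟩
            simp only [Nat.add_sub_cancel]
            exact (h1' j' l' (by omega)).resolve_right
              (fun h => h.2.2 (hother (l'+1) (by omega) (by omega) (by omega)).1)
      · rw [if_neg hj, if_neg hj]
        exact (h1' j' l hl).resolve_right (fun h => h.2.1 (hA3 _ _ hj (by omega)))
    · intro j' l l' hl hl'
      dsimp only
      by_cases hj : j' = j
      · subst hj
        rw [if_pos rfl, if_pos rfl]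
        by_cases c1 : l' ≤ k
        · rw [if_pos (by omega), if_pos (by omega)]
          exact (h2' _ _ _ hl hl').1
        · by_cases c2 : l' = k + 1
          · rw [if_pos (by omega), if_neg c1, if_pos c2]
            have := hother l (by omega) (by omega) (by omega)
            exact (stadj _ this.1 this.2).symm
          · by_cases c3 : l ≤ k
            · rw [if_pos c3, if_neg c1, if_neg c2]
              by_cases c4 : l = k ∧ l' = k + 2
              · obtain ⟨rfl, rfl⟩ := c4
                exact hlast hl'
              · exact (h2' _ _ _ (by omega) (by omega)).1
            · by_cases c4 : l = k + 1
              · rw [if_neg c3, if_pos c4, if_neg c1, if_neg c2]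
                have := hother (l'-1) (by omega) (by omega) (by omega)
                exact stadj _ this.1 this.2
              · rw [if_neg c3, if_neg c4, if_neg c1, if_neg c2]
                exact (h2' _ _ _ (by omega) (by omega)).1
      · rw [if_neg hj, if_neg hj]
        exact (h2' _ _ _ hl hl').1
    · have key : ∀ j2 l l', j2 ≠ j → l < n j → l' < n j2 →
          Γ.Adj (if l ≤ k then p j l else if l = k + 1 then v else p j (l-1)) (p j2 l') := by
        intro j2 l l' hj hl hl'
        split_ifs
        · exact (h3' _ _ _ _ hj.symm hl hl').1
        · exact stadj _ (hA3 _ _ hj hl') (hv3 _ _ hj hl')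
        · exact (h3' _ _ _ _ hj.symm (by omega) hl').1
      intro j1 j2 l l' hj hl hl'
      dsimp only
      by_cases c1 : j1 = j
      · subst c1
        rw [if_pos rfl, if_neg hj.symm]
        exact key _ _ _ hj.symm hl hl'
      · rw [if_neg c1]
        by_cases c2 : j2 = j
        · subst c2
          rw [if_pos rfl]
          exact (key _ _ _ hj hl' hl).symm
        · rw [if_neg c2]
          exact (h3' _ _ _ _ hj hl hl').1

end double
end RA

namespace RA
open Classical
set_option linter.unusedSectionVars false
set_option linter.unusedVariables false

section theta
variable {W : Type} (Γ : SimpleGraph W) (v : W)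

/-- lift of a vertex to a copy in the double -/
noncomputable def dl (w : W) (s : Bool) : DV Γ v :=
  if h : w ∈ St Γ v then ⟨(w, false), by simp⟩ else ⟨(w, s), fun _ => h⟩

noncomputable def dt : DV Γ v := ⟨(v, false), by simp⟩

lemma dl_fst (w : W) (s : Bool) : (dl Γ v w s).1.1 = w := by
  unfold dl; split_ifs <;> rfl

lemma dl_snd (w : W) (s : Bool) (h : w ∉ St Γ v) : (dl Γ v w s).1.2 = s := by
  unfold dl; rw [dif_neg h]

lemma dl_St (w : W) (s : Bool) (h : w ∈ St Γ v) : dl Γ v w s = dl Γ v w false := by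
  unfold dl; rw [dif_pos h, dif_pos h]

lemma dl_self (p : DV Γ v) : dl Γ v p.1.1 p.1.2 = p := by
  unfold dl
  split_ifs with h
  · rcases p with ⟨⟨w, s⟩, hp⟩
    cases s
    · rfl
    · exact absurd h (hp rfl)
  · rfl

lemma dl_adj {w w' : W} (h : Γ.Adj w w') (s : Bool) : (Dbl Γ v).Adj (dl Γ v w s) (dl Γ v w' s) := by
  refine ⟨by rw [dl_fst, dl_fst]; exact h, ?_⟩
  rw [dl_fst, dl_fst]
  by_cases h1 : w ∈ St Γ v
  · simp [h1]
  by_cases h2 : w' ∈ St Γ v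
  · simp [h2]
  left
  rw [dl_snd _ _ _ _ h1, dl_snd _ _ _ _ h2]

lemma dt_adj {w : W} (h : Γ.Adj v w) : (Dbl Γ v).Adj (dt Γ v) (dl Γ v w false) := by
  refine ⟨by rw [dl_fst]; exact h, Or.inr (Or.inl ?_)⟩
  exact Or.inl rfl

noncomputable def thW (w : W) : Equiv.Perm (RAAG (Dbl Γ v) × Bool) where
  toFun z := (gen _ (dl Γ v w z.2) * z.1, z.2)
  invFun z := ((gen _ (dl Γ v w z.2))⁻¹ * z.1, z.2)
  left_inv z := by simp
  right_inv z := by simp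

noncomputable def thV : Equiv.Perm (RAAG (Dbl Γ v) × Bool) where
  toFun z := if z.2 then (z.1, false) else (gen _ (dt Γ v) * z.1, true)
  invFun z := if z.2 then ((gen _ (dt Γ v))⁻¹ * z.1, false) else (z.1, true)
  left_inv := by rintro ⟨z, (_ | _)⟩ <;> simp
  right_inv := by rintro ⟨z, (_ | _)⟩ <;> simp

noncomputable def th0 (w : W) : Equiv.Perm (RAAG (Dbl Γ v) × Bool) :=
  if w = v then thV Γ v else thW Γ v w

lemma th0_comm_v {w : W} (h : Γ.Adj v w) : Commute (thV Γ v) (thW Γ v w) := by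
  have hw : w ∈ St Γ v := Or.inr h
  have hc := (gen_comm (dt_adj Γ v h)).eq
  ext1 ⟨z, s⟩
  cases s
  · simp [thV, thW, Equiv.Perm.mul_apply, dl_St Γ v w true hw, ← mul_assoc, hc]
  · simp [thV, thW, Equiv.Perm.mul_apply, dl_St Γ v w true hw]

noncomputable def Th : RAAG Γ →* Equiv.Perm (RAAG (Dbl Γ v) × Bool) :=
  lft (th0 Γ v) (by
    intro a b h
    unfold th0
    split_ifs with h1 h2 h2
    · exact Commute.refl _
    · subst h1; exact th0_comm_v Γ a h
    · subst h2; exact (th0_comm_v Γ b h.symm).symm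
    · ext1 ⟨z, s⟩
      have hc := (gen_comm (dl_adj Γ v h s)).eq
      simp [thW, Equiv.Perm.mul_apply, ← mul_assoc, hc])

lemma Th_v (z : RAAG (Dbl Γ v) × Bool) :
    Th Γ v (gen Γ v) z = if z.2 then (z.1, false) else (gen _ (dt Γ v) * z.1, true) := by
  simp [Th, th0, thV]

lemma Th_v_inv (z : RAAG (Dbl Γ v) × Bool) :
    Th Γ v (gen Γ v)⁻¹ z = if z.2 then ((gen _ (dt Γ v))⁻¹ * z.1, false) else (z.1, true) := by
  rw [map_inv]
  simp only [Th, th0, lft_gen, if_pos]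
  rfl

lemma Th_w {w : W} (h : w ≠ v) (z : RAAG (Dbl Γ v) × Bool) :
    Th Γ v (gen Γ w) z = (gen _ (dl Γ v w z.2) * z.1, z.2) := by
  simp [Th, th0, thW, h]

lemma Th_w_inv {w : W} (h : w ≠ v) (z : RAAG (Dbl Γ v) × Bool) :
    Th Γ v (gen Γ w)⁻¹ z = ((gen _ (dl Γ v w z.2))⁻¹ * z.1, z.2) := by
  rw [map_inv]
  simp only [Th, th0, lft_gen, if_neg h]
  rfl

/-- the projection of the double group -/
noncomputable def dpi : RAAG (Dbl Γ v) →* RAAG Γ :=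
  lft (fun p => if p.1.1 = v then gen Γ v ^ 2 else
    if p.1.2 then gen Γ v * gen Γ p.1.1 * (gen Γ v)⁻¹ else gen Γ p.1.1) (by
    have key : ∀ a b : DV Γ v, (Dbl Γ v).Adj a b → b.1.1 ≠ v → b.1.1 ∈ St Γ v →
        a.1.1 ≠ v → Commute (if a.1.2 then gen Γ v * gen Γ a.1.1 * (gen Γ v)⁻¹ else gen Γ a.1.1)
         (if b.1.2 then gen Γ v * gen Γ b.1.1 * (gen Γ v)⁻¹ else gen Γ b.1.1) := by
      intro a b h hb hb' ha
      have hb2 : b.1.2 = false := by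
        by_contra hc
        exact b.2 (by simpa using hc) hb'
      have h1 := gen_comm h.1
      have h2 : Commute (gen Γ v) (gen Γ b.1.1) := gen_comm (hb'.resolve_left hb)
      rw [hb2]
      simp only [Bool.false_eq_true, if_false]
      split_ifs
      · exact (h2.mul_left h1).mul_left h2.inv_left
      · exact h1
    have key2 : ∀ b : DV Γ v, Γ.Adj v b.1.1 →
        Commute (gen Γ v ^ 2)
         (if b.1.2 then gen Γ v * gen Γ b.1.1 * (gen Γ v)⁻¹ else gen Γ b.1.1) := by
      intro b h
      have hb2 : b.1.2 = false := by
        by_contra hc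
        exact b.2 (by simpa using hc) (Or.inr h)
      rw [hb2]
      simp only [Bool.false_eq_true, if_false]
      exact (gen_comm h).pow_left 2
    intro a b h
    by_cases ha : a.1.1 = v
    · rw [if_pos ha]
      have h1 := h.1
      rw [ha] at h1
      rw [if_neg h1.ne']
      exact key2 b h1
    · rw [if_neg ha]
      by_cases hb : b.1.1 = v
      · rw [if_pos hb]
        have h1 := h.1.symm
        rw [hb] at h1
        exact (key2 a h1).symm
      · rw [if_neg hb]
        by_cases hbs : b.1.1 ∈ St Γ v
        · exact key a b h hb hbs ha
        · by_cases has : a.1.1 ∈ St Γ v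
          · exact (key b a h.symm ha has hb).symm
          · have he : a.1.2 = b.1.2 := by rcases h.2 with h | h | h <;> tauto
            rw [he]
            have h1 := gen_comm h.1
            split_ifs
            · exact (Commute.conj_iff _).2 h1
            · exact h1)

noncomputable def dP (z : RAAG (Dbl Γ v) × Bool) : RAAG Γ :=
  (if z.2 then (gen Γ v)⁻¹ else 1) * dpi Γ v z.1

lemma dP_equi (x : RAAG Γ) : ∀ z, dP Γ v (Th Γ v x z) = x * dP Γ v z := by
  have hx : x ∈ Subgroup.closure (Set.range (gen Γ)) := by rw [closure_gen]; trivial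
  have hdt : dpi Γ v (gen _ (dt Γ v)) = gen Γ v ^ 2 := by simp [dpi, dt]
  induction hx using Subgroup.closure_induction with
  | mem x hx =>
    obtain ⟨w, rfl⟩ := hx
    rintro ⟨g, s⟩
    by_cases hw : w = v
    · subst hw
      rw [Th_v]
      cases s
      · simp [dP, hdt, pow_two, mul_assoc]
      · simp [dP]
    · rw [Th_w _ _ hw]
      have h1 : dpi Γ v (gen _ (dl Γ v w s)) = if s then gen Γ v * gen Γ w * (gen Γ v)⁻¹ else gen Γ w := by
        simp only [dpi, lft_gen]
        rw [if_neg (by rw [dl_fst]; exact hw), dl_fst]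
        by_cases hS : w ∈ St Γ v
        · have : (dl Γ v w s).1.2 = false := by unfold dl; rw [dif_pos hS]
          rw [this]
          have h2 : Commute (gen Γ v) (gen Γ w) := gen_comm (hS.resolve_left hw)
          cases s
          · rfl
          · simp [h2.eq]
        · rw [dl_snd _ _ _ _ hS]
      simp only [dP, map_mul, h1]
      cases s
      · simp
      · simp [mul_assoc]
  | one => intro z; simp
  | mul x y _ _ h1 h2 => intro z; rw [map_mul, Equiv.Perm.mul_apply, h1, h2, mul_assoc]
  | inv x _ h1 =>
    intro z
    have := h1 (Th Γ v x⁻¹ z)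
    rw [map_inv, ← Equiv.Perm.mul_apply, mul_inv_cancel, Equiv.Perm.one_apply] at this
    rw [map_inv, this]; simp

/-- evaluation of a word -/
noncomputable def ev {W : Type} (Γ : SimpleGraph W) : List (W × Bool) → RAAG Γ
  | [] => 1
  | (w, e) :: l => (if e then gen Γ w else (gen Γ w)⁻¹) * ev Γ l

lemma Th_word (h : List (W × Bool)) : ∀ s' : Bool, ∃ (s : Bool) (l : List (DV Γ v × Bool)),
    l.length ≤ h.length ∧ (∀ e h', h = (v, e) :: h' → s' = !e → l.length < h.length) ∧
    ∀ g, Th Γ v (ev Γ h) (g, s) = (ev _ l * g, s') := by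
  induction h with
  | nil => intro s'; exact ⟨s', [], le_rfl, by simp, by intro g; simp [ev]⟩
  | cons a h ih =>
    obtain ⟨w, e⟩ := a
    intro s'
    by_cases hw : w = v
    · subst hw
      obtain ⟨s, l, hl, -, hT⟩ := ih (!s')
      by_cases hse : s' = !e
      · refine ⟨s, l, by simp; omega, by intros; simp; omega, ?_⟩
        intro g
        rw [ev, map_mul, Equiv.Perm.mul_apply, hT]
        subst hse
        cases e
        · simp [-map_inv, Th_v_inv]
        · simp [Th_v]
      · refine ⟨s, (dt Γ w, e) :: l, by simpa using hl, ?_, ?_⟩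
        · intro e' h' hh hs
          simp at hh
          rw [hh.1] at hse
          exact absurd hs hse
        · intro g
          have hse : s' = e := by cases s' <;> cases e <;> simp_all
          rw [ev, map_mul, Equiv.Perm.mul_apply, hT]
          subst hse
          cases s'
          · simp [-map_inv, Th_v_inv, ev, mul_assoc]
          · simp [Th_v, ev, mul_assoc]
    · obtain ⟨s, l, hl, -, hT⟩ := ih s'
      refine ⟨s, (dl Γ v w s', e) :: l, by simpa using hl, ?_, ?_⟩
      · intro e' h' hh
        simp at hh
        exact absurd hh.1.1 hw
      · intro g
        rw [ev, map_mul, Equiv.Perm.mul_apply, hT]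
        cases e
        · simp [-map_inv, Th_w_inv _ _ hw, ev, mul_assoc]
        · simp [Th_w _ _ hw, ev, mul_assoc]

/-- conjugate of a generator -/
noncomputable def xx {W : Type} (Γ : SimpleGraph W) (h : List (W × Bool)) (a : W) : RAAG Γ :=
  ev Γ h * gen Γ a * (ev Γ h)⁻¹

lemma Th_xx (h : List (W × Bool)) (a : W) (s' : Bool) :
    ∃ (l : List (DV Γ v × Bool)) (a' : DV Γ v) (e : ℕ),
    l.length ≤ h.length ∧ (∀ e h', h = (v, e) :: h' → s' = !e → l.length < h.length) ∧ 0 < e ∧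
    (∀ g, Th Γ v (xx Γ h a ^ e) (g, s') = (xx _ l a' * g, s')) := by
  obtain ⟨s, l, h1, h2, h3⟩ := Th_word Γ v h s'
  have h4 : ∀ g, Th Γ v (ev Γ h)⁻¹ (g, s') = ((ev _ l)⁻¹ * g, s) := by
    intro g
    rw [map_inv, Equiv.Perm.inv_eq_iff_eq, h3]; simp
  have : ∃ (a' : DV Γ v) (e : ℕ), 0 < e ∧ ∀ g, Th Γ v (gen Γ a ^ e) (g, s) = (gen _ a' * g, s) := by
    by_cases ha : a = v
    · subst ha
      refine ⟨dt Γ a, 2, by norm_num, ?_⟩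
      intro g
      rw [pow_two, map_mul, Equiv.Perm.mul_apply, Th_v, Th_v]
      cases s <;> simp
    · refine ⟨dl Γ v a s, 1, by norm_num, ?_⟩
      intro g
      rw [pow_one, Th_w _ _ ha]
  obtain ⟨a', e, he, h5⟩ := this
  refine ⟨l, a', e, h1, h2, he, ?_⟩
  intro g
  unfold xx
  rw [conj_pow, map_mul, map_mul, Equiv.Perm.mul_apply, Equiv.Perm.mul_apply, h4, h5, h3]
  simp [mul_assoc]

lemma Th_pi {x : RAAG Γ} {y : RAAG (Dbl Γ v)} {s : Bool} (h : ∀ g, Th Γ v x (g, s) = (y * g, s)) :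
    ∃ k : RAAG Γ, dpi Γ v y = k * x * k⁻¹ := by
  have h1 := dP_equi Γ v x (1, s)
  rw [h] at h1
  simp only [dP, mul_one, map_one] at h1
  refine ⟨(if s then (gen Γ v)⁻¹ else 1)⁻¹, ?_⟩
  rw [mul_assoc, inv_inv, ← h1]; group

end theta

/-- commuting and no common powers -/
def adjP {G : Type} [Group G] (x y : G) : Prop :=
  Commute x y ∧ ∀ p q : ℕ, 0 < p → 0 < q → x ^ p ≠ y ^ q

/-- no powers commute -/
def nadjP {G : Type} [Group G] (x y : G) : Prop :=
  ∀ p q : ℕ, 0 < p → 0 < q → ¬ Commute (x ^ p) (y ^ q)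

theorem doubling {ι : Type} [Fintype ι] (n : ι → ℕ) (N : ℕ) : ∀ {W : Type} [Finite W] (Γ : SimpleGraph W)
    (h : ι → ℕ → List (W × Bool)) (a : ι → ℕ → W),
    (∑ j, ∑ k ∈ Finset.range (n j), (h j k).length) = N →
    Pat n adjP nadjP (fun j k => xx Γ (h j k) (a j k)) → ∃ f, GPat n Γ f := by
  induction N using Nat.strong_induction_on with
  | _ N IH =>
  intro W _ Γ h a hN hp
  by_cases hall : ∀ j k, k < n j → h j k = []
  · refine ⟨a, hp.imp ?_ ?_⟩
    · intro j k j' k' hk hk' hx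
      rw [hall _ _ hk, hall _ _ hk'] at hx
      simp only [xx, ev] at hx
      have h1 := hx.1
      simp at h1
      have h2 := hx.2 1 1 one_pos one_pos
      simp at h2
      exact (gen_commute_iff.1 h1).resolve_left (fun h => h2 (by rw [h]))
    · intro j k j' k' hk hk' hx
      rw [hall _ _ hk, hall _ _ hk'] at hx
      simp only [xx, ev] at hx
      have h1 := hx 1 1 one_pos one_pos
      simp only [pow_one, one_mul, inv_one, mul_one, gen_commute_iff] at h1
      tauto
  · push Not at hall
    obtain ⟨j0, k0, hk0, hne⟩ := hall
    obtain ⟨⟨v, ε⟩, h', hh'⟩ := List.exists_cons_of_ne_nil hne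
    choose l a' e hl1 hl2 he hT using fun j k => Th_xx Γ v (h j k) (a j k) (!ε)
    refine (IH (∑ j, ∑ k ∈ Finset.range (n j), (l j k).length) ?_ (Dbl Γ v) l a' rfl ?_).elim
      (fun f hf => dbl_comb hf)
    · rw [← hN]
      apply Finset.sum_lt_sum
      · intro j _
        exact Finset.sum_le_sum (fun k _ => hl1 j k)
      · refine ⟨j0, Finset.mem_univ _, ?_⟩
        apply Finset.sum_lt_sum (fun k _ => hl1 j0 k)
        exact ⟨k0, Finset.mem_range.2 hk0, hl2 j0 k0 ε h' hh' rfl⟩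
    · have hpi := fun j k => Th_pi Γ v (hT j k)
      have key : ∀ j k, ∃ κ : RAAG Γ, (κ = if (!ε) then gen Γ v else 1) ∧
          dpi Γ v (xx _ (l j k) (a' j k)) = κ * (xx Γ (h j k) (a j k)) ^ e j k * κ⁻¹ := by
        intro j k
        have h1 := dP_equi Γ v (xx Γ (h j k) (a j k) ^ e j k) (1, !ε)
        rw [hT] at h1
        simp only [dP, mul_one, map_one] at h1
        refine ⟨_, rfl, ?_⟩
        have h2 : (if (!ε) = true then gen Γ v else 1) = (if (!ε) = true then (gen Γ v)⁻¹ else 1)⁻¹ := by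
          cases ε <;> simp
        rw [h2, mul_assoc, inv_inv, ← h1]; group
      apply hp.imp
      · intro j k j' k' hk hk' hx
        constructor
        · have h1 := (hx.1.pow_pow (e j k) (e j' k')).map (Th Γ v)
          have h2 := congrArg (fun σ : Equiv.Perm _ => σ (1, !ε)) h1.eq
          simp only [Equiv.Perm.mul_apply] at h2
          rw [hT, hT, hT, hT] at h2
          have := (Prod.ext_iff.1 h2).1
          simpa [commute_iff_eq] using this
        · intro p q hp hq heq
          have h1 := congrArg (dpi Γ v) heq
          obtain ⟨κ, hκ, h2⟩ := key j k
          obtain ⟨κ', hκ', h3⟩ := key j' k'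
          rw [← hκ] at hκ'
          subst hκ'
          rw [map_pow, map_pow, h2, h3, conj_pow, conj_pow, ← pow_mul, ← pow_mul] at h1
          exact hx.2 _ _ (Nat.mul_pos (he _ _) hp) (Nat.mul_pos (he _ _) hq)
            (mul_left_cancel (mul_right_cancel h1))
      · intro j k j' k' hk hk' hx p q hp hq heq
        have h1 := heq.map (dpi Γ v)
        obtain ⟨κ, hκ, h2⟩ := key j k
        obtain ⟨κ', hκ', h3⟩ := key j' k'
        rw [← hκ] at hκ'
        subst hκ'
        rw [map_pow, map_pow, h2, h3, conj_pow, conj_pow, ← pow_mul, ← pow_mul, Commute.conj_iff] at h1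
        exact hx _ _ (Nat.mul_pos (he _ _) hp) (Nat.mul_pos (he _ _) hq) h1

lemma exists_ev {W : Type} {Γ : SimpleGraph W} (x : RAAG Γ) : ∃ l, ev Γ l = x := by
  have hx : x ∈ Subgroup.closure (Set.range (gen Γ)) := by rw [closure_gen]; trivial
  induction hx using Subgroup.closure_induction_left with
  | one => exact ⟨[], rfl⟩
  | mul_left x hx y _ h =>
    obtain ⟨w, rfl⟩ := hx
    obtain ⟨l, rfl⟩ := h
    exact ⟨(w, true) :: l, by simp [ev]⟩
  | inv_mul_cancel x hx y _ h =>
    obtain ⟨w, rfl⟩ := hx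
    obtain ⟨l, rfl⟩ := h
    exact ⟨(w, false) :: l, by simp [ev]⟩

/-- conjugates of generators -/
def IsVtx {W : Type} (Γ : SimpleGraph W) (x : RAAG Γ) : Prop := ∃ h v, x = h * gen Γ v * h⁻¹

theorem doubling' {ι W : Type} [Finite ι] [Finite W] (n : ι → ℕ) (hpos : ∀ j, 0 < n j) (Γ : SimpleGraph W)
    (x : ι → ℕ → RAAG Γ) (hv : ∀ j k, k < n j → IsVtx Γ (x j k)) (hx : Pat n adjP nadjP x) :
    ∃ f, GPat n Γ f := by
  have := Fintype.ofFinite ι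
  have hv' : ∀ j k, ∃ (l : List (W × Bool)) (w : Option W), k < n j → ∃ v, w = some v ∧ x j k = xx Γ l v := by
    intro j k
    by_cases hk : k < n j
    · obtain ⟨h, v, e⟩ := hv j k hk
      obtain ⟨l, rfl⟩ := exists_ev h
      exact ⟨l, some v, fun _ => ⟨v, rfl, e⟩⟩
    · exact ⟨[], none, fun h => absurd h hk⟩
  by_cases hW : Nonempty W
  · obtain ⟨w0⟩ := hW
    choose l w hw using hv'
    refine doubling n _ Γ l (fun j k => (w j k).getD w0) rfl (hx.imp ?_ ?_)
    · intro j k j' k' hk hk' h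
      obtain ⟨v, e1, e2⟩ := hw j k hk
      obtain ⟨v', e1', e2'⟩ := hw j' k' hk'
      rw [e1, e1']
      simpa [← e2, ← e2'] using h
    · intro j k j' k' hk hk' h
      obtain ⟨v, e1, e2⟩ := hw j k hk
      obtain ⟨v', e1', e2'⟩ := hw j' k' hk'
      rw [e1, e1']
      simpa [← e2, ← e2'] using h
  · have hn : ∀ j, n j = 0 := by
      intro j
      by_contra h
      obtain ⟨_, v, _⟩ := hv j 0 (by omega)
      exact hW ⟨v⟩
    by_cases hι : Nonempty ι
    · obtain ⟨j⟩ := hι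
      have := hn j
      have := hpos j
      omega
    · exact ⟨fun j => absurd ⟨j⟩ hι, fun j => absurd ⟨j⟩ hι, fun j => absurd ⟨j⟩ hι, fun j => absurd ⟨j⟩ hι⟩

end RA

namespace RA
open Classical
set_option linter.unusedSectionVars false
set_option linter.unusedVariables false

section pre
variable {V : Type} {G : SimpleGraph V}

lemma exists_pred {r x : V} {k : ℕ} (hr : G.Reachable r x) (hd : G.dist r x = k + 1) :
    ∃ z, G.Adj z x ∧ G.dist r z = k ∧ G.Reachable r z := by
  obtain ⟨p, hp⟩ := hr.exists_walk_length_eq_dist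
  rw [hd] at hp
  have hnil : ¬ p.Nil := by
    intro h
    rw [← SimpleGraph.Walk.length_eq_zero_iff] at h; omega
  have hz := p.adj_penultimate hnil
  have hrz : G.Reachable r p.penultimate := hr.trans hz.symm.reachable
  refine ⟨p.penultimate, hz, ?_, hrz⟩
  have h1 := SimpleGraph.dist_le p.dropLast
  have h2 : p.dropLast.length = k := by
    rw [SimpleGraph.Walk.length_dropLast]; omega
  rcases hz.diff_dist_adj (u := r) with h | h | h <;> omega

end pre

section forest
variable {V : Type} [Finite V] {G : SimpleGraph V}

lemma exists_root (hG : G.IsAcyclic) (c : G.ConnectedComponent) :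
    ∃ r, G.connectedComponentMk r = c ∧ ∀ x y, G.Adj r x → G.Adj r y → x = y := by
  have := Fintype.ofFinite V
  have ht := hG.isTree_connectedComponent c
  rcases subsingleton_or_nontrivial c with h | h
  · obtain ⟨r, hr⟩ := c.exists_rep
    refine ⟨r, hr, ?_⟩
    intro x y hx hy
    exfalso
    have h1 : x ∈ c := by
      change G.connectedComponentMk x = c
      rw [← hr]; exact SimpleGraph.ConnectedComponent.eq.2 hx.symm.reachable
    have h2 : r ∈ c := hr
    have := h.elim ⟨x, h1⟩ ⟨r, h2⟩
    exact hx.ne (by simpa using (congrArg Subtype.val this).symm)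
  · obtain ⟨r, hr⟩ := ht.exists_vert_degree_one_of_nontrivial
    rw [SimpleGraph.degree_eq_one_iff_existsUnique_adj] at hr
    refine ⟨r.1, r.2, ?_⟩
    have hmem : ∀ x, G.Adj r.1 x → x ∈ c := by
      intro x hx
      have := r.2
      change G.connectedComponentMk x = c
      have h3 : G.connectedComponentMk r.1 = c := r.2
      rw [← h3]; exact SimpleGraph.ConnectedComponent.eq.2 hx.symm.reachable
    intro x y hx hy
    have h1 := hr.unique (y₁ := ⟨x, hmem x hx⟩) (y₂ := ⟨y, hmem y hy⟩) hx hy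
    exact congrArg Subtype.val h1

lemma unique_at_dist (h2 : ∀ v, (G.neighborSet v).ncard ≤ 2) {r : V}
    (hr : ∀ x y, G.Adj r x → G.Adj r y → x = y) (k : ℕ) :
    ∀ x y, G.Reachable r x → G.Reachable r y → G.dist r x = k → G.dist r y = k → x = y := by
  induction k with
  | zero =>
    intro x y hx hy dx dy
    rw [hx.dist_eq_zero_iff] at dx
    rw [hy.dist_eq_zero_iff] at dy
    rw [← dx, ← dy]
  | succ k ih =>
    intro x y hx hy dx dy
    obtain ⟨z, hz, dz, rz⟩ := exists_pred hx dx
    obtain ⟨z', hz', dz', rz'⟩ := exists_pred hy dy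
    have := ih z z' rz rz' dz dz'
    subst this
    cases k with
    | zero =>
      rw [rz.dist_eq_zero_iff] at dz
      subst dz
      exact hr _ _ hz hz'
    | succ k =>
      obtain ⟨u, hu, du, ru⟩ := exists_pred rz dz
      by_contra hne
      have hsub : ({u, x, y} : Set V) ⊆ G.neighborSet z := by
        rintro w (rfl | rfl | rfl)
        · exact hu.symm
        · exact hz
        · exact hz'
      have h3 := Set.ncard_le_ncard hsub (Set.toFinite _)
      have hux : u ≠ x := by rintro rfl; omega
      have huy : u ≠ y := by rintro rfl; omega
      have h4 : ({u, x, y} : Set V).ncard = 3 := by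
        rw [Set.ncard_eq_three]; exact ⟨u, x, y, hux, huy, hne, rfl⟩
      have := h2 z
      omega

theorem forest_paths (hG : IsLinearForest G) : ∃ (ι : Type) (_ : Finite ι) (n : ι → ℕ) (at' : ι → ℕ → V),
    (∀ j, 0 < n j) ∧ (∀ v, ∃ j k, k < n j ∧ at' j k = v) ∧
    (∀ j k j' k', k < n j → k' < n j' → at' j k = at' j' k' → j = j' ∧ k = k') ∧
    (∀ j k j' k', k < n j → k' < n j' →
      (G.Adj (at' j k) (at' j' k') ↔ j = j' ∧ (k + 1 = k' ∨ k' + 1 = k))) := by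
  have := Fintype.ofFinite V
  obtain ⟨hac, hdeg⟩ := hG
  choose r hr hr1 using exists_root hac
  set n : G.ConnectedComponent → ℕ := fun c => Finset.univ.sup
    (fun v => if G.connectedComponentMk v = c then G.dist (r c) v + 1 else 0) with hn
  have hreach : ∀ c v, G.connectedComponentMk v = c → G.Reachable (r c) v := by
    intro c v h
    rw [← SimpleGraph.ConnectedComponent.eq, hr, h]
  have hlt : ∀ c v, G.connectedComponentMk v = c → G.dist (r c) v < n c := by
    intro c v h
    have := Finset.le_sup (f := fun v => if G.connectedComponentMk v = c then G.dist (r c) v + 1 else 0)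
      (Finset.mem_univ v)
    rw [if_pos h] at this
    exact this
  have hdesc : ∀ c d k v, G.connectedComponentMk v = c → G.dist (r c) v = k + d →
      ∃ w, G.connectedComponentMk w = c ∧ G.dist (r c) w = k := by
    intro c d k
    induction d with
    | zero => intro v h h'; exact ⟨v, h, h'⟩
    | succ d ih =>
      intro v h h'
      obtain ⟨z, hz, dz, rz⟩ := exists_pred (hreach c v h) (h'.trans (add_assoc k d 1).symm)
      exact ih z (by rw [← h]; exact SimpleGraph.ConnectedComponent.eq.2 hz.reachable) dz
  have hex : ∀ c k, ∃ w, k < n c → G.connectedComponentMk w = c ∧ G.dist (r c) w = k := by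
    intro c k
    by_cases hk : k < n c
    · rw [hn] at hk
      dsimp only at hk
      rw [Finset.lt_sup_iff] at hk
      obtain ⟨v, -, hv⟩ := hk
      split_ifs at hv with h
      · obtain ⟨w, hw⟩ := hdesc c (G.dist (r c) v - k) k v h (by omega)
        exact ⟨w, fun _ => hw⟩
      · omega
    · exact ⟨r c, fun h => absurd h hk⟩
  choose at' hat using hex
  have huniq : ∀ c x y, G.connectedComponentMk x = c → G.connectedComponentMk y = c →
      G.dist (r c) x = G.dist (r c) y → x = y := by
    intro c x y hx hy h
    exact unique_at_dist hdeg (hr1 c) _ x y (hreach c x hx) (hreach c y hy) h rfl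
  refine ⟨G.ConnectedComponent, inferInstance, n, at', ?_, ?_, ?_, ?_⟩
  · intro c
    exact lt_of_le_of_lt (Nat.zero_le _) (hlt c (r c) (hr c))
  · intro v
    refine ⟨G.connectedComponentMk v, G.dist (r _) v, hlt _ v rfl, ?_⟩
    obtain ⟨h1, h2⟩ := hat _ _ (hlt _ v rfl)
    exact huniq _ _ _ h1 rfl h2
  · intro j k j' k' hk hk' h
    obtain ⟨h1, h2⟩ := hat j k hk
    obtain ⟨h1', h2'⟩ := hat j' k' hk'
    rw [h] at h1 h2
    have : j = j' := h1.symm.trans h1'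
    subst this
    exact ⟨rfl, h2.symm.trans h2'⟩
  · intro j k j' k' hk hk'
    obtain ⟨h1, h2⟩ := hat j k hk
    obtain ⟨h1', h2'⟩ := hat j' k' hk'
    have hback : ∀ k k', k < n j → k' < n j → k + 1 = k' → G.Adj (at' j k) (at' j k') := by
      intro k k' hk hk' he
      obtain ⟨h1, h2⟩ := hat j k hk
      obtain ⟨h1', h2'⟩ := hat j k' hk'
      obtain ⟨z, hz, dz, rz⟩ := exists_pred (hreach _ _ h1') (h2'.trans he.symm)
      have := huniq j (at' j k) z h1 (by rw [← hr j]; exact SimpleGraph.ConnectedComponent.eq.2 rz.symm)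
        (by rw [h2, dz])
      rw [this]; exact hz
    constructor
    · intro h
      have hj : j = j' := h1.symm.trans ((SimpleGraph.ConnectedComponent.eq.2 h.reachable).trans h1')
      subst hj
      refine ⟨rfl, ?_⟩
      have hne : k ≠ k' := by rintro rfl; exact h.ne rfl
      rcases h.diff_dist_adj (u := r j) with h | h | h <;> omega
    · rintro ⟨rfl, h | h⟩
      · exact hback _ _ hk hk' h
      · exact (hback _ _ hk' hk h).symm
end forest
end RA

namespace RA
open Classical
set_option linter.unusedSectionVars false
set_option linter.unusedVariables false

section vtx
variable {W : Type} {Γ : SimpleGraph W}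

lemma Sub_St_commute {v : W} {x : RAAG Γ} (hx : x ∈ Sub Γ (St Γ v)) : Commute x (gen Γ v) := by
  have h : Sub Γ (St Γ v) ≤ Subgroup.centralizer {gen Γ v} := by
    rw [Sub_le]
    intro u hu
    rw [Subgroup.mem_centralizer_singleton_iff]
    rcases hu with rfl | hu
    · rfl
    · exact (gen_comm hu).symm.eq
  have := h hx
  rw [Subgroup.mem_centralizer_singleton_iff] at this
  exact this

lemma vtx_commute_pow [Finite W] {x y : RAAG Γ} (hx : IsVtx Γ x) {p : ℕ} (hp : 0 < p)
    (h : Commute (x ^ p) y) : Commute x y := by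
  obtain ⟨k, v, rfl⟩ := hx
  rw [conj_pow] at h
  have h1 : Commute (gen Γ v ^ p) (k⁻¹ * y * k) := by
    rw [← Commute.conj_iff k]
    simpa [mul_assoc] using h
  have h2 := Sub_St_commute (mem_St_pow (x := k⁻¹ * y * k) (n := (p : ℤ)) (by exact_mod_cast hp.ne') (by
    rw [zpow_natCast]; exact h1.symm))
  rw [← Commute.conj_iff k⁻¹]
  simpa [mul_assoc] using h2.symm

lemma vtx_nadjP [Finite W] {x y : RAAG Γ} (hx : IsVtx Γ x) (hy : IsVtx Γ y) (h : ¬ Commute x y) :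
    nadjP x y := by
  intro p q hp hq hc
  exact h (vtx_commute_pow hy hq (vtx_commute_pow hx hp hc).symm).symm

lemma ex_conj (w : W) (h x : RAAG Γ) : ex Γ w (h * x * h⁻¹) = ex Γ w x := by
  rw [map_mul, map_mul, map_inv, mul_comm, inv_mul_cancel_left]

lemma vtx_adjP [Finite W] {x y : RAAG Γ} (hx : IsVtx Γ x) (hy : IsVtx Γ y) (h : Commute x y)
    (hne : x ≠ y) : adjP x y := by
  refine ⟨h, ?_⟩
  rintro p q hp hq he
  obtain ⟨k, v, rfl⟩ := hx
  obtain ⟨l, w, rfl⟩ := hy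
  apply hne
  have e1 := congrArg (ex Γ v) he
  rw [map_pow, map_pow, ex_conj, ex_conj, ex_self] at e1
  have hvw : w = v := by
    by_contra hc
    rw [ex_ne hc, one_pow] at e1
    have := congrArg Multiplicative.toAdd e1
    simp at this
    omega
  subst hvw
  rw [ex_self] at e1
  have hpq : p = q := by
    have := congrArg Multiplicative.toAdd e1
    simpa using this
  subst hpq
  rw [conj_pow, conj_pow] at he
  have h1 : Commute (l⁻¹ * k) (gen Γ w ^ (p : ℤ)) := by
    rw [commute_iff_eq, zpow_natCast]
    have : k * gen Γ w ^ p = l * gen Γ w ^ p * l⁻¹ * k := by rw [← he]; group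
    rw [mul_assoc, this]; group
  have h2 := (Sub_St_commute (mem_St_pow (by exact_mod_cast hp.ne') h1)).eq
  have h3 : k * gen Γ w = l * gen Γ w * l⁻¹ * k := by
    have : k * gen Γ w = l * (l⁻¹ * k * gen Γ w) := by group
    rw [this, h2]; group
  rw [h3]; group

/-- A basis of an irreducible parabolic. -/
def YY (P : Subgroup (RAAG Γ)) : Set (RAAG Γ) :=
  {x | ∃ h : Irr P, ∃ v ∈ h.choose_spec.choose, x = h.choose * gen Γ v * h.choose⁻¹}

lemma YY_spec {P : Subgroup (RAAG Γ)} (hP : Irr P) : ∃ h C, Conn Γ C ∧ P = cj h (Sub Γ C) ∧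
    YY P = {x | ∃ v ∈ C, x = h * gen Γ v * h⁻¹} := by
  refine ⟨hP.choose, hP.choose_spec.choose, hP.choose_spec.choose_spec.1, hP.choose_spec.choose_spec.2, ?_⟩
  ext x
  exact ⟨fun ⟨_, h⟩ => h, fun h => ⟨hP, h⟩⟩

lemma YY_vtx {P : Subgroup (RAAG Γ)} {x} (h : x ∈ YY P) : IsVtx Γ x := by
  obtain ⟨_, v, _, e⟩ := h; exact ⟨_, v, e⟩

lemma YY_ne_one {P : Subgroup (RAAG Γ)} {x} (h : x ∈ YY P) : x ≠ 1 := by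
  obtain ⟨k, v, rfl⟩ := YY_vtx h
  intro he
  have : gen Γ v = 1 := by
    have := congrArg (fun z => k⁻¹ * z * k) he
    simpa [mul_assoc] using this
  exact gen_ne_one v this

lemma YY_mem {P : Subgroup (RAAG Γ)} {x} (h : x ∈ YY P) : x ∈ P := by
  have hP : Irr P := h.1
  obtain ⟨k, C, hC, e1, e2⟩ := YY_spec hP
  rw [e2] at h
  obtain ⟨v, hv, rfl⟩ := h
  rw [e1]
  exact cj_conj_mem.2 (gen_mem hv)

lemma YY_nonempty {P : Subgroup (RAAG Γ)} (hP : Irr P) : (YY P).Nonempty := by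
  obtain ⟨k, C, hC, e1, e2⟩ := YY_spec hP
  obtain ⟨v, hv⟩ := hC.1
  rw [e2]; exact ⟨_, v, hv, rfl⟩

lemma YY_closure {P : Subgroup (RAAG Γ)} (hP : Irr P) {H : Subgroup (RAAG Γ)} (h : YY P ⊆ H) : P ≤ H := by
  obtain ⟨k, C, hC, e1, e2⟩ := YY_spec hP
  rw [e2] at h
  rw [e1, cj_le_iff, Sub_le]
  intro v hv
  rw [mem_cj]
  have := h ⟨v, hv, rfl⟩
  simpa [mul_assoc] using this

lemma YY_comm {P Q : Subgroup (RAAG Γ)} (hP : Irr P) (hQ : Irr Q)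
    (h : ∀ x ∈ YY P, ∀ y ∈ YY Q, Commute x y) : CommS P Q := by
  have h1 : ∀ x ∈ YY P, ∀ q ∈ Q, Commute x q := by
    intro x hx q hq
    have := YY_closure hQ (H := Subgroup.centralizer {x}) (by
      intro y hy
      rw [SetLike.mem_coe, Subgroup.mem_centralizer_singleton_iff]
      exact (h x hx y hy).symm.eq) hq
    rw [Subgroup.mem_centralizer_singleton_iff] at this
    exact (show Commute q x from this).symm
  intro p hp q hq
  have := YY_closure hP (H := Subgroup.centralizer {q}) (by
    intro y hy
    rw [SetLike.mem_coe, Subgroup.mem_centralizer_singleton_iff]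
    exact (h1 y hy q hq).eq) hp
  rw [Subgroup.mem_centralizer_singleton_iff] at this
  exact this

lemma YY_conn [Finite W] {P : Subgroup (RAAG Γ)} (hP : Irr P) {x y : RAAG Γ} (hx : x ∈ YY P) (hy : y ∈ YY P) :
    Relation.ReflTransGen (fun a b => a ∈ YY P ∧ b ∈ YY P ∧ ¬ Commute a b) x y := by
  obtain ⟨k, C, hC, e1, e2⟩ := YY_spec hP
  rw [e2] at hx hy ⊢
  obtain ⟨u, hu, rfl⟩ := hx
  obtain ⟨v, hv, rfl⟩ := hy
  have := hC.2 u hu v hv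
  induction this with
  | refl => exact .refl
  | tail _ h ih =>
    rename_i b c _
    by_cases hbc : b = c
    · subst hbc; exact ih h.1
    · refine (ih h.1).tail ⟨⟨_, h.1, rfl⟩, ⟨_, h.2.1, rfl⟩, ?_⟩
      rw [Commute.conj_iff, gen_commute_iff]
      rintro (h' | h')
      · exact hbc h'
      · exact h.2.2 h'

lemma abelian_irr [Finite W] {P : Subgroup (RAAG Γ)} (hP : Irr P) (h : ∀ p ∈ P, ∀ q ∈ P, Commute p q) {x}
    (hx : x ∈ YY P) : P = Subgroup.zpowers x := by
  have hsub : YY P ⊆ {x} := by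
    intro y hy
    have := YY_conn hP hx hy
    rcases this.cases_tail with h1 | ⟨z, _, hz⟩
    · exact h1.symm ▸ rfl
    · exact absurd (h _ (YY_mem hz.1) _ (YY_mem hz.2.1)) hz.2.2
  apply le_antisymm
  · apply YY_closure hP
    intro y hy
    rw [hsub hy]; exact Subgroup.mem_zpowers x
  · rw [Subgroup.zpowers_le]; exact YY_mem hx

lemma YY_disj [Finite W] {P Q : Subgroup (RAAG Γ)} (h : CommS P Q) (hne : P ≠ Q) {x y : RAAG Γ}
    (hx : x ∈ YY P) (hy : y ∈ YY Q) : x ≠ y := by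
  rintro rfl
  have hP : Irr P := hx.1
  have hQ : Irr Q := hy.1
  apply hne
  have aP := (irr_center hP).resolve_right (fun hc =>
    YY_ne_one hx (hc x (YY_mem hx) (fun p hp => (h p hp x (YY_mem hy)).symm)))
  have aQ := (irr_center hQ).resolve_right (fun hc =>
    YY_ne_one hx (hc x (YY_mem hy) (fun q hq => h x (YY_mem hx) q hq)))
  rw [abelian_irr hP aP hx, abelian_irr hQ aQ hy]

end vtx

section geo
variable {V : Type} {G : SimpleGraph V}

lemma geodesic {r : V} (d : ℕ) : ∀ x, G.Reachable r x → G.dist r x = d →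
    ∃ f : ℕ → V, (∀ k ≤ d, G.Reachable r (f k) ∧ G.dist r (f k) = k) ∧
      (∀ k < d, G.Adj (f k) (f (k + 1))) ∧ f d = x := by
  induction d with
  | zero =>
    intro x hx hd
    refine ⟨fun _ => x, fun k hk => ?_, by simp, rfl⟩
    have : k = 0 := by omega
    subst this
    exact ⟨hx, hd⟩
  | succ d ih =>
    intro x hx hd
    obtain ⟨z, hz, dz, rz⟩ := exists_pred hx hd
    obtain ⟨f, h1, h2, h3⟩ := ih z rz dz
    refine ⟨fun k => if k ≤ d then f k else x, fun k hk => ?_, fun k hk => ?_, by simp⟩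
    · by_cases hkd : k ≤ d
      · simp only [hkd, if_true]; exact h1 k hkd
      · have : k = d + 1 := by omega
        subst this
        simp only [hkd, if_false]; exact ⟨hx, hd⟩
    · by_cases hkd : k + 1 ≤ d
      · simp only [hkd, show k ≤ d by omega, if_true]; exact h2 k (by omega)
      · have : k = d := by omega
        subst this
        simp only [hkd, le_refl, if_false, if_true]; rw [h3]; exact hz
end geo
end RA

namespace RA
open Classical
set_option linter.unusedSectionVars false
set_option linter.unusedVariables false

section regions
variable {V W : Type} [Finite V] [Finite W] {Λ : SimpleGraph V} {Γ : SimpleGraph W}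

/-- All nodes of the images of the generators. -/
def XX (g : V → RAAG Γ) : Set (Subgroup (RAAG Γ)) := {P | ∃ i, P ∈ nodes (g i)}

/-- Non-commuting nodes. -/
def NN (g : V → RAAG Γ) (P Q : Subgroup (RAAG Γ)) : Prop := P ∈ XX g ∧ Q ∈ XX g ∧ ¬ CommS P Q

/-- The region of a node. -/
def Reg (g : V → RAAG Γ) (P : Subgroup (RAAG Γ)) : Set (Subgroup (RAAG Γ)) :=
  {Q | Relation.ReflTransGen (NN g) P Q}

variable {g : V → RAAG Γ}

lemma XX_finite : (XX g).Finite := by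
  have : XX g = ⋃ i, nodes (g i) := by ext P; simp [XX]
  rw [this]
  exact Set.finite_iUnion fun i => nodes_finite _

lemma XX_irr {P : Subgroup (RAAG Γ)} (h : P ∈ XX g) : Irr P := by
  obtain ⟨i, hi⟩ := h; exact node_irr hi

lemma NN.symm {P Q : Subgroup (RAAG Γ)} (h : NN g P Q) : NN g Q P :=
  ⟨h.2.1, h.1, fun hc => h.2.2 hc.symm⟩

lemma Reg_self (P : Subgroup (RAAG Γ)) : P ∈ Reg g P := Relation.ReflTransGen.refl

lemma Reg_symm {P Q : Subgroup (RAAG Γ)} (h : Q ∈ Reg g P) : P ∈ Reg g Q := by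
  induction h with
  | refl => exact .refl
  | tail _ h2 ih => exact Relation.ReflTransGen.head h2.symm ih

lemma Reg_eq {P Q : Subgroup (RAAG Γ)} (h : Q ∈ Reg g P) : Reg g Q = Reg g P := by
  ext S
  exact ⟨fun hS => Relation.ReflTransGen.trans h hS,
    fun hS => Relation.ReflTransGen.trans (Reg_symm h) hS⟩

lemma Reg_sub {P Q : Subgroup (RAAG Γ)} (hP : P ∈ XX g) (h : Q ∈ Reg g P) : Q ∈ XX g := by
  rcases h.cases_tail with e | ⟨_, _, h2⟩
  · exact e ▸ hP
  · exact h2.2.1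

lemma Reg_comm {P Q S : Subgroup (RAAG Γ)} (hP : P ∈ XX g) (h : Q ∈ Reg g P) (hS : S ∈ XX g)
    (hS' : S ∉ Reg g P) : CommS Q S := by
  by_contra hc
  exact hS' (Relation.ReflTransGen.tail h ⟨Reg_sub hP h, hS, hc⟩)

variable (hg : ∀ i j, Λ.Adj i j → Commute (g i) (g j))

/-- The projection to a set of nodes. -/
noncomputable def PH (T : Set (Subgroup (RAAG Γ))) : RAAG Λ →* RAAG Γ :=
  lft (fun i => part (g i) T) (fun i j h => part_commute (hg i j h) T T)

lemma PH_gen (T : Set (Subgroup (RAAG Γ))) (i : V) : PH hg T (gen Λ i) = part (g i) T := lft_gen _ _ _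

lemma PH_union {T T' : Set (Subgroup (RAAG Γ))} (hd : Disjoint T T')
    (hc : ∀ P ∈ T, P ∈ XX g → ∀ Q ∈ T', Q ∈ XX g → CommS P Q) (x : RAAG Λ) :
    PH hg (T ∪ T') x = PH hg T x * PH hg T' x := by
  have h1 : ∀ i j, Commute (part (g i) T) (part (g j) T') := by
    intro i j
    have := part_mem_closure (g i) T (H := Subgroup.centralizer {part (g j) T'}) ?_
    · rw [Subgroup.mem_centralizer_singleton_iff] at this; exact this
    · intro P hP hPi
      rw [Subgroup.mem_centralizer_singleton_iff]
      have := part_mem_closure (g j) T' (H := Subgroup.centralizer {part (g i) {P}}) ?_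
      · rw [Subgroup.mem_centralizer_singleton_iff] at this; exact this.symm
      · intro Q hQ hQj
        rw [Subgroup.mem_centralizer_singleton_iff]
        exact (hc P hP ⟨i, hPi⟩ Q hQ ⟨j, hQj⟩ _ (part_full hPi).1 _ (part_full hQj).1).symm.eq
  have hu : ∀ x : RAAG Λ, x ∈ Sub Λ Set.univ := fun x => by rw [Sub_univ]; trivial
  have h2 : ∀ x y, Commute (PH hg T x) (PH hg T' y) := by
    intro x y
    refine commute_of_gens (S := Set.univ) (fun j _ => ?_) (hu y)
    refine (commute_of_gens (S := Set.univ) (fun i _ => ?_) (hu x)).symm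
    rw [PH_gen, PH_gen]; exact (h1 i j).symm
  let F : RAAG Λ →* RAAG Γ := MonoidHom.mk' (fun x => PH hg T x * PH hg T' x) (by
    intro a b
    simp only [map_mul]
    rw [mul_assoc, mul_assoc, ← mul_assoc (PH hg T b), (h2 b a).eq]; group)
  have : PH hg (T ∪ T') = F := by
    apply hom_ext'
    intro v
    change _ = PH hg T _ * PH hg T' _
    rw [PH_gen, PH_gen, PH_gen, part_union hd]
  rw [this]; rfl

lemma PH_kill_aux (x : RAAG Λ) (n : ℕ) : ∀ T : Set (Subgroup (RAAG Γ)), T ⊆ XX g → T.ncard = n →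
    (∀ P ∈ T, ∀ Q, NN g P Q → Q ∈ T) → (∀ P ∈ T, PH hg (Reg g P) x = 1) → PH hg T x = 1 := by
  induction n using Nat.strong_induction_on with
  | _ n ih =>
    intro T hT hn hcl hk
    rcases T.eq_empty_or_nonempty with rfl | ⟨P, hP⟩
    · have : PH hg ∅ = 1 := by
        apply hom_ext'; intro v; rw [PH_gen, part_empty]; rfl
      rw [this]; rfl
    · have hR : Reg g P ⊆ T := by
        intro Q hQ
        induction hQ with
        | refl => exact hP
        | tail _ h2 ih' => exact hcl _ ih' _ h2
      have e : T = Reg g P ∪ (T \ Reg g P) := (Set.union_sdiff_cancel hR).symm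
      rw [e, PH_union hg Set.disjoint_sdiff_right, hk P hP, one_mul]
      · refine ih _ ?_ _ (Set.sdiff_subset.trans hT) rfl ?_ (fun Q hQ => hk Q hQ.1)
        · rw [← hn]
          refine Set.ncard_lt_ncard ?_ (XX_finite.subset hT)
          exact ⟨Set.sdiff_subset, fun h => (h hP).2 (Reg_self P)⟩
        · intro Q hQ S hS
          exact ⟨hcl Q hQ.1 S hS, fun h => hQ.2 (Relation.ReflTransGen.tail h hS.symm)⟩
      · intro Q hQ _ S hS hS'
        exact Reg_comm (hT hP) hQ hS' hS.2

lemma PH_kill (φ : RAAG Λ →* RAAG Γ) (hφ : ∀ i, φ (gen Λ i) = g i) (x : RAAG Λ)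
    (hk : ∀ P ∈ XX g, PH hg (Reg g P) x = 1) : φ x = 1 := by
  have : φ = PH hg (XX g) := by
    apply hom_ext'
    intro v
    have h1 := part_inter (g v) (XX g)
    have h2 := part_inter (g v) Set.univ
    have h3 : XX g ∩ nodes (g v) = Set.univ ∩ nodes (g v) := by
      rw [Set.univ_inter]; exact Set.inter_eq_right.2 fun Q hQ => ⟨v, hQ⟩
    rw [PH_gen, hφ, ← h1, h3, h2, part_univ]
  rw [this]
  exact PH_kill_aux hg x _ (XX g) subset_rfl rfl (fun P _ Q h => h.2.1) hk

/-- The non-commutation graph on a set of elements. -/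
def HR (Y : Set (RAAG Γ)) : SimpleGraph (RAAG Γ) where
  Adj x y := x ∈ Y ∧ y ∈ Y ∧ ¬ Commute x y
  symm := ⟨fun x y h => ⟨h.2.1, h.1, fun hc => h.2.2 hc.symm⟩⟩
  loopless := ⟨fun x h => h.2.2 (Commute.refl x)⟩

/-- Vertex elements of a region. -/
def YR (g : V → RAAG Γ) (P : Subgroup (RAAG Γ)) : Set (RAAG Γ) := {x | ∃ Q ∈ Reg g P, x ∈ YY Q}

/-- A region containing an induced anti-path with `n` vertices. -/
def Good (g : V → RAAG Γ) (P : Subgroup (RAAG Γ)) (n : ℕ) : Prop :=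
  ∃ f : ℕ → RAAG Γ, (∀ k < n, f k ∈ YR g P) ∧ (∀ k, k + 1 < n → ¬ Commute (f k) (f (k + 1))) ∧
    ∀ k k', k + 1 < k' → k' < n → Commute (f k) (f k') ∧ f k ≠ f k'

lemma HR_reach_node {P Q : Subgroup (RAAG Γ)} (hP : P ∈ XX g) (hQ : Q ∈ Reg g P) {x y : RAAG Γ}
    (hx : x ∈ YY Q) (hy : y ∈ YY Q) : (HR (YR g P)).Reachable x y := by
  have := YY_conn (XX_irr (Reg_sub hP hQ)) hx hy
  induction this with
  | refl => exact .refl _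
  | tail _ h2 ih =>
    refine (ih h2.1).trans (SimpleGraph.Adj.reachable ?_)
    exact ⟨⟨Q, hQ, h2.1⟩, ⟨Q, hQ, h2.2.1⟩, h2.2.2⟩

lemma NN_pair {P Q : Subgroup (RAAG Γ)} (h : NN g P Q) : ∃ x ∈ YY P, ∃ y ∈ YY Q, ¬ Commute x y := by
  by_contra hc
  push Not at hc
  exact h.2.2 (YY_comm (XX_irr h.1) (XX_irr h.2.1) hc)

lemma HR_reach {P : Subgroup (RAAG Γ)} (hP : P ∈ XX g) {x y : RAAG Γ}
    (hx : x ∈ YR g P) (hy : y ∈ YR g P) : (HR (YR g P)).Reachable x y := by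
  have key : ∀ Q ∈ Reg g P, ∀ a ∈ YY P, ∀ b ∈ YY Q, (HR (YR g P)).Reachable a b := by
    intro Q hQ
    induction hQ with
    | refl => intro a ha b hb; exact HR_reach_node hP (Reg_self P) ha hb
    | @tail Q S h1 h2 ih =>
      intro a ha b hb
      obtain ⟨u, hu, v, hv, huv⟩ := NN_pair h2
      have hS : S ∈ Reg g P := Relation.ReflTransGen.tail h1 h2
      refine ((ih a ha u hu).trans (SimpleGraph.Adj.reachable ?_)).trans (HR_reach_node hP hS hv hb)
      exact ⟨⟨Q, h1, hu⟩, ⟨S, hS, hv⟩, huv⟩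
  obtain ⟨z, hz⟩ := YY_nonempty (XX_irr hP)
  obtain ⟨Q, hQ, hx⟩ := hx
  obtain ⟨S, hS, hy⟩ := hy
  exact (key Q hQ z hz x hx).symm.trans (key S hS z hz y hy)

lemma good_of_dist {P : Subgroup (RAAG Γ)} (hP : P ∈ XX g) {x y : RAAG Γ}
    (hx : x ∈ YR g P) (hy : y ∈ YR g P) {n : ℕ} (hn : n ≤ (HR (YR g P)).dist x y + 1) : Good g P n := by
  obtain ⟨f, h1, h2, h3⟩ := geodesic _ y (HR_reach hP hx hy) rfl
  have hf : ∀ k ≤ (HR (YR g P)).dist x y, f k ∈ YR g P := by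
    intro k hk
    rcases Nat.lt_or_ge k ((HR (YR g P)).dist x y) with h | h
    · exact (h2 k h).1
    · have : k = (HR (YR g P)).dist x y := by omega
      rw [this, h3]; exact hy
  refine ⟨f, fun k hk => hf k (by omega), fun k hk => (h2 k (by omega)).2.2, fun k k' hkk hk' => ?_⟩
  have e1 := (h1 k (by omega)).2
  have e2 := (h1 k' (by omega)).2
  refine ⟨?_, fun e => by rw [e] at e1; omega⟩
  by_contra hc
  have hadj : (HR (YR g P)).Adj (f k) (f k') := ⟨hf k (by omega), hf k' (by omega), hc⟩
  obtain ⟨w, hw⟩ := (h1 k (by omega)).1.exists_walk_length_eq_dist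
  have := SimpleGraph.dist_le (w.concat hadj)
  rw [SimpleGraph.Walk.length_concat] at this
  omega

lemma dist_lower {U : Type} {G : SimpleGraph U} (l : U → ℕ) (h : ∀ a b, G.Adj a b → l b ≤ l a + 1)
    {x y : U} (hr : G.Reachable x y) : l y ≤ l x + G.dist x y := by
  obtain ⟨w, hw⟩ := hr.exists_walk_length_eq_dist
  rw [← hw]
  clear hw hr
  induction w with
  | nil => simp
  | cons hadj w ih =>
    have := h _ _ hadj
    rw [SimpleGraph.Walk.length_cons]; omega

end regions
end RA

namespace RA
open Classical
open scoped commutatorElement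
set_option linter.unusedSectionVars false
set_option linter.unusedVariables false

section wit
variable {V : Type} [Finite V] {Λ : SimpleGraph V}

/-- Iterated commutators along a path. -/
noncomputable def wit (Λ : SimpleGraph V) (v : ℕ → V) (N : ℕ) : ℕ → RAAG Λ
  | 0 => gen Λ (v 0) ^ N
  | k + 1 => ⁅wit Λ v N k, gen Λ (v (k + 1)) ^ N⁆

lemma wit_kill_last {H : Type*} [Group H] (F : RAAG Λ →* H) (v : ℕ → V) {N : ℕ} (hN : 0 < N) (m : ℕ)
    (h : F (gen Λ (v m)) = 1) : F (wit Λ v N m) = 1 := by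
  cases m with
  | zero => rw [wit, map_pow, h, one_pow]
  | succ k => rw [wit, map_commutatorElement, map_pow, h, one_pow, commutatorElement_one_right]

lemma wit_kill_up {H : Type*} [Group H] (F : RAAG Λ →* H) (v : ℕ → V) {N : ℕ} {k m : ℕ} (hkm : k ≤ m)
    (h : F (wit Λ v N k) = 1) : F (wit Λ v N m) = 1 := by
  induction m, hkm using Nat.le_induction with
  | base => exact h
  | succ m _ ih => rw [wit, map_commutatorElement, ih, commutatorElement_one_left]

lemma wit_kill_comm {H : Type*} [Group H] (F : RAAG Λ →* H) (v : ℕ → V) {N : ℕ} {m : ℕ} (hm : 1 ≤ m)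
    (h : Commute (F (gen Λ (v 0)) ^ N) (F (gen Λ (v 1)) ^ N)) : F (wit Λ v N m) = 1 := by
  apply wit_kill_up F v hm
  rw [wit, wit, map_commutatorElement, map_pow, map_pow]
  exact commutatorElement_eq_one_iff_commute.2 h

lemma gen_zpow_ne (v : V) {n : ℤ} (hn : n ≠ 0) : gen Λ v ^ n ≠ 1 := by
  intro h
  have := pow_gen_ex (Γ := Λ) v n
  rw [h, map_one] at this
  exact hn (congrArg Multiplicative.toAdd this).symm

lemma wit_ne (v : ℕ → V) {N : ℕ} (hN : 0 < N) (m : ℕ) (hv : ∀ k < m, v k ∉ St Λ (v (k + 1))) :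
    wit Λ v N m ≠ 1 := by
  induction m with
  | zero =>
    rw [wit, ← zpow_natCast]
    exact gen_zpow_ne _ (by exact_mod_cast hN.ne')
  | succ m ih =>
    intro h
    rw [wit, commutatorElement_eq_one_iff_commute] at h
    apply ih fun k hk => hv k (by omega)
    rw [← zpow_natCast] at h
    have h1 := mem_St_pow (by exact_mod_cast hN.ne') h
    rw [← ret_eq h1]
    exact wit_kill_last _ v hN m (ret_gen_not (hv m (by omega)))

lemma common_mult {α : Type*} [Finite α] (Q : α → ℕ → Prop) (h : ∀ a, ∃ p, 0 < p ∧ Q a p)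
    (hm : ∀ a p k, 0 < k → Q a p → Q a (p * k)) : ∃ N, 0 < N ∧ ∀ a, Q a N := by
  choose p hp hQ using h
  have := Fintype.ofFinite α
  refine ⟨∏ a, p a, Finset.prod_pos fun a _ => hp a, fun a => ?_⟩
  rw [← Finset.mul_prod_erase _ _ (Finset.mem_univ a)]
  exact hm a _ _ (Finset.prod_pos fun b _ => hp b) (hQ a)

lemma wit3_step {v0 v1 v2 : V} (h01 : v0 ∉ St Λ v1) (h21 : v2 ∉ St Λ v1) (h02 : v0 ≠ v2) {p q : ℤ}
    (hpq : p ≠ 0 ∨ q ≠ 0) {x : RAAG Λ} (hc : Commute x (gen Λ v0 ^ p * gen Λ v2 ^ q)) : x ∈ Sub Λ {v1}ᶜ := by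
  set u := gen Λ v0 ^ p * gen Λ v2 ^ q with hu
  have e0 : ex Λ v0 u = Multiplicative.ofAdd p := by
    rw [hu, map_mul, pow_gen_ex, map_zpow, ex_ne h02.symm, one_zpow, mul_one]
  have e2 : ex Λ v2 u = Multiplicative.ofAdd q := by
    rw [hu, map_mul, pow_gen_ex, map_zpow, ex_ne h02, one_zpow, one_mul]
  let S : Set V := {w | (w = v0 ∧ p ≠ 0) ∨ (w = v2 ∧ q ≠ 0)}
  have hS : Tight Λ S u := by
    apply tight_of_ex
    · apply mul_mem
      · by_cases h : p = 0
        · rw [h, zpow_zero]; exact one_mem _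
        · exact zpow_mem (gen_mem (S := S) (Or.inl ⟨rfl, h⟩)) _
      · by_cases h : q = 0
        · rw [h, zpow_zero]; exact one_mem _
        · exact zpow_mem (gen_mem (S := S) (Or.inr ⟨rfl, h⟩)) _
    · rintro w (⟨rfl, h⟩ | ⟨rfl, h⟩)
      · rw [e0]; exact fun h' => h (congrArg Multiplicative.toAdd h')
      · rw [e2]; exact fun h' => h (congrArg Multiplicative.toAdd h')
  refine Sub_mono ?_ (tight_commute hS hc)
  have h1 : v1 ∉ St Λ v0 ∧ v1 ∉ St Λ v2 := by
    constructor
    · rintro (h | h)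
      · exact h01 (Or.inl h.symm)
      · exact h01 (Or.inr h.symm)
    · rintro (h | h)
      · exact h21 (Or.inl h.symm)
      · exact h21 (Or.inr h.symm)
  intro w hw e
  rw [Set.mem_singleton_iff] at e
  subst e
  rcases hw with (⟨rfl, _⟩ | ⟨rfl, _⟩) | hw
  · exact h01 (Or.inl rfl)
  · exact h21 (Or.inl rfl)
  · rcases hpq with h | h
    · exact h1.1 (Or.inr (hw v0 (Or.inl ⟨rfl, h⟩)).symm)
    · exact h1.2 (Or.inr (hw v2 (Or.inr ⟨rfl, h⟩)).symm)

lemma wit3 {α H : Type*} [Finite α] [Group H] (F : α → RAAG Λ →* H) {v0 v1 v2 : V} (h01 : v0 ∉ St Λ v1)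
    (h21 : v2 ∉ St Λ v1) (h02 : v0 ≠ v2)
    (hF : ∀ a, ∃ p q : ℤ, (p ≠ 0 ∨ q ≠ 0) ∧ F a (gen Λ v0) ^ p * F a (gen Λ v2) ^ q = 1) :
    ∃ x : RAAG Λ, x ≠ 1 ∧ ∀ a, F a x = 1 := by
  have := Fintype.ofFinite α
  suffices ∀ s : Finset α, ∃ x ∈ Sub Λ {v0, v1, v2}, x ≠ 1 ∧ ∀ a ∈ s, F a x = 1 by
    obtain ⟨x, _, h1, h2⟩ := this Finset.univ
    exact ⟨x, h1, fun a => h2 a (Finset.mem_univ a)⟩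
  intro s
  induction s using Finset.induction_on with
  | empty => exact ⟨gen Λ v0, gen_mem (by simp), gen_ne_one _, by simp⟩
  | insert a s ha ih =>
    obtain ⟨x, hx, hx1, hk⟩ := ih
    obtain ⟨p, q, hpq, hu⟩ := hF a
    set u := gen Λ v0 ^ p * gen Λ v2 ^ q with hud
    have hu' : F a u = 1 := by rw [hud, map_mul, map_zpow, map_zpow]; exact hu
    have hum : u ∈ Sub Λ {v0, v1, v2} :=
      mul_mem (zpow_mem (gen_mem (by simp)) _) (zpow_mem (gen_mem (by simp)) _)
    have hvm : gen Λ v1 ∈ Sub Λ {v0, v1, v2} := gen_mem (by simp)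
    have fin : ∀ u' ∈ Sub Λ {v0, v1, v2}, F a u' = 1 → ¬ Commute x u' →
        ∃ x ∈ Sub Λ {v0, v1, v2}, x ≠ 1 ∧ ∀ b ∈ insert a s, F b x = 1 := by
      intro u' hm hk' hc
      refine ⟨⁅x, u'⁆, ?_, fun h => hc (commutatorElement_eq_one_iff_commute.1 h), ?_⟩
      · rw [commutatorElement_def]
        exact mul_mem (mul_mem (mul_mem hx hm) (inv_mem hx)) (inv_mem hm)
      · intro b hb
        rw [map_commutatorElement]
        rcases Finset.mem_insert.1 hb with rfl | hb
        · rw [hk', commutatorElement_one_right]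
        · rw [hk b hb, commutatorElement_one_left]
    by_cases c1 : Commute x u
    · by_cases c2 : Commute x (gen Λ v1 * u * (gen Λ v1)⁻¹)
      · exfalso
        have m1 := wit3_step h01 h21 h02 hpq c1
        have c3 : Commute ((gen Λ v1)⁻¹ * x * gen Λ v1) u := by
          rw [← Commute.conj_iff (gen Λ v1)]
          simpa [mul_assoc] using c2
        have m2 := ret_eq (wit3_step h01 h21 h02 hpq c3)
        rw [map_mul, map_mul, map_inv, ret_gen_not (by simp), ret_eq m1] at m2
        have c4 : Commute x (gen Λ v1) := by
          rw [commute_iff_eq]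
          have : x = (gen Λ v1)⁻¹ * x * gen Λ v1 := by simpa using m2
          calc x * gen Λ v1 = gen Λ v1 * ((gen Λ v1)⁻¹ * x * gen Λ v1) := by group
            _ = gen Λ v1 * x := by rw [← this]
        have m3 := mem_Sub_inter (mem_Sub_inter (mem_St c4) m1) hx
        have : (St Λ v1 ∩ {v1}ᶜ) ∩ {v0, v1, v2} = ∅ := by
          ext w
          simp only [Set.mem_inter_iff, Set.mem_compl_iff, Set.mem_singleton_iff, Set.mem_insert_iff,
            Set.mem_empty_iff_false, iff_false, not_and]
          rintro ⟨h1, h2⟩ (rfl | rfl | rfl)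
          · exact h01 h1
          · exact h2 rfl
          · exact h21 h1
        rw [this, Sub_empty] at m3
        exact hx1 (Subgroup.mem_bot.1 m3)
      · refine fin _ (mul_mem (mul_mem hvm hum) (inv_mem hvm)) ?_ c2
        rw [map_mul, map_mul, hu', map_inv]; simp
    · exact fin _ hum hu' c1

end wit
end RA

namespace RA
open Classical
set_option linter.unusedSectionVars false
set_option linter.unusedVariables false

/-- Coordinates of a graph whose complement is a disjoint union of paths. -/
structure PD {V ι : Type} (Λ : SimpleGraph V) (n : ι → ℕ) (at' : ι → ℕ → V) : Prop where
  surj : ∀ v, ∃ j k, k < n j ∧ at' j k = v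
  inj : ∀ j k j' k', k < n j → k' < n j' → at' j k = at' j' k' → j = j' ∧ k = k'
  adj : ∀ j k j' k', k < n j → k' < n j' →
    (Λ.Adj (at' j k) (at' j' k') ↔ ¬ (j = j' ∧ (k = k' ∨ k + 1 = k' ∨ k' + 1 = k)))

section good
variable {V W ι : Type} [Finite V] [Finite W] {Λ : SimpleGraph V} {Γ : SimpleGraph W}
  {g : V → RAAG Γ} (hg : ∀ i j, Λ.Adj i j → Commute (g i) (g j)) {n : ι → ℕ} {at' : ι → ℕ → V}

/-- `P` has label `(j, k)`. -/
def Lab (g : V → RAAG Γ) (n : ι → ℕ) (at' : ι → ℕ → V) (P : Subgroup (RAAG Γ)) (j : ι) (k : ℕ) : Prop :=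
  k < n j ∧ P ∈ nodes (g (at' j k))

/-- All labels of the region of `P` are in the path `j`. -/
def InJ (g : V → RAAG Γ) (n : ι → ℕ) (at' : ι → ℕ → V) (P : Subgroup (RAAG Γ)) (j : ι) : Prop :=
  ∀ Q ∈ Reg g P, ∀ j' k', Lab g n at' Q j' k' → j' = j

lemma exists_lab (hD : PD Λ n at') {P : Subgroup (RAAG Γ)} (hP : P ∈ XX g) : ∃ j k, Lab g n at' P j k := by
  obtain ⟨i, hi⟩ := hP
  obtain ⟨j, k, hk, rfl⟩ := hD.surj i
  exact ⟨j, k, hk, hi⟩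

lemma lab_rule (hg : ∀ i j, Λ.Adj i j → Commute (g i) (g j))
    (hD : PD Λ n at') {P Q : Subgroup (RAAG Γ)} (hne : P ≠ Q) (hc : ¬ CommS P Q) {j j' : ι} {k k' : ℕ}
    (hP : Lab g n at' P j k) (hQ : Lab g n at' Q j' k') : j = j' ∧ (k + 1 = k' ∨ k' + 1 = k) := by
  have h1 : ¬ Commute (g (at' j k)) (g (at' j' k')) := by
    intro h
    rcases node_commute h hP.2 hQ.2 with h | h
    · exact hne h
    · exact hc h
  have h2 : ¬ Λ.Adj (at' j k) (at' j' k') := fun h => h1 (hg _ _ h)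
  rw [hD.adj j k j' k' hP.1 hQ.1, not_not] at h2
  obtain ⟨rfl, h2⟩ := h2
  refine ⟨rfl, ?_⟩
  rcases h2 with rfl | h2
  · exact absurd (Commute.refl _) h1
  · exact h2

lemma lab_comm (hg : ∀ i j, Λ.Adj i j → Commute (g i) (g j))
    (hD : PD Λ n at') {P Q : Subgroup (RAAG Γ)} (hne : P ≠ Q) {j j' : ι} {k k' : ℕ}
    (hP : Lab g n at' P j k) (hQ : Lab g n at' Q j' k') (h : ¬ (j = j' ∧ (k + 1 = k' ∨ k' + 1 = k))) :
    CommS P Q := by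
  by_contra hc
  exact h (lab_rule hg hD hne hc hP hQ)

lemma distinct_nbr {A S : Subgroup (RAAG Γ)} (h : S ∈ Reg g A) (hne : S ≠ A) : ∃ T, NN g A T ∧ T ≠ A := by
  induction h with
  | refl => exact absurd rfl hne
  | @tail b c h1 h2 ih =>
    by_cases hb : b = A
    · subst hb; exact ⟨c, h2, hne⟩
    · exact ih hb

lemma distinct_nbr' {P A C D : Subgroup (RAAG Γ)} (hA : A ∈ Reg g P) (hC : C ∈ Reg g P) (hD : D ∈ Reg g P)
    (hne : C ≠ D) : ∃ T, NN g A T ∧ T ≠ A := by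
  rw [← Reg_eq hA] at hC hD
  by_cases h : C = A
  · subst h; exact distinct_nbr hD hne.symm
  · exact distinct_nbr hC h

lemma inJ_of (hg : ∀ i j, Λ.Adj i j → Commute (g i) (g j))
    (hD : PD Λ n at') {P A C D : Subgroup (RAAG Γ)} (hA : A ∈ Reg g P) (hC : C ∈ Reg g P) (hD' : D ∈ Reg g P)
    (hne : C ≠ D) {j : ι} {k : ℕ} (hl : Lab g n at' A j k) : InJ g n at' P j := by
  obtain ⟨T, hT, hTA⟩ := distinct_nbr' hA hC hD' hne
  have h1 : ∀ j' k', Lab g n at' T j' k' → j' = j := fun j' k' h =>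
    ((lab_rule hg hD hTA.symm hT.2.2 hl h).1).symm
  have h2 : ∀ j' k', Lab g n at' A j' k' → j' = j := by
    intro j' k' h
    obtain ⟨a, b, hab⟩ := exists_lab hD hT.2.1
    have := h1 a b hab
    subst this
    exact (lab_rule hg hD hTA.symm hT.2.2 h hab).1
  intro Q hQ
  rw [← Reg_eq hA] at hQ
  induction hQ with
  | refl => exact h2
  | @tail b c _ hbc ih =>
    by_cases e : b = c
    · subst e; exact ih
    · intro j' k' h
      obtain ⟨x, y, hxy⟩ := exists_lab hD hbc.1
      have := ih x y hxy
      subst this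
      exact ((lab_rule hg hD e hbc.2.2 hxy h).1).symm

lemma part_mem_self (x : RAAG Γ) (P : Subgroup (RAAG Γ)) : part x {P} ∈ P :=
  part_mem_closure x {P} (by
    rintro Q rfl hQ
    exact (part_full hQ).1)

lemma pow_comm {P : Subgroup (RAAG Γ)} (hP : Irr P) {a b c : RAAG Γ} (ha : Full P a) (hb : b ∈ P)
    (hc : c ∈ P) (hab : Commute a b) (hac : Commute a c) : ∃ p, 0 < p ∧ Commute (b ^ p) (c ^ p) := by
  obtain ⟨p, hp, q, e⟩ := powers hP ha hb hab
  obtain ⟨p', hp', q', e'⟩ := powers hP ha hc hac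
  refine ⟨p * p', Nat.mul_pos hp hp', ?_⟩
  rw [pow_mul, e, mul_comm p, pow_mul, e']
  exact (((Commute.refl a).zpow_zpow q q').pow_pow _ _)

lemma good_two {P : Subgroup (RAAG Γ)} {x y : RAAG Γ} (hx : x ∈ YR g P) (hy : y ∈ YR g P)
    (h : ¬ Commute x y) : Good g P 2 := by
  refine ⟨fun k => if k = 0 then x else y, fun k hk => ?_, fun k hk => ?_, fun k k' h1 h2 => by omega⟩
  · by_cases h0 : k = 0
    · simp only [h0, if_true]; exact hx
    · simp only [h0, if_false]; exact hy
  · have : k = 0 := by omega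
    subst this
    simpa using h

/-- Kill condition. -/
def Kill (F : RAAG Λ →* RAAG Γ) (v : ℕ → V) (m p : ℕ) : Prop :=
  F (gen Λ (v 0)) = 1 ∨ F (gen Λ (v m)) = 1 ∨ Commute (F (gen Λ (v 0)) ^ p) (F (gen Λ (v 1)) ^ p)

lemma good_kill (hD : PD Λ n at') (j : ι) (m : ℕ) (hm : n j = m + 1) (hm1 : m = 1 ∨ 3 ≤ m)
    {P : Subgroup (RAAG Γ)} (hP : P ∈ XX g) (hno : InJ g n at' P j → ¬ Good g P (n j)) :
    ∃ p, 0 < p ∧ Kill (PH hg (Reg g P)) (at' j) m p := by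
  by_cases hA : ∃ A ∈ Reg g P, Lab g n at' A j 0
  swap
  · refine ⟨1, one_pos, Or.inl ?_⟩
    rw [PH_gen]
    apply part_eq_one
    rw [Set.eq_empty_iff_forall_notMem]
    exact fun Q hQ => hA ⟨Q, hQ.1, by omega, hQ.2⟩
  by_cases hB : ∃ B ∈ Reg g P, Lab g n at' B j m
  swap
  · refine ⟨1, one_pos, Or.inr (Or.inl ?_)⟩
    rw [PH_gen]
    apply part_eq_one
    rw [Set.eq_empty_iff_forall_notMem]
    exact fun Q hQ => hB ⟨Q, hQ.1, by omega, hQ.2⟩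
  obtain ⟨A, hA, lA⟩ := hA
  obtain ⟨B, hB, lB⟩ := hB
  by_cases hs : ∃ C ∈ Reg g P, C ≠ P
  · obtain ⟨C, hC, hCP⟩ := hs
    have hJ := inJ_of hg hD hA hC (Reg_self P) hCP lA
    exfalso
    apply hno hJ
    obtain ⟨T, hT, hTA⟩ := distinct_nbr' hA hC (Reg_self P) hCP
    rcases hm1 with rfl | hm3
    · obtain ⟨x, hx, y, hy, hxy⟩ := NN_pair hT
      rw [hm]
      exact good_two ⟨A, hA, hx⟩ ⟨T, Relation.ReflTransGen.tail hA hT, hy⟩ hxy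
    · have hAB : A ≠ B := by
        rintro rfl
        obtain ⟨a, b, hab⟩ := exists_lab hD hT.2.1
        have h1 := (lab_rule hg hD hTA.symm hT.2.2 lA hab).2
        have h2 := (lab_rule hg hD hTA.symm hT.2.2 lB hab).2
        omega
      have hcom : CommS A B := lab_comm hg hD hAB lA lB (by omega)
      obtain ⟨x0, hx0⟩ := YY_nonempty (XX_irr (Reg_sub hP hA))
      obtain ⟨y0, hy0⟩ := YY_nonempty (XX_irr (Reg_sub hP hB))
      have hxy := YY_disj hcom hAB hx0 hy0
      have hnd : ∀ x, ∃ Q, (x ∈ YR g P → Q ∈ Reg g P ∧ x ∈ YY Q) ∧ (x = x0 → Q = A) ∧ (x = y0 → Q = B) := by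
        intro x
        by_cases h1 : x = x0
        · subst h1; exact ⟨A, fun _ => ⟨hA, hx0⟩, fun _ => rfl, fun h => absurd h hxy⟩
        by_cases h2 : x = y0
        · subst h2; exact ⟨B, fun _ => ⟨hB, hy0⟩, fun h => absurd h h1, fun _ => rfl⟩
        by_cases h3 : x ∈ YR g P
        · obtain ⟨Q, hQ⟩ := id h3
          exact ⟨Q, fun _ => hQ, fun h => absurd h h1, fun h => absurd h h2⟩
        · exact ⟨A, fun h => absurd h h3, fun _ => rfl, fun h => absurd h h2⟩
      choose nd hnd1 hnd2 hnd3 using hnd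
      have hlab : ∀ Q, ∃ k, (Q ∈ Reg g P → Lab g n at' Q j k) ∧ (Q = A → k = 0) ∧ (Q = B → k = m) := by
        intro Q
        by_cases h1 : Q = A
        · subst h1; exact ⟨0, fun _ => lA, fun _ => rfl, fun h => absurd h hAB⟩
        by_cases h2 : Q = B
        · subst h2; exact ⟨m, fun _ => lB, fun h => absurd h h1, fun _ => rfl⟩
        by_cases h3 : Q ∈ Reg g P
        · obtain ⟨a, b, hab⟩ := exists_lab hD (Reg_sub hP h3)
          have := hJ Q h3 a b hab
          subst this
          exact ⟨b, fun _ => hab, fun h => absurd h h1, fun h => absurd h h2⟩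
        · exact ⟨0, fun h => absurd h h3, fun _ => rfl, fun h => absurd h h2⟩
      choose lab hlab1 hlab2 hlab3 using hlab
      have x0m : x0 ∈ YR g P := ⟨A, hA, hx0⟩
      have y0m : y0 ∈ YR g P := ⟨B, hB, hy0⟩
      have := dist_lower (G := HR (YR g P)) (fun x => lab (nd x)) (by
        intro a b hab
        by_cases e : nd a = nd b
        · rw [e]; omega
        · have := (lab_rule hg hD e (fun hc => hab.2.2 (hc _ (YY_mem (hnd1 a hab.1).2) _
            (YY_mem (hnd1 b hab.2.1).2))) (hlab1 _ (hnd1 a hab.1).1) (hlab1 _ (hnd1 b hab.2.1).1)).2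
          omega) (HR_reach hP x0m y0m)
      apply good_of_dist hP x0m y0m
      have e1 : lab (nd x0) = 0 := hlab2 _ (hnd2 _ rfl)
      have e2 : lab (nd y0) = m := hlab3 _ (hnd3 _ rfl)
      simp only [e1, e2] at this
      omega
  · push Not at hs
    have eR : Reg g P = {P} := by
      ext Q; exact ⟨fun h => hs Q h, fun h => by rw [Set.mem_singleton_iff] at h; subst h; exact Reg_self _⟩
    rw [hs A hA] at lA hA
    rw [hs B hB] at lB
    -- one label adjacent to both kills
    have key : ∀ j' k', Lab g n at' P j' k' → Λ.Adj (at' j' k') (at' j 0) → Λ.Adj (at' j' k') (at' j 1) →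
        ∃ p, 0 < p ∧ Kill (PH hg (Reg g P)) (at' j) m p := by
      intro j' k' hl a0 a1
      obtain ⟨p, hp, hc⟩ := pow_comm (XX_irr hP) (part_full hl.2) (part_mem_self (g (at' j 0)) P)
        (part_mem_self (g (at' j 1)) P) (part_commute (hg _ _ a0) _ _) (part_commute (hg _ _ a1) _ _)
      refine ⟨p, hp, Or.inr (Or.inr ?_)⟩
      rw [PH_gen, PH_gen, eR]; exact hc
    rcases hm1 with rfl | hm3
    · by_cases hJ : InJ g n at' P j
      · by_cases hab : CommS P P
        · refine ⟨1, one_pos, Or.inr (Or.inr ?_)⟩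
          rw [PH_gen, PH_gen, eR, pow_one, pow_one]
          exact hab _ (part_mem_self _ _) _ (part_mem_self _ _)
        · exfalso
          obtain ⟨x, hx, y, hy, hxy⟩ := NN_pair (⟨hP, hP, hab⟩ : NN g P P)
          apply hno hJ
          rw [hm]
          exact good_two ⟨P, hA, hx⟩ ⟨P, hA, hy⟩ hxy
      · unfold InJ at hJ
        push Not at hJ
        obtain ⟨Q, hQ, j', k', hl, hne⟩ := hJ
        have e := hs Q hQ
        rw [e] at hl
        refine key j' k' hl ?_ ?_
        · rw [hD.adj _ _ _ _ hl.1 (by omega)]; exact fun h => hne h.1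
        · rw [hD.adj _ _ _ _ hl.1 (by omega)]; exact fun h => hne h.1
    · refine key j m lB ?_ ?_
      · rw [hD.adj _ _ _ _ lB.1 (by omega)]; omega
      · rw [hD.adj _ _ _ _ lB.1 (by omega)]; omega

lemma good_kill3 (hD : PD Λ n at') (j : ι) (hm : n j = 3)
    {P : Subgroup (RAAG Γ)} (hP : P ∈ XX g) (hno : InJ g n at' P j → ¬ Good g P (n j)) :
    ∃ p q : ℤ, (p ≠ 0 ∨ q ≠ 0) ∧ PH hg (Reg g P) (gen Λ (at' j 0)) ^ p *
      PH hg (Reg g P) (gen Λ (at' j 2)) ^ q = 1 := by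
  by_cases hA : ∃ A ∈ Reg g P, Lab g n at' A j 0
  swap
  · refine ⟨1, 0, Or.inl one_ne_zero, ?_⟩
    have : PH hg (Reg g P) (gen Λ (at' j 0)) = 1 := by
      rw [PH_gen]
      apply part_eq_one
      rw [Set.eq_empty_iff_forall_notMem]
      exact fun Q hQ => hA ⟨Q, hQ.1, by omega, hQ.2⟩
    rw [this]; simp
  by_cases hB : ∃ B ∈ Reg g P, Lab g n at' B j 2
  swap
  · refine ⟨0, 1, Or.inr one_ne_zero, ?_⟩
    have : PH hg (Reg g P) (gen Λ (at' j 2)) = 1 := by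
      rw [PH_gen]
      apply part_eq_one
      rw [Set.eq_empty_iff_forall_notMem]
      exact fun Q hQ => hB ⟨Q, hQ.1, by omega, hQ.2⟩
    rw [this]; simp
  obtain ⟨A, hA, lA⟩ := hA
  obtain ⟨B, hB, lB⟩ := hB
  have uniq : ∀ C ∈ Reg g P, (Lab g n at' C j 0 ∨ Lab g n at' C j 2) → C = A := by
    intro C hC hl
    by_contra hne
    have hcom : CommS C A := by
      rcases hl with hl | hl
      · exact lab_comm hg hD hne hl lA (by omega)
      · exact lab_comm hg hD hne hl lA (by omega)
    apply hno (inJ_of hg hD hA hC hA hne lA)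
    obtain ⟨x, hx⟩ := YY_nonempty (XX_irr (Reg_sub hP hC))
    obtain ⟨y, hy⟩ := YY_nonempty (XX_irr (Reg_sub hP hA))
    have hxy := YY_disj hcom hne hx hy
    have xm : x ∈ YR g P := ⟨C, hC, hx⟩
    have ym : y ∈ YR g P := ⟨A, hA, hy⟩
    apply good_of_dist hP xm ym
    have hr := HR_reach hP xm ym
    have h0 : (HR (YR g P)).dist x y ≠ 0 := fun h => hxy (hr.dist_eq_zero_iff.1 h)
    have h1 : (HR (YR g P)).dist x y ≠ 1 := fun h =>
      (SimpleGraph.dist_eq_one_iff_adj.1 h).2.2 (hcom _ (YY_mem hx) _ (YY_mem hy))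
    omega
  have e := uniq B hB (Or.inr lB)
  subst e
  have e0 : PH hg (Reg g P) (gen Λ (at' j 0)) = part (g (at' j 0)) {B} := by
    rw [PH_gen, ← part_inter]
    congr 1
    ext Q
    exact ⟨fun h => uniq Q h.1 (Or.inl ⟨by omega, h.2⟩), fun h => by
      rw [Set.mem_singleton_iff] at h; subst h; exact ⟨hB, lA.2⟩⟩
  have e2 : PH hg (Reg g P) (gen Λ (at' j 2)) = part (g (at' j 2)) {B} := by
    rw [PH_gen, ← part_inter]
    congr 1
    ext Q
    exact ⟨fun h => uniq Q h.1 (Or.inr ⟨by omega, h.2⟩), fun h => by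
      rw [Set.mem_singleton_iff] at h; subst h; exact ⟨hB, lB.2⟩⟩
  have hadj : Λ.Adj (at' j 0) (at' j 2) := by
    rw [hD.adj _ _ _ _ (by omega) (by omega)]; omega
  obtain ⟨p, hp, q, he⟩ := powers (XX_irr (Reg_sub hP hB)) (part_full lA.2) (part_full lB.2).1
    (part_commute (hg _ _ hadj) _ _)
  refine ⟨-q, p, Or.inr (by exact_mod_cast hp.ne'), ?_⟩
  rw [e0, e2, zpow_natCast, he, ← zpow_add]; simp

theorem exists_good (hg : ∀ i j, Λ.Adj i j → Commute (g i) (g j))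
    (hD : PD Λ n at') (φ : RAAG Λ →* RAAG Γ) (hφ : ∀ i, φ (gen Λ i) = g i) (hinj : Function.Injective φ)
    (j : ι) (hj : 2 ≤ n j) : ∃ P ∈ XX g, InJ g n at' P j ∧ Good g P (n j) := by
  by_contra hcon
  push Not at hcon
  have hfin : Finite (XX g) := XX_finite
  have fin : ∀ x : RAAG Λ, x ≠ 1 → ¬ ∀ P : XX g, PH hg (Reg g P.1) x = 1 := by
    intro x hx hk
    apply hx
    apply hinj
    rw [map_one]
    exact PH_kill hg φ hφ x fun P hP => hk ⟨P, hP⟩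
  have hst : ∀ k k', k < n j → k' < n j → (k + 1 = k' ∨ k' + 1 = k) → at' j k ∉ St Λ (at' j k') := by
    rintro k k' hk hk' hkk (h | h)
    · have := (hD.inj j k j k' hk hk' h).2; omega
    · rw [hD.adj _ _ _ _ hk' hk] at h; exact h ⟨rfl, by omega⟩
  by_cases h3 : n j = 3
  · obtain ⟨x, hx, hk⟩ := wit3 (fun P : XX g => PH hg (Reg g P.1)) (v0 := at' j 0) (v1 := at' j 1)
      (v2 := at' j 2) (hst 0 1 (by omega) (by omega) (by omega)) (hst 2 1 (by omega) (by omega) (by omega))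
      (fun h => by have := (hD.inj j 0 j 2 (by omega) (by omega) h).2; omega)
      (fun P => good_kill3 hg hD j h3 P.2 (hcon P.1 P.2))
    exact fin x hx hk
  · obtain ⟨m, hm⟩ : ∃ m, n j = m + 1 := ⟨n j - 1, by omega⟩
    obtain ⟨N, hN, hK⟩ := common_mult (fun (P : XX g) p => Kill (PH hg (Reg g P.1)) (at' j) m p)
      (fun P => good_kill hg hD j m hm (by omega) P.2 (hcon P.1 P.2)) (by
        rintro P p k hk (h | h | h)
        · exact Or.inl h
        · exact Or.inr (Or.inl h)
        · refine Or.inr (Or.inr ?_)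
          rw [pow_mul, pow_mul]; exact h.pow_pow _ _)
    refine fin (wit Λ (at' j) N m) (wit_ne _ hN m fun k hk => hst k (k + 1) (by omega) (by omega) (by omega)) ?_
    intro P
    rcases hK P with h | h | h
    · exact wit_kill_up _ _ (Nat.zero_le m) (wit_kill_last _ _ hN 0 h)
    · exact wit_kill_last _ _ hN m h
    · exact wit_kill_comm _ _ (by omega) h

end good
end RA

namespace RA
open Classical
set_option linter.unusedSectionVars false
set_option linter.unusedVariables false

section iso
variable {V W ι : Type} [Finite V] [Finite W] [Finite ι] {Λ : SimpleGraph V} {Γ : SimpleGraph W}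
  {g : V → RAAG Γ} (hg : ∀ i j, Λ.Adj i j → Commute (g i) (g j)) {n : ι → ℕ} {at' : ι → ℕ → V}

/-- Nodes with an isolated label. -/
def ZZ (g : V → RAAG Γ) (n : ι → ℕ) (at' : ι → ℕ → V) : Set (Subgroup (RAAG Γ)) :=
  {P | ∃ j, n j = 1 ∧ P ∈ nodes (g (at' j 0))}

lemma ZZ_sub {P : Subgroup (RAAG Γ)} (h : P ∈ ZZ g n at') : P ∈ XX g := by
  obtain ⟨j, _, h⟩ := h; exact ⟨_, h⟩

lemma ZZ_reg (hg : ∀ i j, Λ.Adj i j → Commute (g i) (g j))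
    (hD : PD Λ n at') {P Q : Subgroup (RAAG Γ)} (h : P ∈ ZZ g n at') (hQ : Q ∈ Reg g P) : Q = P := by
  by_contra hne
  obtain ⟨j, hj, hl⟩ := h
  obtain ⟨T, hT, hTP⟩ := distinct_nbr hQ hne
  obtain ⟨j', k', hl'⟩ := exists_lab hD hT.2.1
  obtain ⟨rfl, h1⟩ := lab_rule hg hD hTP.symm hT.2.2 (j := j) (k := 0) ⟨by omega, hl⟩ hl'
  have := hl'.1
  omega

lemma list_zpow {G α : Type*} [Group G] (a : G) (f : α → ℤ) (l : List α) :
    (l.map fun j => a ^ f j).prod = a ^ (l.map f).sum := by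
  induction l with
  | nil => simp
  | cons b l ih => simp only [List.map_cons, List.prod_cons, List.sum_cons, ih, zpow_add]

lemma iso_inj (hg : ∀ i j, Λ.Adj i j → Commute (g i) (g j))
    (hD : PD Λ n at') (φ : RAAG Λ →* RAAG Γ) (hφ : ∀ i, φ (gen Λ i) = g i) (hinj : Function.Injective φ) :
    ∃ s : {j // n j = 1} → Subgroup (RAAG Γ), Function.Injective s ∧ ∀ j, s j ∈ ZZ g n at' := by
  have hZf : Finite (ZZ g n at') := XX_finite.subset fun P h => ZZ_sub h
  have f1 := Fintype.ofFinite (ZZ g n at')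
  have f2 := Fintype.ofFinite {j // n j = 1}
  by_cases hcard : Fintype.card {j // n j = 1} ≤ Fintype.card (ZZ g n at')
  · obtain ⟨e⟩ := Function.Embedding.nonempty_of_card_le hcard
    exact ⟨fun j => (e j).1, fun a b h => e.injective (Subtype.ext h), fun j => (e j).2⟩
  exfalso
  push Not at hcard
  have hZ : ∀ P : ZZ g n at', ∃ j : {j // n j = 1}, P.1 ∈ nodes (g (at' j.1 0)) := by
    rintro ⟨P, j, hj, h⟩; exact ⟨⟨j, hj⟩, h⟩
  choose i0 hi0 using hZ
  have hcom : ∀ a b : {j // n j = 1}, Commute (g (at' a.1 0)) (g (at' b.1 0)) := by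
    intro a b
    by_cases h : a.1 = b.1
    · rw [h]
    · apply hg
      rw [hD.adj _ _ _ _ (by rw [a.2]; exact one_pos) (by rw [b.2]; exact one_pos)]
      exact fun h' => h h'.1
  obtain ⟨N, hN, hq⟩ := common_mult (fun (z : {j // n j = 1} × ZZ g n at') p => ∃ q : ℤ,
      part (g (at' z.1.1 0)) {z.2.1} ^ p = part (g (at' (i0 z.2).1 0)) {z.2.1} ^ q) (by
    rintro ⟨j, P⟩
    exact powers (XX_irr (ZZ_sub P.2)) (part_full (hi0 P)) (part_mem_self _ _) (part_commute (hcom _ _) _ _)) (by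
    rintro z p k hk ⟨q, h⟩
    exact ⟨q * k, by rw [pow_mul, h, zpow_mul, zpow_natCast]⟩)
  choose q hq using hq
  obtain ⟨c, hc0, hc⟩ : ∃ c : {j // n j = 1} → ℤ, c ≠ 0 ∧ ∀ P, ∑ j, q (j, P) * c j = 0 := by
    let L := Matrix.mulVecLin (Matrix.of fun P j => q (j, P))
    have : LinearMap.ker L ≠ ⊥ := fun h =>
      absurd (card_le_of_injective ℤ L (LinearMap.ker_eq_bot.1 h)) (not_le.2 hcard)
    obtain ⟨c, hc, hc0⟩ := (Submodule.ne_bot_iff _).1 this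
    refine ⟨c, hc0, fun P => ?_⟩
    exact congrFun (LinearMap.mem_ker.1 hc) P
  obtain ⟨j0, hj0⟩ := Function.ne_iff.1 hc0
  set x : RAAG Λ := (Finset.univ.toList.map fun j : {j // n j = 1} => gen Λ (at' j.1 0) ^ ((N : ℤ) * c j)).prod with hx
  have hx1 : x ≠ 1 := by
    intro h
    have h1 := congrArg (ex Λ (at' j0.1 0)) h
    rw [hx, map_list_prod, List.map_map, Finset.prod_map_toList, map_one] at h1
    rw [Finset.prod_eq_single j0] at h1
    · simp only [Function.comp] at h1
      rw [pow_gen_ex] at h1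
      have := congrArg Multiplicative.toAdd h1
      simp only [toAdd_ofAdd, toAdd_one, mul_eq_zero] at this
      rcases this with h | h
      · have : N = 0 := by exact_mod_cast h
        omega
      · exact hj0 h
    · intro b _ hb
      simp only [Function.comp]
      rw [map_zpow, ex_ne, one_zpow]
      intro h'
      exact hb (Subtype.ext (hD.inj _ _ _ _ (by rw [b.2]; exact one_pos) (by rw [j0.2]; exact one_pos) h').1)
    · simp
  apply hx1
  apply hinj
  rw [map_one]
  apply PH_kill hg φ hφ
  intro P hP
  rw [hx, map_list_prod, List.map_map]
  by_cases hz : ∃ Q ∈ Reg g P, Q ∈ ZZ g n at'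
  · obtain ⟨Q, hQ, hQZ⟩ := hz
    have eR : Reg g P = {Q} := by
      rw [← Reg_eq hQ]
      ext S
      exact ⟨fun h => ZZ_reg hg hD hQZ h, fun h => by rw [Set.mem_singleton_iff] at h; subst h; exact Reg_self _⟩
    have : (⇑(PH hg (Reg g P)) ∘ fun j : {j // n j = 1} => gen Λ (at' j.1 0) ^ ((N : ℤ) * c j)) =
        fun j => part (g (at' (i0 ⟨Q, hQZ⟩).1 0)) {Q} ^ (q (j, ⟨Q, hQZ⟩) * c j) := by
      funext j
      simp only [Function.comp]
      have := hq (j, ⟨Q, hQZ⟩)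
      simp only at this
      rw [map_zpow, PH_gen, eR, zpow_mul, zpow_natCast, this, zpow_mul]
    rw [this, list_zpow, Finset.sum_map_toList, hc, zpow_zero]
  · push Not at hz
    have : (⇑(PH hg (Reg g P)) ∘ fun j : {j // n j = 1} => gen Λ (at' j.1 0) ^ ((N : ℤ) * c j)) =
        fun j => 1 := by
      funext j
      simp only [Function.comp]
      rw [map_zpow, PH_gen, part_eq_one, one_zpow]
      rw [Set.eq_empty_iff_forall_notMem]
      exact fun Q hQ => hz Q hQ.1 ⟨j.1, j.2, hQ.2⟩
    rw [this]
    simp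

theorem main_pat (hg : ∀ i j, Λ.Adj i j → Commute (g i) (g j))
    (hD : PD Λ n at') (hpos : ∀ j, 0 < n j) (φ : RAAG Λ →* RAAG Γ) (hφ : ∀ i, φ (gen Λ i) = g i)
    (hinj : Function.Injective φ) : ∃ f, GPat n Γ f := by
  obtain ⟨s, hs, hsZ⟩ := iso_inj hg hD φ hφ hinj
  have hR : ∀ j, ∃ P ∈ XX g, Good g P (n j) ∧ (2 ≤ n j → InJ g n at' P j) ∧
      (∀ h : n j = 1, P = s ⟨j, h⟩) := by
    intro j
    by_cases h : 2 ≤ n j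
    · obtain ⟨P, h1, h2, h3⟩ := exists_good hg hD φ hφ hinj j h
      exact ⟨P, h1, h3, fun _ => h2, fun h' => by omega⟩
    · have h1 : n j = 1 := by have := hpos j; omega
      refine ⟨s ⟨j, h1⟩, ZZ_sub (hsZ _), ?_, fun h' => absurd h' h, fun _ => rfl⟩
      obtain ⟨x, hx⟩ := YY_nonempty (XX_irr (ZZ_sub (hsZ ⟨j, h1⟩)))
      exact ⟨fun _ => x, fun _ _ => ⟨_, Reg_self _, hx⟩, fun k hk => by omega, fun k k' h1 h2 => by omega⟩
  choose P hP hgood hJ hI using hR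
  have hsep : ∀ j j', j ≠ j' → P j' ∉ Reg g (P j) := by
    have mixed : ∀ j j', 2 ≤ n j → n j' = 1 → P j' ∉ Reg g (P j) := by
      intro j j' h1 h2 h
      obtain ⟨i, hi, hl⟩ := hsZ ⟨j', h2⟩
      rw [← hI j' h2] at hl
      have := hJ j h1 _ h i 0 ⟨by omega, hl⟩
      subst this; omega
    intro j j' hne h
    have p1 := hpos j
    have p2 := hpos j'
    rcases Nat.lt_or_ge 1 (n j) with h1 | h1
    · rcases Nat.lt_or_ge 1 (n j') with h2 | h2
      · obtain ⟨a, b, hab⟩ := exists_lab hD (hP j')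
        have e1 := hJ j h1 _ h a b hab
        have e2 := hJ j' h2 _ (Reg_self _) a b hab
        exact hne (e1.symm.trans e2)
      · exact mixed j j' h1 (by omega) h
    · rcases Nat.lt_or_ge 1 (n j') with h2 | h2
      · exact mixed j' j h2 (by omega) (Reg_symm h)
      · have e1 : n j = 1 := by omega
        have e2 : n j' = 1 := by omega
        rw [hI j e1, hI j' e2] at h
        have := hs (ZZ_reg hg hD (hsZ _) h)
        exact hne (congrArg Subtype.val this).symm
  choose x hx1 hx2 hx3 using hgood
  have hv : ∀ j k, k < n j → IsVtx Γ (x j k) := by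
    intro j k hk
    obtain ⟨Q, _, h⟩ := hx1 j k hk
    exact YY_vtx h
  apply doubling' n hpos Γ x hv
  refine ⟨fun j k hk => ?_, fun j k k' h1 h2 => ?_, fun j j' k k' hne hk hk' => ?_⟩
  · exact vtx_nadjP (hv j k (by omega)) (hv j _ hk) (hx2 j k hk)
  · exact vtx_adjP (hv j k (by omega)) (hv j _ h2) (hx3 j k k' h1 h2).1 (hx3 j k k' h1 h2).2
  · obtain ⟨Q, hQ, hy⟩ := hx1 j k hk
    obtain ⟨Q', hQ', hy'⟩ := hx1 j' k' hk'
    have hn : Q' ∉ Reg g (P j) := fun h => hsep j j' hne (Relation.ReflTransGen.trans h (Reg_symm hQ'))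
    have hc : CommS Q Q' := Reg_comm (hP j) hQ (Reg_sub (hP j') hQ') hn
    have hQQ : Q ≠ Q' := fun e => hn (e ▸ hQ)
    exact vtx_adjP (hv j k hk) (hv j' k' hk') (hc _ (YY_mem hy) _ (YY_mem hy')) (YY_disj hc hQQ hy hy')

end iso

theorem final {V W : Type} [Finite V] [Finite W]
    (Λ : SimpleGraph V) (Γ : SimpleGraph W) (hΛ : IsLinearForest Λᶜ)
    (h : ∃ φ : RAAG Λ →* RAAG Γ, Function.Injective φ) : Nonempty (Λ ↪g Γ) := by
  obtain ⟨φ, hφ⟩ := h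
  obtain ⟨ι, _, n, at', hpos, hsurj, hinj, hadj⟩ := forest_paths hΛ
  have hD : PD Λ n at' := by
    refine ⟨hsurj, hinj, fun j k j' k' hk hk' => ?_⟩
    have h1 := hadj j k j' k' hk hk'
    rw [SimpleGraph.compl_adj] at h1
    constructor
    · rintro h2 ⟨rfl, h3⟩
      rcases h3 with rfl | h3
      · exact h2.ne rfl
      · exact (h1.2 ⟨rfl, h3⟩).2 h2
    · intro h2
      by_contra h3
      by_cases e : at' j k = at' j' k'
      · have := hinj _ _ _ _ hk hk' e
        exact h2 ⟨this.1, Or.inl this.2⟩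
      · have := h1.1 ⟨e, h3⟩
        exact h2 ⟨this.1, Or.inr this.2⟩
  obtain ⟨f, h1, h2, h3⟩ := main_pat (g := fun i => φ (gen Λ i))
    (fun i j hij => (gen_comm hij).map φ) hD hpos φ (fun _ => rfl) hφ
  have key : ∀ j k j' k', k < n j → k' < n j' →
      (Γ.Adj (f j k) (f j' k') ↔ Λ.Adj (at' j k) (at' j' k')) ∧ (f j k = f j' k' → at' j k = at' j' k') := by
    intro j k j' k' hk hk'
    rw [hD.adj j k j' k' hk hk']
    by_cases hj : j = j'
    · subst hj
      rcases lt_trichotomy k k' with hlt | rfl | hlt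
      · by_cases hc : k + 1 = k'
        · subst hc
          have := h1 j k hk'
          exact ⟨⟨fun h => absurd h this.2, fun h => absurd ⟨rfl, by omega⟩ h⟩, fun h => absurd h this.1⟩
        · have := h2 j k k' (by omega) hk'
          exact ⟨⟨fun _ => by omega, fun _ => this⟩, fun h => absurd h this.ne⟩
      · exact ⟨⟨fun h => absurd rfl h.ne, fun h => absurd ⟨rfl, Or.inl rfl⟩ h⟩, fun _ => rfl⟩
      · by_cases hc : k' + 1 = k
        · subst hc
          have := h1 j k' hk
          exact ⟨⟨fun h => absurd h.symm this.2, fun h => absurd ⟨rfl, by omega⟩ h⟩, fun h => absurd h.symm this.1⟩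
        · have := (h2 j k' k (by omega) hk).symm
          exact ⟨⟨fun _ => by omega, fun _ => this⟩, fun h => absurd h this.ne⟩
    · have := h3 j j' k k' hj hk hk'
      exact ⟨⟨fun _ h => hj h.1, fun _ => this⟩, fun h => absurd h this.ne⟩
  choose J K hK hat using hsurj
  refine ⟨⟨⟨fun v => f (J v) (K v), fun u v huv => ?_⟩, fun {u v} => ?_⟩⟩
  · have := (key _ _ _ _ (hK u) (hK v)).2 huv
    rwa [hat, hat] at this
  · have := (key _ _ _ _ (hK u) (hK v)).1
    rw [hat, hat] at this
    exact this
end RA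

/-- If `Λᶜ` is a linear forest and `A(Λ)` embeds into `A(Γ)`, then `Λ` is an induced
subgraph of `Γ`. -/
theorem statement1 {V W : Type} [Fintype V] [Fintype W]
    (Λ : SimpleGraph V) (Γ : SimpleGraph W) (hΛ : IsLinearForest Λᶜ)
    (h : ∃ φ : RAAG Λ →* RAAG Γ, Function.Injective φ) :
    Nonempty (Λ ↪g Γ) := by exact RA.final Λ Γ hΛ h
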